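/- arXiv:2603.29253 — 2 statements merged into one kernel-verified Lean document; each statement's English description precedes it below -/
import Mathlib

section
/- Let Ω ⊂ ℝⁿ_{≥0} be a monotone domain. Then any two normalized symplectic capacities c₁, c₂ on subsets of ℝ^{2n} satisfy c₁(X_{int(Ω)}) = c₂(X_{int(Ω)}) (equivalently, all ball-normalized capacities coincide on the product domain 𝕋ⁿ × Ω). Likewise, any two cube-normalized symplectic capacities (satisfying monotonicity and conformality as before, but normalized by c(P^{2n}(r)) = πr² = c(N^{2n}(r)) for all r > 0, where P^{2n}(r) = μ⁻¹({x ∈ ℝⁿ_{≥0} : xᵢ ≤ πr² for all i}) and N^{2n}(r) = μ⁻¹({x ∈ ℝⁿ_{≥0} : xᵢ ≤ πr² for some i})) satisfy c₁(X_{int(Ω)}) = c₂(X_{int(Ω)}). -/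
open Set
open scoped Pointwise ENNReal

noncomputable section

/-- The standard symplectic form `ω₀` on `ℝ^{2n} ≅ ℂⁿ`. -/
def stdSymplecticForm (n : ℕ) (u v : Fin n → ℂ) : ℝ :=
  ∑ j, ((starRingEnd ℂ) (u j) * v j).im

/-- `U` symplectically embeds into `V` inside `ℝ^{2n} ≅ ℂⁿ`. -/
def SymplecticEmbeds (n : ℕ) (U V : Set (Fin n → ℂ)) : Prop :=
  ∃ f : (Fin n → ℂ) → (Fin n → ℂ),
    ContDiffOn ℝ (⊤ : ℕ∞) f U ∧ Set.InjOn f U ∧ Set.MapsTo f U V ∧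
    ∀ x ∈ U, ∀ u v : Fin n → ℂ,
      stdSymplecticForm n (fderivWithin ℝ f U x u) (fderivWithin ℝ f U x v) =
        stdSymplecticForm n u v

/-- The toric moment map `μ : ℂⁿ → ℝⁿ`, `μ(z) = π(|z₁|², …, |zₙ|²)`. -/
def toricMoment (n : ℕ) (z : Fin n → ℂ) : Fin n → ℝ :=
  fun j => Real.pi * Complex.normSq (z j)

/-- The toric domain `X_Ω := μ⁻¹(Ω) ⊆ ℂⁿ`. -/
def toricDomain (n : ℕ) (Ω : Set (Fin n → ℝ)) : Set (Fin n → ℂ) :=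
  toricMoment n ⁻¹' Ω

/-- `int₊(Ω) := interior(Ω) ∩ ℝⁿ_{>0}`. -/
def intPos (n : ℕ) (Ω : Set (Fin n → ℝ)) : Set (Fin n → ℝ) :=
  interior Ω ∩ {x | ∀ i, 0 < x i}

/-- `Ω ⊆ ℝⁿ_{≥0}` is a monotone domain. -/
def IsMonotoneDomain (n : ℕ) (Ω : Set (Fin n → ℝ)) : Prop :=
  IsCompact Ω ∧ Ω ⊆ {x | ∀ i, 0 ≤ x i} ∧
  (∃ U : Set (Fin n → ℝ), U.Nonempty ∧ Bornology.IsBounded U ∧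
      (∃ V : Set (Fin n → ℝ), IsOpen V ∧ U = V ∩ {x | ∀ i, 0 ≤ x i}) ∧
      Ω = closure U) ∧
  (∀ p ∈ Ω, ∀ q : Fin n → ℝ, (∀ i, 0 ≤ q i) → (∀ i, q i ≤ p i) → q ∈ Ω)

/-- The open Euclidean ball `B^{2n}(r) ⊆ ℂⁿ`. -/
def euclideanBall (n : ℕ) (r : ℝ) : Set (Fin n → ℂ) :=
  {z | ∑ j, Complex.normSq (z j) < r ^ 2}

/-- The open symplectic cylinder `Z^{2n}(r) = {z : |z₁| < r}`. -/
def sympCylinder (n : ℕ) [NeZero n] (r : ℝ) : Set (Fin n → ℂ) :=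
  {z | Complex.normSq (z 0) < r ^ 2}

/-- The cube `P^{2n}(r) = μ⁻¹({x ∈ ℝⁿ_{≥0} : xᵢ ≤ πr² for all i})`. -/
def cubeP (n : ℕ) (r : ℝ) : Set (Fin n → ℂ) :=
  toricDomain n {x | (∀ i, 0 ≤ x i) ∧ ∀ i, x i ≤ Real.pi * r ^ 2}

/-- The anti-cube `N^{2n}(r) = μ⁻¹({x ∈ ℝⁿ_{≥0} : xᵢ ≤ πr² for some i})`. -/
def cubeN (n : ℕ) (r : ℝ) : Set (Fin n → ℂ) :=
  toricDomain n {x | (∀ i, 0 ≤ x i) ∧ ∃ i, x i ≤ Real.pi * r ^ 2}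

/-- A (ball-)normalized symplectic capacity on subsets of `ℝ^{2n}`. -/
def IsNormalizedCapacity (n : ℕ) [NeZero n] (c : Set (Fin n → ℂ) → ℝ≥0∞) : Prop :=
  (∀ U V : Set (Fin n → ℂ), SymplecticEmbeds n U V → c U ≤ c V) ∧
  (∀ lam : ℝ, 0 < lam → ∀ U : Set (Fin n → ℂ),
    c (lam • U) = ENNReal.ofReal (lam ^ 2) * c U) ∧
  (∀ r : ℝ, 0 < r →
    c (euclideanBall n r) = ENNReal.ofReal (Real.pi * r ^ 2) ∧
    c (sympCylinder n r) = ENNReal.ofReal (Real.pi * r ^ 2))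

/-- A cube-normalized symplectic capacity on subsets of `ℝ^{2n}`. -/
def IsCubeNormalizedCapacity (n : ℕ) (c : Set (Fin n → ℂ) → ℝ≥0∞) : Prop :=
  (∀ U V : Set (Fin n → ℂ), SymplecticEmbeds n U V → c U ≤ c V) ∧
  (∀ lam : ℝ, 0 < lam → ∀ U : Set (Fin n → ℂ),
    c (lam • U) = ENNReal.ofReal (lam ^ 2) * c U) ∧
  (∀ r : ℝ, 0 < r →
    c (cubeP n r) = ENNReal.ofReal (Real.pi * r ^ 2) ∧
    c (cubeN n r) = ENNReal.ofReal (Real.pi * r ^ 2))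


/-! ### Generic framework -/

/-- Smooth injective form-preserving maps, with a relation recorded between points and images. -/
def SE {E : Type*} [NormedAddCommGroup E] [NormedSpace ℝ E] (σ : E → E → ℝ)
    (U : Set E) (R : E → E → Prop) : Prop :=
  ∃ f : E → E, ContDiffOn ℝ (⊤ : ℕ∞) f U ∧ Set.InjOn f U ∧ (∀ x ∈ U, R x (f x)) ∧
    ∀ x ∈ U, ∀ h k : E, σ (fderiv ℝ f x h) (fderiv ℝ f x k) = σ h k

theorem SE.mono {E : Type*} [NormedAddCommGroup E] [NormedSpace ℝ E] {σ : E → E → ℝ}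
    {U V : Set E} {R S : E → E → Prop} (H : SE σ U R) (hVU : V ⊆ U)
    (hRS : ∀ x ∈ V, ∀ y, R x y → S x y) : SE σ V S := by
  obtain ⟨f, h1, h2, h3, h4⟩ := H
  exact ⟨f, h1.mono hVU, h2.mono hVU, fun x hx => hRS x hx _ (h3 x (hVU hx)),
    fun x hx => h4 x (hVU hx)⟩

theorem SE.comp {E : Type*} [NormedAddCommGroup E] [NormedSpace ℝ E] {σ : E → E → ℝ}
    {U V : Set E} {R S : E → E → Prop} (hU : IsOpen U) (hV : IsOpen V)
    (H : SE σ U R) (H' : SE σ V S) (hR : ∀ x ∈ U, ∀ y, R x y → y ∈ V) :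
    SE σ U (fun x z => ∃ y, R x y ∧ S y z) := by
  obtain ⟨f, h1, h2, h3, h4⟩ := H
  obtain ⟨g, g1, g2, g3, g4⟩ := H'
  have hm : Set.MapsTo f U V := fun x hx => hR x hx _ (h3 x hx)
  refine ⟨g ∘ f, g1.comp h1 hm, g2.comp h2 hm, fun x hx => ⟨f x, h3 x hx, g3 _ (hm hx)⟩, ?_⟩
  intro x hx h k
  have d1 : DifferentiableAt ℝ f x :=
    (h1.contDiffAt (hU.mem_nhds hx)).differentiableAt (by simp)
  have d2 : DifferentiableAt ℝ g (f x) :=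
    (g1.contDiffAt (hV.mem_nhds (hm hx))).differentiableAt (by simp)
  rw [fderiv_comp x d2 d1]
  simp only [ContinuousLinearMap.comp_apply]
  rw [g4 _ (hm hx), h4 x hx]

theorem SE.id {E : Type*} [NormedAddCommGroup E] [NormedSpace ℝ E] {σ : E → E → ℝ}
    (U : Set E) : SE σ U (fun x y => y = x) :=
  ⟨fun x => x, contDiffOn_id, Set.injOn_id U, fun _ _ => rfl, fun x _ h k => by simp⟩

/-- Map given implicitly by two parametrizations. -/
theorem SE.implicit {E : Type*} [NormedAddCommGroup E] [NormedSpace ℝ E] [FiniteDimensional ℝ E]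
    {σ : E → E → ℝ} {M : Set E} (hM : IsOpen M) {A B : E → E}
    (hA : ContDiffOn ℝ (⊤ : ℕ∞) A M) (hB : ContDiffOn ℝ (⊤ : ℕ∞) B M)
    (iA : Set.InjOn A M) (iB : Set.InjOn B M)
    (dA : ∀ m ∈ M, ∀ h, fderiv ℝ A m h = 0 → h = 0)
    (hσ : ∀ m ∈ M, ∀ h k, σ (fderiv ℝ A m h) (fderiv ℝ A m k) =
      σ (fderiv ℝ B m h) (fderiv ℝ B m k)) :
    SE σ (A '' M) (fun x y => ∃ m ∈ M, A m = x ∧ B m = y) := by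
  classical
  rcases M.eq_empty_or_nonempty with hMe | ⟨m0, _⟩
  · subst hMe
    exact ⟨fun x => x, by simp, by simp, by simp, by simp⟩
  haveI : Nonempty E := ⟨m0⟩
  haveI : CompleteSpace E := FiniteDimensional.complete ℝ E
  set g := Function.invFunOn A M with hg
  have gl : ∀ m ∈ M, g (A m) = m := fun m hm => iA.leftInvOn_invFunOn hm
  have key : ∀ m ∈ M, ∃ A' : E ≃L[ℝ] E, (A' : E →L[ℝ] E) = fderiv ℝ A m ∧
      ContDiffAt ℝ (⊤ : ℕ∞) g (A m) ∧ HasFDerivAt g (A'.symm : E →L[ℝ] E) (A m) := by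
    intro m hm
    have hAm : ContDiffAt ℝ (⊤ : ℕ∞) A m := hA.contDiffAt (hM.mem_nhds hm)
    have hinj : Function.Injective (fderiv ℝ A m).toLinearMap := by
      intro a b hab
      have : fderiv ℝ A m (a - b) = 0 := by
        rw [map_sub]; exact sub_eq_zero.2 hab
      exact sub_eq_zero.1 (dA m hm _ this)
    let eL := (LinearEquiv.ofInjectiveEndo (fderiv ℝ A m).toLinearMap hinj)
    let A' : E ≃L[ℝ] E := eL.toContinuousLinearEquiv
    have hA' : (A' : E →L[ℝ] E) = fderiv ℝ A m := by
      ext h; rfl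
    have hder : HasFDerivAt A (A' : E →L[ℝ] E) m := by
      rw [hA']; exact (hAm.differentiableAt (by simp)).hasFDerivAt
    have hn : ((⊤ : ℕ∞) : WithTop ℕ∞) ≠ 0 := by simp
    have hloc := hAm.to_localInverse hder hn
    have hstr := hAm.hasStrictFDerivAt' hder hn
    have hev : g =ᶠ[nhds (A m)] hAm.localInverse hder hn := by
      have e1 : ∀ᶠ y in nhds (A m), A (hAm.localInverse hder hn y) = y :=
        hstr.eventually_right_inverse
      have e2 : ∀ᶠ y in nhds (A m), hAm.localInverse hder hn y ∈ M := by
        have hc := hloc.continuousAt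
        apply hc
        rw [hAm.localInverse_apply_image hder hn]
        exact hM.mem_nhds hm
      filter_upwards [e1, e2] with y h1 h2
      rw [← gl _ h2, h1]
    refine ⟨A', hA', hloc.congr_of_eventuallyEq hev, ?_⟩
    have : HasFDerivAt (hAm.localInverse hder hn) (A'.symm : E →L[ℝ] E) (A m) :=
      hstr.to_localInverse.hasFDerivAt
    exact this.congr_of_eventuallyEq hev
  refine ⟨B ∘ g, ?_, ?_, ?_, ?_⟩
  · rintro _ ⟨m, hm, rfl⟩
    obtain ⟨A', h1, h2, h3⟩ := key m hm
    have hBm : ContDiffAt ℝ (⊤ : ℕ∞) B (g (A m)) := by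
      rw [gl m hm]; exact hB.contDiffAt (hM.mem_nhds hm)
    exact (hBm.comp _ h2).contDiffWithinAt
  · rintro _ ⟨m, hm, rfl⟩ _ ⟨m', hm', rfl⟩ h
    simp only [Function.comp, gl m hm, gl m' hm'] at h
    rw [iB hm hm' h]
  · rintro _ ⟨m, hm, rfl⟩
    exact ⟨m, hm, rfl, by simp [gl m hm]⟩
  · rintro _ ⟨m, hm, rfl⟩ h k
    obtain ⟨A', h1, h2, h3⟩ := key m hm
    have hBm : HasFDerivAt B (fderiv ℝ B m) (g (A m)) := by
      rw [gl m hm]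
      exact ((hB.contDiffAt (hM.mem_nhds hm)).differentiableAt (by simp)).hasFDerivAt
    rw [(hBm.comp _ h3).fderiv]
    simp only [ContinuousLinearMap.comp_apply]
    rw [← hσ m hm, ← h1]
    simp

/-- The planar form. -/
def sg1 (h k : ℂ) : ℝ := ((starRingEnd ℂ) h * k).im

/-- The form on `ℂ × ℂ`. -/
def sg2 (h k : ℂ × ℂ) : ℝ :=
  ((starRingEnd ℂ) h.1 * k.1).im + ((starRingEnd ℂ) h.2 * k.2).im

theorem sg2_nondeg {h : ℂ × ℂ} (H : ∀ k, sg2 h k = 0) : h = 0 := by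
  have h1 := H (Complex.I * h.1, Complex.I * h.2)
  simp only [sg2, Complex.mul_im, Complex.conj_re, Complex.conj_im, Complex.mul_re,
    Complex.I_re, Complex.I_im] at h1
  have a1 : h.1.re = 0 := by nlinarith [sq_nonneg h.1.re, sq_nonneg h.1.im, sq_nonneg h.2.re, sq_nonneg h.2.im]
  have a2 : h.1.im = 0 := by nlinarith [sq_nonneg h.1.re, sq_nonneg h.1.im, sq_nonneg h.2.re, sq_nonneg h.2.im]
  have a3 : h.2.re = 0 := by nlinarith [sq_nonneg h.1.re, sq_nonneg h.1.im, sq_nonneg h.2.re, sq_nonneg h.2.im]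
  have a4 : h.2.im = 0 := by nlinarith [sq_nonneg h.1.re, sq_nonneg h.1.im, sq_nonneg h.2.re, sq_nonneg h.2.im]
  exact Prod.ext (Complex.ext a1 a2) (Complex.ext a3 a4)

theorem fderiv_inj_of_pullback {A B : ℂ × ℂ → ℂ × ℂ} {m : ℂ × ℂ}
    (dA : ∀ h, fderiv ℝ A m h = 0 → h = 0)
    (hσ : ∀ h k, sg2 (fderiv ℝ A m h) (fderiv ℝ A m k) =
      sg2 (fderiv ℝ B m h) (fderiv ℝ B m k)) :
    ∀ h, fderiv ℝ B m h = 0 → h = 0 := by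
  intro h hh
  apply dA
  have hinj : Function.Injective (fderiv ℝ A m).toLinearMap := by
    intro a b hab
    have : fderiv ℝ A m (a - b) = 0 := by
      rw [map_sub]; exact sub_eq_zero.2 hab
    exact sub_eq_zero.1 (dA _ this)
  have hsurj := LinearMap.surjective_of_injective hinj
  apply sg2_nondeg
  intro k
  obtain ⟨k', hk'⟩ := hsurj k
  have : fderiv ℝ A m k' = k := hk'
  rw [← this, hσ, hh]
  simp [sg2]

/-- Both directions of the implicit construction on `ℂ × ℂ`. -/
theorem SE.implicit2 {M : Set (ℂ × ℂ)} (hM : IsOpen M) {A B : ℂ × ℂ → ℂ × ℂ}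
    (hA : ContDiffOn ℝ (⊤ : ℕ∞) A M) (hB : ContDiffOn ℝ (⊤ : ℕ∞) B M)
    (iA : Set.InjOn A M) (iB : Set.InjOn B M)
    (dA : ∀ m ∈ M, ∀ h, fderiv ℝ A m h = 0 → h = 0)
    (hσ : ∀ m ∈ M, ∀ h k, sg2 (fderiv ℝ A m h) (fderiv ℝ A m k) =
      sg2 (fderiv ℝ B m h) (fderiv ℝ B m k)) :
    SE sg2 (A '' M) (fun x y => ∃ m ∈ M, A m = x ∧ B m = y) ∧
    SE sg2 (B '' M) (fun x y => ∃ m ∈ M, B m = x ∧ A m = y) :=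
  ⟨SE.implicit hM hA hB iA iB dA hσ,
   SE.implicit hM hB hA iB iA
     (fun m hm => fderiv_inj_of_pullback (dA m hm) (hσ m hm)) (fun m hm h k => (hσ m hm h k).symm)⟩

/-- Planar maps from fibered maps. -/
theorem SE.planar {U : Set ℂ} (hU : IsOpen U) {R : ℂ × ℂ → ℂ × ℂ → Prop}
    (H : SE sg2 {p : ℂ × ℂ | p.2 ∈ U} R)
    (hR : ∀ p q, R p q → q.1 = p.1) :
    SE sg1 U (fun a b => R (0, a) (0, b)) := by
  obtain ⟨f, h1, h2, h3, h4⟩ := H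
  have hUo : IsOpen {p : ℂ × ℂ | p.2 ∈ U} := hU.preimage continuous_snd
  have hf1 : ∀ a ∈ U, (f (0, a)).1 = 0 := fun a ha => hR _ _ (h3 (0, a) ha)
  have hfe : ∀ a ∈ U, f (0, a) = (0, (f (0, a)).2) := fun a ha => Prod.ext (hf1 a ha) rfl
  have hi : ContDiff ℝ (⊤ : ℕ∞) (fun a : ℂ => ((0 : ℂ), a)) := contDiff_const.prodMk contDiff_id
  refine ⟨fun a => (f (0, a)).2, ?_, ?_, ?_, ?_⟩
  · have : ContDiffOn ℝ (⊤ : ℕ∞) (fun a : ℂ => f (0, a)) U :=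
      h1.comp hi.contDiffOn (fun a ha => ha)
    exact contDiff_snd.comp_contDiffOn this
  · intro a ha b hb hab
    have : f (0, a) = f (0, b) := by
      rw [hfe a ha, hfe b hb]; exact Prod.ext rfl hab
    have := h2 (show (0, a) ∈ {p : ℂ × ℂ | p.2 ∈ U} from ha)
      (show (0, b) ∈ {p : ℂ × ℂ | p.2 ∈ U} from hb) this
    exact (Prod.ext_iff.1 this).2
  · intro a ha
    have := h3 (0, a) ha
    rw [hfe a ha] at this
    exact this
  · intro a ha h k
    have d : HasFDerivAt f (fderiv ℝ f (0, a)) (0, a) :=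
      ((h1.contDiffAt (hUo.mem_nhds ha)).differentiableAt (by simp)).hasFDerivAt
    have di : HasFDerivAt (fun a : ℂ => ((0 : ℂ), a)) (ContinuousLinearMap.inr ℝ ℂ ℂ) a :=
      hasFDerivAt_prodMk_right _ _
    have dc := d.comp a di
    have d2 := dc.snd
    have d1 := dc.fst
    have d0 : HasFDerivAt (fun a : ℂ => (f (0, a)).1) (0 : ℂ →L[ℝ] ℂ) a := by
      have : (fun a : ℂ => (f (0, a)).1) =ᶠ[nhds a] fun _ => (0 : ℂ) := by
        filter_upwards [hU.mem_nhds ha] with b hb using hf1 b hb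
      exact (hasFDerivAt_const (0 : ℂ) a).congr_of_eventuallyEq this
    have e1 := d1.unique d0
    have e1' : ∀ h, (fderiv ℝ f (0, a) (0, h)).1 = 0 := fun h => by
      have := DFunLike.congr_fun e1 h
      simpa using this
    have e2 : fderiv ℝ (fun a => (f (0, a)).2) a = _ := d2.fderiv
    rw [e2]
    have := h4 (0, a) ha (0, h) (0, k)
    simp only [sg2, e1'] at this
    simpa [sg1] using this


/-! ### Polar generating functions -/

/-- Area coordinate. -/
def xm (η : ℂ) : ℝ := Real.pi * Complex.normSq η

theorem xm_nonneg (η : ℂ) : 0 ≤ xm η := mul_nonneg Real.pi_pos.le (Complex.normSq_nonneg _)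

theorem xm_pos {η : ℂ} (h : η ≠ 0) : 0 < xm η := mul_pos Real.pi_pos (Complex.normSq_pos.2 h)

theorem xm_zero : xm 0 = 0 := by simp [xm]

theorem xm_eq_norm (η : ℂ) : xm η = Real.pi * ‖η‖ ^ 2 := by
  rw [xm, Complex.normSq_eq_norm_sq]

theorem xm_re_im (η : ℂ) : xm η = Real.pi * (η.re ^ 2 + η.im ^ 2) := by
  rw [xm, Complex.normSq_apply]; ring

theorem norm_eq_of_xm {a b : ℂ} (h : xm a = xm b) : ‖a‖ = ‖b‖ := by
  rw [xm_eq_norm, xm_eq_norm] at h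
  have := mul_left_cancel₀ Real.pi_pos.ne' h
  exact (sq_eq_sq₀ (norm_nonneg _) (norm_nonneg _)).1 this

theorem contDiff_xm : ContDiff ℝ (⊤ : ℕ∞) xm := by
  have : xm = fun η : ℂ => Real.pi * (Complex.reCLM η ^ 2 + Complex.imCLM η ^ 2) := by
    funext η; simp [xm_re_im]
  rw [this]
  exact contDiff_const.mul ((Complex.reCLM.contDiff.pow 2).add (Complex.imCLM.contDiff.pow 2))

/-- differential of `xm` -/
def dxL (η : ℂ) : ℂ →L[ℝ] ℝ :=
  (2 * Real.pi) • (η.re • Complex.reCLM + η.im • Complex.imCLM)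

/-- differential of the angle (normalized to total `1`) -/
def dtL (η : ℂ) : ℂ →L[ℝ] ℝ :=
  (1 / (2 * xm η)) • (η.re • Complex.imCLM - η.im • Complex.reCLM)

theorem dxL_apply (η h : ℂ) : dxL η h = 2 * Real.pi * (η.re * h.re + η.im * h.im) := by
  simp [dxL]; ring

theorem dtL_apply (η h : ℂ) : dtL η h = (1 / (2 * xm η)) * (η.re * h.im - η.im * h.re) := by
  simp [dtL]

theorem hasFDerivAt_xm (η : ℂ) : HasFDerivAt xm (dxL η) η := by
  have e : xm = fun η : ℂ => Real.pi * (Complex.reCLM η ^ 2 + Complex.imCLM η ^ 2) := by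
    funext η; simp [xm_re_im]
  rw [e]
  have h := (((Complex.reCLM.hasFDerivAt (x := η)).pow 2).add
    ((Complex.imCLM.hasFDerivAt (x := η)).pow 2)).const_mul Real.pi
  refine h.congr_fderiv ?_
  ext k
  simp [dxL_apply]; ring

/-- Functions of the direction. -/
structure CircFn (b b' : ℂ → ℝ) : Prop where
  sm : ∀ η : ℂ, η ≠ 0 → ContDiffAt ℝ (⊤ : ℕ∞) b η
  sm' : ∀ η : ℂ, η ≠ 0 → ContDiffAt ℝ (⊤ : ℕ∞) b' η
  d1 : ∀ η : ℂ, η ≠ 0 → HasFDerivAt b (b' η • dtL η) η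
  d2 : ∀ η : ℂ, η ≠ 0 → ∃ b2 : ℝ, HasFDerivAt b' (b2 • dtL η) η
  hom : ∀ (r : ℝ) (η : ℂ), 0 < r → b ((r : ℂ) * η) = b η
  hom' : ∀ (r : ℝ) (η : ℂ), 0 < r → b' ((r : ℂ) * η) = b' η

theorem CircFn.lin {b b' c c' : ℂ → ℝ} (hb : CircFn b b') (hc : CircFn c c') (p q : ℝ) :
    CircFn (fun η => p * b η + q * c η) (fun η => p * b' η + q * c' η) where
  sm η h := (contDiffAt_const.mul (hb.sm η h)).add (contDiffAt_const.mul (hc.sm η h))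
  sm' η h := (contDiffAt_const.mul (hb.sm' η h)).add (contDiffAt_const.mul (hc.sm' η h))
  d1 η h := by
    refine (((hb.d1 η h).const_mul p).add ((hc.d1 η h).const_mul q)).congr_fderiv ?_
    ext k; simp; ring
  d2 η h := by
    obtain ⟨u, hu⟩ := hb.d2 η h
    obtain ⟨v, hv⟩ := hc.d2 η h
    refine ⟨p * u + q * v, ((hu.const_mul p).add (hv.const_mul q)).congr_fderiv ?_⟩
    ext k; simp; ring
  hom r η h := by simp only [hb.hom r η h, hc.hom r η h]
  hom' r η h := by simp only [hb.hom' r η h, hc.hom' r η h]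

/-- Polar data. -/
structure PD (b1 b1' b2 b2' : ℂ → ℝ) (E1 E2 s : ℝ → ℝ) : Prop where
  c1 : CircFn b1 b1'
  c2 : CircFn b2 b2'
  e1 : ContDiff ℝ (⊤ : ℕ∞) E1
  e2 : ContDiff ℝ (⊤ : ℕ∞) E2
  hs : ContDiff ℝ (⊤ : ℕ∞) s
  E10 : E1 0 = 0
  E20 : ∀ N, 0 ≤ N → E2 (0 - s N) = 0
  hD : ∃ m : ℝ, 0 < m ∧ ∀ η : ℂ, η ≠ 0 → ∀ x N : ℝ, 0 ≤ x → 0 ≤ N →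
    m ≤ 1 + b1' η * deriv E1 x + b2' η * deriv E2 (x - s N)

/-- radial function -/
def PG (b1' b2' : ℂ → ℝ) (E1 E2 s : ℝ → ℝ) (η : ℂ) (x N : ℝ) : ℝ :=
  x + b1' η * E1 x + b2' η * E2 (x - s N)

/-- angular shift of the second coordinate -/
def PP (b1 b2 : ℂ → ℝ) (E1 E2 s : ℝ → ℝ) (p : ℂ × ℂ) : ℝ :=
  b1 p.2 * deriv E1 (xm p.2) + b2 p.2 * deriv E2 (xm p.2 - s (xm p.1))

/-- angular shift of the first coordinate -/
def PT (b2 : ℂ → ℝ) (E2 s : ℝ → ℝ) (p : ℂ × ℂ) : ℝ :=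
  -(b2 p.2 * deriv E2 (xm p.2 - s (xm p.1)) * deriv s (xm p.1))

/-- radial map -/
def PA (b1' b2' : ℂ → ℝ) (E1 E2 s : ℝ → ℝ) (p : ℂ × ℂ) : ℂ × ℂ :=
  (p.1, ((Real.sqrt (PG b1' b2' E1 E2 s p.2 (xm p.2) (xm p.1) / xm p.2) : ℝ) : ℂ) * p.2)

/-- rotation -/
def rot (t : ℝ) : ℂ := Complex.exp ((2 * Real.pi * t : ℝ) * Complex.I)

/-- angular map -/
def PB (b1 b2 : ℂ → ℝ) (E1 E2 s : ℝ → ℝ) (p : ℂ × ℂ) : ℂ × ℂ :=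
  (rot (PT b2 E2 s p) * p.1, rot (PP b1 b2 E1 E2 s p) * p.2)

theorem norm_rot (t : ℝ) : ‖rot t‖ = 1 := Complex.norm_exp_ofReal_mul_I _

theorem rot_ne (t : ℝ) : rot t ≠ 0 := Complex.exp_ne_zero _

theorem rot_add (s t : ℝ) : rot (s + t) = rot s * rot t := by
  simp only [rot, ← Complex.exp_add]; congr 1; push_cast; ring

theorem rot_zero : rot 0 = 1 := by simp [rot]

theorem rot_int (k : ℤ) : rot k = 1 := by
  rw [rot, Complex.exp_eq_one_iff]; exact ⟨k, by push_cast; ring⟩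

theorem rot_eq_rot {s t : ℝ} (h : rot s = rot t) : ∃ k : ℤ, s = t + k := by
  rw [rot, rot, Complex.exp_eq_exp_iff_exists_int] at h
  obtain ⟨k, hk⟩ := h
  refine ⟨k, ?_⟩
  have h1 : ((2 * Real.pi * s : ℝ) : ℂ) * Complex.I =
      ((2 * Real.pi * (t + k) : ℝ) : ℂ) * Complex.I := by
    rw [hk]; push_cast; ring
  have h2 := mul_right_cancel₀ Complex.I_ne_zero h1
  have h3 : 2 * Real.pi * s = 2 * Real.pi * (t + k) := by exact_mod_cast h2
  exact mul_left_cancel₀ (by positivity) h3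

theorem xm_rot_mul (t : ℝ) (η : ℂ) : xm (rot t * η) = xm η := by
  rw [xm_eq_norm, xm_eq_norm, norm_mul, norm_rot, one_mul]

theorem exists_rot (η : ℂ) : ∃ t : ℝ, η = (‖η‖ : ℂ) * rot t := by
  refine ⟨Complex.arg η / (2 * Real.pi), ?_⟩
  rw [rot, mul_div_cancel₀ _ (by positivity), Complex.norm_mul_exp_arg_mul_I]

theorem contDiff_rot : ContDiff ℝ (⊤ : ℕ∞) rot := by
  unfold rot
  have : ContDiff ℝ (⊤ : ℕ∞) (fun t : ℝ => ((2 * Real.pi * t : ℝ) : ℂ)) :=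
    Complex.ofRealCLM.contDiff.comp (contDiff_const.mul contDiff_id)
  exact (this.mul contDiff_const).cexp

theorem hasDerivAt_rot (t : ℝ) : HasDerivAt rot (2 * Real.pi * Complex.I * rot t) t := by
  have h : HasDerivAt (fun t : ℝ => ((2 * Real.pi * t : ℝ) : ℂ) * Complex.I)
      (((2 * Real.pi * 1 : ℝ) : ℂ) * Complex.I) t :=
    (((hasDerivAt_id t).const_mul (2 * Real.pi)).ofReal_comp).mul_const _
  refine h.cexp.congr_deriv ?_
  simp only [rot]; push_cast; ring

section
variable {b1 b1' b2 b2' : ℂ → ℝ} {E1 E2 s : ℝ → ℝ}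

/-- The basic differential identities. -/
theorem PD.forms (H : PD b1 b1' b2 b2' E1 E2 s) (p : ℂ × ℂ) (hp : p.2 ≠ 0) :
    ∃ D u v a c t : ℝ, 0 < D ∧
      HasFDerivAt (fun p : ℂ × ℂ => PG b1' b2' E1 E2 s p.2 (xm p.2) (xm p.1))
        (D • (dxL p.2).comp (ContinuousLinearMap.snd ℝ ℂ ℂ) +
          u • (dtL p.2).comp (ContinuousLinearMap.snd ℝ ℂ ℂ) +
          v • (dxL p.1).comp (ContinuousLinearMap.fst ℝ ℂ ℂ)) p ∧
      HasFDerivAt (PP b1 b2 E1 E2 s)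
        (a • (dxL p.2).comp (ContinuousLinearMap.snd ℝ ℂ ℂ) +
          (D - 1) • (dtL p.2).comp (ContinuousLinearMap.snd ℝ ℂ ℂ) +
          c • (dxL p.1).comp (ContinuousLinearMap.fst ℝ ℂ ℂ)) p ∧
      HasFDerivAt (PT b2 E2 s)
        (c • (dxL p.2).comp (ContinuousLinearMap.snd ℝ ℂ ℂ) +
          v • (dtL p.2).comp (ContinuousLinearMap.snd ℝ ℂ ℂ) +
          t • (dxL p.1).comp (ContinuousLinearMap.fst ℝ ℂ ℂ)) p := by
  obtain ⟨m, hm, hD⟩ := H.hD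
  obtain ⟨β1, hβ1⟩ := H.c1.d2 p.2 hp
  obtain ⟨β2, hβ2⟩ := H.c2.d2 p.2 hp
  set x := xm p.2 with hx
  set N := xm p.1 with hN
  have dx : HasFDerivAt (fun p : ℂ × ℂ => xm p.2)
      ((dxL p.2).comp (ContinuousLinearMap.snd ℝ ℂ ℂ)) p :=
    HasFDerivAt.comp (f := Prod.snd) p (hasFDerivAt_xm p.2) hasFDerivAt_snd
  have dN : HasFDerivAt (fun p : ℂ × ℂ => xm p.1)
      ((dxL p.1).comp (ContinuousLinearMap.fst ℝ ℂ ℂ)) p :=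
    HasFDerivAt.comp (f := Prod.fst) p (hasFDerivAt_xm p.1) hasFDerivAt_fst
  have db1 := HasFDerivAt.comp (f := Prod.snd) p (H.c1.d1 p.2 hp) hasFDerivAt_snd
  have db2 := HasFDerivAt.comp (f := Prod.snd) p (H.c2.d1 p.2 hp) hasFDerivAt_snd
  have db1' := HasFDerivAt.comp (f := Prod.snd) p hβ1 hasFDerivAt_snd
  have db2' := HasFDerivAt.comp (f := Prod.snd) p hβ2 hasFDerivAt_snd
  have hE : ∀ {E : ℝ → ℝ}, ContDiff ℝ (⊤ : ℕ∞) E → ∀ y, HasDerivAt E (deriv E y) y :=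
    fun h y => (h.differentiable (by simp) y).hasDerivAt
  have hE' : ∀ {E : ℝ → ℝ}, ContDiff ℝ (⊤ : ℕ∞) E →
      ∀ y, HasDerivAt (deriv E) (deriv (deriv E) y) y :=
    fun h y => ((contDiff_infty_iff_deriv.1 h).2.differentiable (by simp) y).hasDerivAt
  have dE1 := (hE H.e1 x).comp_hasFDerivAt (f := fun p : ℂ × ℂ => xm p.2) p dx
  have dE1' := (hE' H.e1 x).comp_hasFDerivAt (f := fun p : ℂ × ℂ => xm p.2) p dx
  have ds := (hE H.hs N).comp_hasFDerivAt (f := fun p : ℂ × ℂ => xm p.1) p dN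
  have ds' := (hE' H.hs N).comp_hasFDerivAt (f := fun p : ℂ × ℂ => xm p.1) p dN
  have dy := dx.sub ds
  have dE2 := (hE H.e2 (x - s N)).comp_hasFDerivAt
    (f := (fun p : ℂ × ℂ => xm p.2) - (s ∘ fun p : ℂ × ℂ => xm p.1)) p dy
  have dE2' := (hE' H.e2 (x - s N)).comp_hasFDerivAt
    (f := (fun p : ℂ × ℂ => xm p.2) - (s ∘ fun p : ℂ × ℂ => xm p.1)) p dy
  refine ⟨1 + b1' p.2 * deriv E1 x + b2' p.2 * deriv E2 (x - s N),
    β1 * E1 x + β2 * E2 (x - s N),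
    -(b2' p.2 * deriv E2 (x - s N) * deriv s N),
    b1 p.2 * deriv (deriv E1) x + b2 p.2 * deriv (deriv E2) (x - s N),
    -(b2 p.2 * deriv (deriv E2) (x - s N) * deriv s N),
    b2 p.2 * (deriv (deriv E2) (x - s N) * deriv s N * deriv s N
      - deriv E2 (x - s N) * deriv (deriv s) N),
    lt_of_lt_of_le hm (hD _ hp _ _ (xm_nonneg _) (xm_nonneg _)), ?_, ?_, ?_⟩
  · refine ((dx.add (db1'.mul dE1)).add (db2'.mul dE2)).congr_fderiv ?_
    refine ContinuousLinearMap.ext fun k => ?_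
    simp [← hx, ← hN]; ring
  · refine ((db1.mul dE1').add (db2.mul dE2')).congr_fderiv ?_
    refine ContinuousLinearMap.ext fun k => ?_
    simp [← hx, ← hN]; ring
  · refine ((db2.mul dE2').mul ds').neg.congr_fderiv ?_
    refine ContinuousLinearMap.ext fun k => ?_
    simp [← hx, ← hN]; ring

end

section
variable {b1 b1' b2 b2' : ℂ → ℝ} {E1 E2 s : ℝ → ℝ}

theorem PG_contDiff (H : PD b1 b1' b2 b2' E1 E2 s) (η : ℂ) (N : ℝ) :
    ContDiff ℝ (⊤ : ℕ∞) (fun x => PG b1' b2' E1 E2 s η x N) := by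
  unfold PG
  exact (contDiff_id.add (contDiff_const.mul H.e1)).add
    (contDiff_const.mul (H.e2.comp (contDiff_id.sub contDiff_const)))

theorem PG_deriv (H : PD b1 b1' b2 b2' E1 E2 s) (η : ℂ) (N x : ℝ) :
    deriv (fun x => PG b1' b2' E1 E2 s η x N) x =
      1 + b1' η * deriv E1 x + b2' η * deriv E2 (x - s N) := by
  have hE : ∀ {E : ℝ → ℝ}, ContDiff ℝ (⊤ : ℕ∞) E → ∀ y, HasDerivAt E (deriv E y) y :=
    fun h y => (h.differentiable (by simp) y).hasDerivAt
  have h2 := (hE H.e2 (x - s N)).comp x ((hasDerivAt_id x).sub_const (s N))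
  have := ((hasDerivAt_id x).add ((hE H.e1 x).const_mul (b1' η))).add (h2.const_mul (b2' η))
  have h3 : HasDerivAt (fun x => PG b1' b2' E1 E2 s η x N) _ x := this
  rw [h3.deriv]; simp

theorem PG_zero (H : PD b1 b1' b2 b2' E1 E2 s) (η : ℂ) {N : ℝ} (hN : 0 ≤ N) :
    PG b1' b2' E1 E2 s η 0 N = 0 := by
  unfold PG; rw [H.E10, H.E20 N hN]; simp

theorem PG_growth (H : PD b1 b1' b2 b2' E1 E2 s) : ∃ m : ℝ, 0 < m ∧ ∀ η : ℂ, η ≠ 0 →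
    ∀ N x y : ℝ, 0 ≤ N → 0 ≤ x → x ≤ y →
    m * (y - x) ≤ PG b1' b2' E1 E2 s η y N - PG b1' b2' E1 E2 s η x N := by
  obtain ⟨m, hm, hD⟩ := H.hD
  refine ⟨m, hm, fun η hη N x y hN hx hxy => ?_⟩
  have hc := PG_contDiff H η N
  refine Convex.mul_sub_le_image_sub_of_le_deriv (convex_Ici (0 : ℝ)) hc.continuous.continuousOn
    (hc.differentiable (by simp)).differentiableOn ?_ x hx y (le_trans hx hxy) hxy
  intro z hz
  rw [interior_Ici] at hz
  rw [PG_deriv H]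
  exact hD η hη z N (le_of_lt hz) hN

theorem PG_pos (H : PD b1 b1' b2 b2' E1 E2 s) {η : ℂ} (hη : η ≠ 0) {x N : ℝ} (hN : 0 ≤ N)
    (hx : 0 < x) : 0 < PG b1' b2' E1 E2 s η x N := by
  obtain ⟨m, hm, h⟩ := PG_growth H
  have := h η hη N 0 x hN le_rfl hx.le
  rw [PG_zero H η hN] at this
  nlinarith [mul_pos hm hx]

theorem PG_inj (H : PD b1 b1' b2 b2' E1 E2 s) {η : ℂ} (hη : η ≠ 0) {x y N : ℝ} (hN : 0 ≤ N)
    (hx : 0 ≤ x) (hy : 0 ≤ y)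
    (h : PG b1' b2' E1 E2 s η x N = PG b1' b2' E1 E2 s η y N) : x = y := by
  obtain ⟨m, hm, hg⟩ := PG_growth H
  rcases lt_trichotomy x y with h1 | h1 | h1
  · have := hg η hη N x y hN hx h1.le
    nlinarith [mul_pos hm (sub_pos.2 h1)]
  · exact h1
  · have := hg η hη N y x hN hy h1.le
    nlinarith [mul_pos hm (sub_pos.2 h1)]

theorem PG_surj (H : PD b1 b1' b2 b2' E1 E2 s) {η : ℂ} (hη : η ≠ 0) {N y : ℝ} (hN : 0 ≤ N)
    (hy : 0 < y) : ∃ x, 0 < x ∧ PG b1' b2' E1 E2 s η x N = y := by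
  obtain ⟨m, hm, hg⟩ := PG_growth H
  have hc := (PG_contDiff H η N).continuous
  have h0 := PG_zero H η hN
  have hle : (0 : ℝ) ≤ y / m := (div_pos hy hm).le
  have h1 := hg η hη N 0 (y / m) hN le_rfl hle
  rw [h0, sub_zero, sub_zero, mul_div_cancel₀ _ hm.ne'] at h1
  have := intermediate_value_Icc hle hc.continuousOn
  obtain ⟨x, hx, hxy⟩ := this ⟨by rw [h0]; exact hy.le, h1⟩
  refine ⟨x, lt_of_le_of_ne hx.1 ?_, hxy⟩
  rintro rfl
  simp only [h0] at hxy
  exact hy.ne hxy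

theorem xm_real_mul (r : ℝ) (η : ℂ) : xm ((r : ℂ) * η) = r ^ 2 * xm η := by
  rw [xm_eq_norm, xm_eq_norm, norm_mul, Complex.norm_real, mul_pow, Real.norm_eq_abs, sq_abs]
  ring

theorem PA_xm (H : PD b1 b1' b2 b2' E1 E2 s) {p : ℂ × ℂ} (hp : p.2 ≠ 0) :
    xm (PA b1' b2' E1 E2 s p).2 = PG b1' b2' E1 E2 s p.2 (xm p.2) (xm p.1) := by
  have hG := PG_pos H hp (xm_nonneg p.1) (xm_pos hp)
  have hx := xm_pos hp
  simp only [PA]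
  rw [xm_real_mul, Real.sq_sqrt (div_pos hG hx).le, div_mul_cancel₀ _ hx.ne']

theorem PA_scale (H : PD b1 b1' b2 b2' E1 E2 s) {p : ℂ × ℂ} (hp : p.2 ≠ 0) :
    ∃ r : ℝ, 0 < r ∧ (PA b1' b2' E1 E2 s p).2 = (r : ℂ) * p.2 := by
  have hG := PG_pos H hp (xm_nonneg p.1) (xm_pos hp)
  exact ⟨_, Real.sqrt_pos.2 (div_pos hG (xm_pos hp)), rfl⟩

theorem PG_scale (H : PD b1 b1' b2 b2' E1 E2 s) {r : ℝ} (hr : 0 < r) (η : ℂ) (x N : ℝ) :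
    PG b1' b2' E1 E2 s ((r : ℂ) * η) x N = PG b1' b2' E1 E2 s η x N := by
  unfold PG; rw [H.c1.hom' r η hr, H.c2.hom' r η hr]

theorem PA_injOn (H : PD b1 b1' b2 b2' E1 E2 s) {p q : ℂ × ℂ} (hp : p.2 ≠ 0) (hq : q.2 ≠ 0)
    (h : PA b1' b2' E1 E2 s p = PA b1' b2' E1 E2 s q) : p = q := by
  have h1 : p.1 = q.1 := (Prod.ext_iff.1 h).1
  obtain ⟨r, hr, e1⟩ := PA_scale H hp
  obtain ⟨t, ht, e2⟩ := PA_scale H hq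
  have h2 : (r : ℂ) * p.2 = (t : ℂ) * q.2 := by rw [← e1, ← e2, h]
  have h3 : p.2 = ((t / r : ℝ) : ℂ) * q.2 := by
    have : (r : ℂ) ≠ 0 := by exact_mod_cast hr.ne'
    push_cast
    field_simp
    rw [mul_comm, h2, mul_comm]
  have x1 := PA_xm H hp
  have x2 := PA_xm H hq
  rw [h] at x1
  rw [x2] at x1
  nth_rewrite 1 [h3] at x1
  rw [PG_scale H (div_pos ht hr), h1] at x1
  have hxx := PG_inj H hq (xm_nonneg _) (xm_nonneg _) (xm_nonneg _) x1
  have hn := hxx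
  nth_rewrite 1 [← one_mul (xm q.2)] at hn
  rw [h3, xm_real_mul] at hn
  have hsq := mul_right_cancel₀ (xm_pos hq).ne' hn
  have hone : t / r = 1 := by
    nlinarith [div_pos ht hr]
  rw [hone] at h3
  exact Prod.ext h1 (by simpa using h3)

theorem PA_surjOn (H : PD b1 b1' b2 b2' E1 E2 s) {q : ℂ × ℂ} (hq : q.2 ≠ 0) :
    ∃ p : ℂ × ℂ, p.2 ≠ 0 ∧ PA b1' b2' E1 E2 s p = q := by
  obtain ⟨x, hx, hxy⟩ := PG_surj H hq (xm_nonneg q.1) (xm_pos hq)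
  have hy := xm_pos hq
  set r := Real.sqrt (x / xm q.2) with hr
  have hrp : 0 < r := Real.sqrt_pos.2 (div_pos hx hy)
  have hxr : xm ((r : ℂ) * q.2) = x := by
    rw [xm_real_mul, hr, Real.sq_sqrt (div_pos hx hy).le, div_mul_cancel₀ _ hy.ne']
  refine ⟨(q.1, (r : ℂ) * q.2), mul_ne_zero (by exact_mod_cast hrp.ne') hq, ?_⟩
  refine Prod.ext rfl ?_
  simp only [PA]
  rw [hxr, PG_scale H hrp, hxy, ← mul_assoc, ← Complex.ofReal_mul, hr,
    ← Real.sqrt_mul (div_pos hy hx).le, div_mul_div_cancel₀ hx.ne', div_self hy.ne']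
  simp

/-- lift of the circle map -/
def PL (b1 b2 : ℂ → ℝ) (E1 E2 s : ℝ → ℝ) (x N t : ℝ) : ℝ :=
  t + (b1 (rot t) * deriv E1 x + b2 (rot t) * deriv E2 (x - s N))

theorem CircFn.rot {b b' : ℂ → ℝ} (h : CircFn b b') (t : ℝ) :
    HasDerivAt (fun t => b (rot t)) (b' (rot t)) t := by
  have h1 := (h.d1 (_root_.rot t) (rot_ne t)).comp_hasDerivAt t (hasDerivAt_rot t)
  refine h1.congr_deriv ?_
  have hn : Complex.normSq (_root_.rot t) = 1 := by
    rw [Complex.normSq_eq_norm_sq, norm_rot]; norm_num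
  have hn' := hn
  rw [Complex.normSq_apply] at hn'
  have hx : xm (_root_.rot t) = Real.pi := by rw [xm, hn, mul_one]
  have : dtL (_root_.rot t) (2 * Real.pi * Complex.I * _root_.rot t) = 1 := by
    rw [dtL_apply, hx]
    simp only [Complex.mul_im, Complex.mul_re, Complex.I_re, Complex.I_im, Complex.ofReal_re,
      Complex.ofReal_im, Complex.re_ofNat, Complex.im_ofNat]
    have := Real.pi_pos.ne'
    field_simp
    linear_combination (2 * Real.pi) * hn'
  simp [this]

theorem PL_mono (H : PD b1 b1' b2 b2' E1 E2 s) {x N : ℝ} (hx : 0 ≤ x) (hN : 0 ≤ N) :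
    StrictMono (PL b1 b2 E1 E2 s x N) ∧ Continuous (PL b1 b2 E1 E2 s x N) := by
  obtain ⟨m, hm, hD⟩ := H.hD
  have hd : ∀ t, HasDerivAt (PL b1 b2 E1 E2 s x N)
      (1 + (b1' (rot t) * deriv E1 x + b2' (rot t) * deriv E2 (x - s N))) t := fun t =>
    (hasDerivAt_id t).add (((H.c1.rot t).mul_const _).add ((H.c2.rot t).mul_const _))
  refine ⟨strictMono_of_deriv_pos fun t => ?_,
    continuous_iff_continuousAt.2 fun t => (hd t).continuousAt⟩
  rw [(hd t).deriv]
  have := hD (rot t) (rot_ne t) x N hx hN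
  linarith

theorem PL_add_int (x N t : ℝ) (k : ℤ) :
    PL b1 b2 E1 E2 s x N (t + k) = PL b1 b2 E1 E2 s x N t + k := by
  simp only [PL, rot_add, rot_int, mul_one]; ring

theorem PP_polar (H : PD b1 b1' b2 b2' E1 E2 s) (w : ℂ) {r : ℝ} (hr : 0 < r) (t : ℝ) :
    t + PP b1 b2 E1 E2 s (w, (r : ℂ) * rot t) =
      PL b1 b2 E1 E2 s (xm ((r : ℂ) * rot t)) (xm w) t := by
  simp only [PP, PL, H.c1.hom r _ hr, H.c2.hom r _ hr]

theorem PB_xm (p : ℂ × ℂ) : xm (PB b1 b2 E1 E2 s p).1 = xm p.1 ∧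
    xm (PB b1 b2 E1 E2 s p).2 = xm p.2 := by
  simp only [PB, xm_rot_mul, and_self]

theorem PB_injOn (H : PD b1 b1' b2 b2' E1 E2 s) {p q : ℂ × ℂ} (hp : p.2 ≠ 0)
    (h : PB b1 b2 E1 E2 s p = PB b1 b2 E1 E2 s q) : p = q := by
  have hx1 : xm p.1 = xm q.1 := by rw [← (PB_xm (b1 := b1) (b2 := b2) (E1 := E1) (E2 := E2) (s := s) p).1, h, (PB_xm q).1]
  have hx2 : xm p.2 = xm q.2 := by rw [← (PB_xm (b1 := b1) (b2 := b2) (E1 := E1) (E2 := E2) (s := s) p).2, h, (PB_xm q).2]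
  have hn : ‖p.2‖ = ‖q.2‖ := norm_eq_of_xm hx2
  have hr : 0 < ‖p.2‖ := norm_pos_iff.2 hp
  obtain ⟨t, ht⟩ := exists_rot p.2
  obtain ⟨u, hu⟩ := exists_rot q.2
  rw [← hn] at hu
  have h2 : rot (PP b1 b2 E1 E2 s p) * p.2 = rot (PP b1 b2 E1 E2 s q) * q.2 := (Prod.ext_iff.1 h).2
  have hP : ∀ (p : ℂ × ℂ) (t : ℝ) (r : ℝ), 0 < r → p.2 = (r : ℂ) * rot t →
      t + PP b1 b2 E1 E2 s p = PL b1 b2 E1 E2 s (xm p.2) (xm p.1) t := by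
    intro p t r hr h
    have := PP_polar H p.1 hr t
    rw [← h] at this
    exact this
  have h3 : rot (PL b1 b2 E1 E2 s (xm p.2) (xm p.1) t) =
      rot (PL b1 b2 E1 E2 s (xm p.2) (xm p.1) u) := by
    rw [← hP p t _ hr ht]
    rw [hx2, hx1, ← hP q u _ hr hu, rot_add, rot_add]
    have hr' : ((‖p.2‖ : ℝ) : ℂ) ≠ 0 := by exact_mod_cast hr.ne'
    apply mul_left_cancel₀ hr'
    rw [← mul_assoc, ← mul_assoc, ← ht, ← hu, mul_comm, h2, mul_comm]
  obtain ⟨k, hk⟩ := rot_eq_rot h3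
  rw [← PL_add_int] at hk
  have h4 := (PL_mono H (xm_nonneg p.2) (xm_nonneg p.1)).1.injective hk
  have h5 : p.2 = q.2 := by
    rw [ht, hu, h4, rot_add, rot_int, mul_one]
  have hT : PT b2 E2 s p = PT b2 E2 s q := by
    simp only [PT]; rw [h5, hx1]
  have h6 : rot (PT b2 E2 s p) * p.1 = rot (PT b2 E2 s q) * q.1 := (Prod.ext_iff.1 h).1
  rw [hT] at h6
  exact Prod.ext (mul_left_cancel₀ (rot_ne _) h6) h5

theorem PB_surjOn (H : PD b1 b1' b2 b2' E1 E2 s) {q : ℂ × ℂ} (hq : q.2 ≠ 0) :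
    ∃ p : ℂ × ℂ, p.2 ≠ 0 ∧ PB b1 b2 E1 E2 s p = q := by
  obtain ⟨u, hu⟩ := exists_rot q.2
  have hr : 0 < ‖q.2‖ := norm_pos_iff.2 hq
  obtain ⟨hmono, hcont⟩ := PL_mono H (xm_nonneg q.2) (xm_nonneg q.1)
  set φ := PL b1 b2 E1 E2 s (xm q.2) (xm q.1) with hφ
  have hsurj : ∃ t, φ t = u := by
    have hk : ∀ k : ℤ, φ k = φ 0 + k := fun k => by
      have := PL_add_int (b1 := b1) (b2 := b2) (E1 := E1) (E2 := E2) (s := s) (xm q.2) (xm q.1) 0 k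
      rwa [zero_add] at this
    set k := ⌊u - φ 0⌋
    have h1 : φ k ≤ u := by rw [hk]; linarith [Int.floor_le (u - φ 0)]
    have h2 : u ≤ φ ((k + 1 : ℤ) : ℝ) := by
      rw [hk]; push_cast; linarith [Int.lt_floor_add_one (u - φ 0)]
    obtain ⟨t, _, ht⟩ := intermediate_value_Icc (by push_cast; linarith) hcont.continuousOn ⟨h1, h2⟩
    exact ⟨t, ht⟩
  obtain ⟨t, ht⟩ := hsurj
  set η := ((‖q.2‖ : ℝ) : ℂ) * rot t with hη
  have hη0 : η ≠ 0 := mul_ne_zero (by exact_mod_cast hr.ne') (rot_ne t)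
  have hxη : xm η = xm q.2 := by
    rw [hη, mul_comm, xm_rot_mul, xm_eq_norm, xm_eq_norm]; simp
  have hPT : ∀ w, xm w = xm q.1 → PT b2 E2 s (w, η) = PT b2 E2 s (q.1, η) := by
    intro w hw; simp only [PT, hw]
  set w := rot (-(PT b2 E2 s (q.1, η))) * q.1 with hw
  have hxw : xm w = xm q.1 := xm_rot_mul _ _
  refine ⟨(w, η), hη0, Prod.ext ?_ ?_⟩
  · simp only [PB]
    rw [hPT w hxw, hw, ← mul_assoc, ← rot_add, add_neg_cancel, rot_zero, one_mul]
  · simp only [PB]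
    have := PP_polar H w hr t
    rw [← hη, hxη, hxw, ← hφ, ht] at this
    nth_rewrite 2 [hη]
    rw [mul_comm, mul_assoc, ← rot_add, this, ← hu]

end

section
variable {b1 b1' b2 b2' : ℂ → ℝ} {E1 E2 s : ℝ → ℝ}

theorem PG_contDiffAt (H : PD b1 b1' b2 b2' E1 E2 s) {p : ℂ × ℂ} (hp : p.2 ≠ 0) :
    ContDiffAt ℝ (⊤ : ℕ∞) (fun p : ℂ × ℂ => PG b1' b2' E1 E2 s p.2 (xm p.2) (xm p.1)) p := by
  have hx : ContDiffAt ℝ (⊤ : ℕ∞) (fun p : ℂ × ℂ => xm p.2) p :=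
    (contDiff_xm.comp contDiff_snd).contDiffAt
  have hN : ContDiffAt ℝ (⊤ : ℕ∞) (fun p : ℂ × ℂ => xm p.1) p :=
    (contDiff_xm.comp contDiff_fst).contDiffAt
  have h1 := ContDiffAt.comp (f := Prod.snd) p (H.c1.sm' p.2 hp) contDiffAt_snd
  have h2 := ContDiffAt.comp (f := Prod.snd) p (H.c2.sm' p.2 hp) contDiffAt_snd
  unfold PG
  exact (hx.add (h1.mul (H.e1.contDiffAt.comp p hx))).add
    (h2.mul (H.e2.contDiffAt.comp p (hx.sub (H.hs.contDiffAt.comp p hN))))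

theorem PP_contDiffAt (H : PD b1 b1' b2 b2' E1 E2 s) {p : ℂ × ℂ} (hp : p.2 ≠ 0) :
    ContDiffAt ℝ (⊤ : ℕ∞) (PP b1 b2 E1 E2 s) p ∧ ContDiffAt ℝ (⊤ : ℕ∞) (PT b2 E2 s) p := by
  have hx : ContDiffAt ℝ (⊤ : ℕ∞) (fun p : ℂ × ℂ => xm p.2) p :=
    (contDiff_xm.comp contDiff_snd).contDiffAt
  have hN : ContDiffAt ℝ (⊤ : ℕ∞) (fun p : ℂ × ℂ => xm p.1) p :=
    (contDiff_xm.comp contDiff_fst).contDiffAt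
  have h1 := ContDiffAt.comp (f := Prod.snd) p (H.c1.sm p.2 hp) contDiffAt_snd
  have h2 := ContDiffAt.comp (f := Prod.snd) p (H.c2.sm p.2 hp) contDiffAt_snd
  have E1' := (contDiff_infty_iff_deriv.1 H.e1).2
  have E2' := (contDiff_infty_iff_deriv.1 H.e2).2
  have s' := (contDiff_infty_iff_deriv.1 H.hs).2
  have hE2 := E2'.contDiffAt.comp p (hx.sub (H.hs.contDiffAt.comp p hN))
  exact ⟨(h1.mul (E1'.contDiffAt.comp p hx)).add (h2.mul hE2),
    ((h2.mul hE2).mul (s'.contDiffAt.comp p hN)).neg⟩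

theorem PA_contDiffAt (H : PD b1 b1' b2 b2' E1 E2 s) {p : ℂ × ℂ} (hp : p.2 ≠ 0) :
    ContDiffAt ℝ (⊤ : ℕ∞) (fun p : ℂ × ℂ =>
      Real.sqrt (PG b1' b2' E1 E2 s p.2 (xm p.2) (xm p.1) / xm p.2)) p ∧
    ContDiffAt ℝ (⊤ : ℕ∞) (PA b1' b2' E1 E2 s) p := by
  have hx : ContDiffAt ℝ (⊤ : ℕ∞) (fun p : ℂ × ℂ => xm p.2) p :=
    (contDiff_xm.comp contDiff_snd).contDiffAt
  have hG := PG_pos H hp (xm_nonneg p.1) (xm_pos hp)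
  have h := ((PG_contDiffAt H hp).div hx (xm_pos hp).ne').sqrt (div_pos hG (xm_pos hp)).ne'
  refine ⟨h, ?_⟩
  exact contDiffAt_fst.prodMk ((Complex.ofRealCLM.contDiff.contDiffAt.comp p h).mul contDiffAt_snd)

theorem PB_contDiffAt (H : PD b1 b1' b2 b2' E1 E2 s) {p : ℂ × ℂ} (hp : p.2 ≠ 0) :
    ContDiffAt ℝ (⊤ : ℕ∞) (PB b1 b2 E1 E2 s) p := by
  obtain ⟨h1, h2⟩ := PP_contDiffAt H hp
  exact ((contDiff_rot.contDiffAt.comp p h2).mul contDiffAt_fst).prodMk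
    ((contDiff_rot.contDiffAt.comp p h1).mul contDiffAt_snd)

theorem PA_PB_deriv (H : PD b1 b1' b2 b2' E1 E2 s) {p : ℂ × ℂ} (hp : p.2 ≠ 0) :
    (∀ h, fderiv ℝ (PA b1' b2' E1 E2 s) p h = 0 → h = 0) ∧
    ∀ h k, sg2 (fderiv ℝ (PA b1' b2' E1 E2 s) p h) (fderiv ℝ (PA b1' b2' E1 E2 s) p k) =
      sg2 (fderiv ℝ (PB b1 b2 E1 E2 s) p h) (fderiv ℝ (PB b1 b2 E1 E2 s) p k) := by
  obtain ⟨D, u, v, a, c, t, hD, dG, dP, dT⟩ := H.forms p hp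
  set g : ℂ × ℂ → ℝ := fun p : ℂ × ℂ =>
      Real.sqrt (PG b1' b2' E1 E2 s p.2 (xm p.2) (xm p.1) / xm p.2) with hg
  have dg : HasFDerivAt g (fderiv ℝ g p) p :=
    ((PA_contDiffAt H hp).1.differentiableAt (by simp)).hasFDerivAt
  have hGp := PG_pos H hp (xm_nonneg p.1) (xm_pos hp)
  have hxp := xm_pos hp
  have hgp : 0 < g p := Real.sqrt_pos.2 (div_pos hGp hxp)
  have dx : HasFDerivAt (fun p : ℂ × ℂ => xm p.2)
      ((dxL p.2).comp (ContinuousLinearMap.snd ℝ ℂ ℂ)) p :=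
    HasFDerivAt.comp (f := Prod.snd) p (hasFDerivAt_xm p.2) hasFDerivAt_snd
  have dG2 : HasFDerivAt (fun p : ℂ × ℂ => g p * g p * xm p.2) _ p := (dg.mul dg).mul dx
  have hev : (fun p : ℂ × ℂ => PG b1' b2' E1 E2 s p.2 (xm p.2) (xm p.1)) =ᶠ[nhds p]
      (fun p : ℂ × ℂ => g p * g p * xm p.2) := by
    have : ∀ᶠ q : ℂ × ℂ in nhds p, q.2 ≠ 0 :=
      continuous_snd.continuousAt.eventually_ne hp
    filter_upwards [this] with q hq
    have h1 := PG_pos H hq (xm_nonneg q.1) (xm_pos hq)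
    rw [hg]
    simp only
    rw [Real.mul_self_sqrt (div_pos h1 (xm_pos hq)).le, div_mul_cancel₀ _ (xm_pos hq).ne']
  have huniq := dG.unique (dG2.congr_of_eventuallyEq hev)
  have hdG : ∀ h : ℂ × ℂ, D * dxL p.2 h.2 + u * dtL p.2 h.2 + v * dxL p.1 h.1 =
      2 * g p * fderiv ℝ g p h * xm p.2 + g p * g p * dxL p.2 h.2 := by
    intro h
    have := DFunLike.congr_fun huniq h
    simp at this
    linear_combination this
  have dA : HasFDerivAt (PA b1' b2' E1 E2 s)
      ((ContinuousLinearMap.fst ℝ ℂ ℂ).prod _) p :=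
    HasFDerivAt.prodMk hasFDerivAt_fst
      ((Complex.ofRealCLM.hasFDerivAt.comp p dg).mul hasFDerivAt_snd)
  have dB1 := ((hasDerivAt_rot _).hasFDerivAt.comp p dT).mul
    (hasFDerivAt_fst (𝕜 := ℝ) (E := ℂ) (F := ℂ) (p := p))
  have dB2 := ((hasDerivAt_rot _).hasFDerivAt.comp p dP).mul
    (hasFDerivAt_snd (𝕜 := ℝ) (E := ℂ) (F := ℂ) (p := p))
  have dB : HasFDerivAt (PB b1 b2 E1 E2 s) _ p := HasFDerivAt.prodMk dB1 dB2
  have eA : ∀ h, fderiv ℝ (PA b1' b2' E1 E2 s) p h =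
      (h.1, (g p : ℂ) * h.2 + (fderiv ℝ g p h : ℂ) * p.2) := by
    intro h
    rw [dA.fderiv]
    simp [mul_comm]
  set dPh : ℂ × ℂ → ℝ := fun h => a * dxL p.2 h.2 + (D - 1) * dtL p.2 h.2 + c * dxL p.1 h.1 with hdPh
  set dTh : ℂ × ℂ → ℝ := fun h => c * dxL p.2 h.2 + v * dtL p.2 h.2 + t * dxL p.1 h.1 with hdTh
  have eB : ∀ h, fderiv ℝ (PB b1 b2 E1 E2 s) p h =
      (rot (PT b2 E2 s p) * (h.1 + (2 * Real.pi * dTh h : ℝ) * Complex.I * p.1),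
       rot (PP b1 b2 E1 E2 s p) * (h.2 + (2 * Real.pi * dPh h : ℝ) * Complex.I * p.2)) := by
    intro h
    rw [dB.fderiv]
    refine Prod.ext ?_ ?_
    · simp [hdTh]; ring
    · simp [hdPh]; ring
  have hnsq : Complex.normSq p.2 = p.2.re ^ 2 + p.2.im ^ 2 := by
    rw [Complex.normSq_apply]; ring
  have hxe := xm_re_im p.2
  have hdt : ∀ h : ℂ, 2 * xm p.2 * dtL p.2 h = p.2.re * h.im - p.2.im * h.re := by
    intro h
    rw [dtL_apply, ← mul_assoc, mul_one_div_cancel (by positivity), one_mul]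
  have hrotim : ∀ (θ : ℝ) (y z : ℂ), ((starRingEnd ℂ) (rot θ * y) * (rot θ * z)).im =
      ((starRingEnd ℂ) y * z).im := by
    intro θ y z
    have : (starRingEnd ℂ) (rot θ) * rot θ = 1 := by
      rw [mul_comm, Complex.mul_conj, Complex.normSq_eq_norm_sq, norm_rot]; simp
    rw [map_mul]
    rw [show (starRingEnd ℂ) (rot θ) * (starRingEnd ℂ) y * (rot θ * z) =
      ((starRingEnd ℂ) (rot θ) * rot θ) * ((starRingEnd ℂ) y * z) by ring, this, one_mul]
  have hωdt : ∀ h k : ℂ, h.re * k.im - h.im * k.re =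
      dxL p.2 h * dtL p.2 k - dxL p.2 k * dtL p.2 h := by
    intro h k
    have hx0 : 2 * xm p.2 ≠ 0 := by positivity
    apply mul_left_cancel₀ hx0
    rw [show 2 * xm p.2 * (dxL p.2 h * dtL p.2 k - dxL p.2 k * dtL p.2 h) =
      dxL p.2 h * (2 * xm p.2 * dtL p.2 k) - dxL p.2 k * (2 * xm p.2 * dtL p.2 h) by ring,
      hdt, hdt, dxL_apply, dxL_apply, hxe]
    ring
  constructor
  · intro h hh
    rw [eA] at hh
    have h1 : h.1 = 0 := (Prod.ext_iff.1 hh).1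
    have h2 : (g p : ℂ) * h.2 + (fderiv ℝ g p h : ℂ) * p.2 = 0 := (Prod.ext_iff.1 hh).2
    have r1 : g p * h.2.re + fderiv ℝ g p h * p.2.re = 0 := by
      simpa using congrArg Complex.re h2
    have r2 : g p * h.2.im + fderiv ℝ g p h * p.2.im = 0 := by
      simpa using congrArg Complex.im h2
    have q1 : dtL p.2 h.2 = 0 := by
      have : g p * (2 * xm p.2 * dtL p.2 h.2) = 0 := by
        rw [hdt]; linear_combination p.2.re * r2 - p.2.im * r1
      simpa [hgp.ne', hxp.ne'] using this
    have q2 : dxL p.2 h.2 = 0 := by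
      have h3 := hdG h
      rw [q1, h1] at h3
      have h4 : 2 * g p * fderiv ℝ g p h * xm p.2 + g p * g p * dxL p.2 h.2 = 0 := by
        rw [hxe, dxL_apply]
        linear_combination (2 * g p * Real.pi * p.2.re) * r1 + (2 * g p * Real.pi * p.2.im) * r2
      rw [h4] at h3
      simpa [hD.ne'] using h3
    have z1 := hdt h.2
    rw [q1] at z1
    rw [dxL_apply] at q2
    have hpi := Real.pi_pos
    have z2 : p.2.re * h.2.re + p.2.im * h.2.im = 0 := by
      have : (2 * Real.pi) ≠ 0 := by positivity
      simpa [this] using q2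
    have hns : p.2.re ^ 2 + p.2.im ^ 2 ≠ 0 := by
      rw [← hnsq]; exact (Complex.normSq_pos.2 hp).ne'
    have w1 : h.2.re = 0 := by
      have : (p.2.re ^ 2 + p.2.im ^ 2) * h.2.re = 0 := by
        linear_combination p.2.re * z2 + p.2.im * z1
      simpa [hns] using this
    have w2 : h.2.im = 0 := by
      have : (p.2.re ^ 2 + p.2.im ^ 2) * h.2.im = 0 := by
        linear_combination p.2.im * z2 - p.2.re * z1
      simpa [hns] using this
    exact Prod.ext h1 (Complex.ext w1 w2)
  · intro h k
    rw [eA, eA, eB, eB]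
    simp only [sg2, hrotim]
    have L2 : ((starRingEnd ℂ) ((g p : ℂ) * h.2 + (fderiv ℝ g p h : ℂ) * p.2) *
        ((g p : ℂ) * k.2 + (fderiv ℝ g p k : ℂ) * p.2)).im =
        (D * dxL p.2 h.2 + u * dtL p.2 h.2 + v * dxL p.1 h.1) * dtL p.2 k.2 -
        (D * dxL p.2 k.2 + u * dtL p.2 k.2 + v * dxL p.1 k.1) * dtL p.2 h.2 := by
      rw [hdG, hdG]
      have e1 := hdt h.2
      have e2 := hdt k.2
      have e3 := hωdt h.2 k.2
      simp only [Complex.mul_im, Complex.mul_re, Complex.conj_re, Complex.conj_im,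
        Complex.add_re, Complex.add_im, Complex.ofReal_re, Complex.ofReal_im]
      linear_combination (g p * g p) * e3 - (g p * fderiv ℝ g p h) * e2 + (g p * fderiv ℝ g p k) * e1
    have R1 : ∀ (q : ℂ) (α β : ℝ) (h k : ℂ),
        ((starRingEnd ℂ) (h + (2 * Real.pi * α : ℝ) * Complex.I * q) *
        (k + (2 * Real.pi * β : ℝ) * Complex.I * q)).im =
        (h.re * k.im - h.im * k.re) + (dxL q h * β - dxL q k * α) := by
      intro q α β h k
      simp only [Complex.mul_im, Complex.mul_re, Complex.conj_re, Complex.conj_im,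
        Complex.add_re, Complex.add_im, Complex.ofReal_re, Complex.ofReal_im,
        Complex.I_re, Complex.I_im, dxL_apply]
      ring
    rw [L2, R1, R1]
    simp only [hωdt h.2 k.2, hdPh, hdTh, Complex.mul_im, Complex.conj_re, Complex.conj_im]
    ring

/-- vanishing near the origin -/
def PV (E1 E2 s : ℝ → ℝ) : Prop :=
  ∃ s0 : ℝ, 0 < s0 ∧ (∀ x ≤ s0, E1 x = 0) ∧ (∀ y ≤ 0, E2 y = 0) ∧ ∀ N, 0 ≤ N → s0 ≤ s N

theorem PV.near (hV : PV E1 E2 s) {p : ℂ × ℂ} (hp : p.2 = 0) :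
    ∀ᶠ q in nhds p, PA b1' b2' E1 E2 s q = q ∧ PB b1 b2 E1 E2 s q = q := by
  obtain ⟨s0, hs0, h1, h2, h3⟩ := hV
  have hc : Continuous (fun q : ℂ × ℂ => xm q.2) := contDiff_xm.continuous.comp continuous_snd
  have : ∀ᶠ q : ℂ × ℂ in nhds p, xm q.2 < s0 := by
    apply hc.continuousAt.eventually_lt continuousAt_const
    rw [hp, xm_zero]; exact hs0
  filter_upwards [this] with q hq
  have d1 : deriv E1 (xm q.2) = 0 := by
    have : E1 =ᶠ[nhds (xm q.2)] fun _ => 0 := by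
      filter_upwards [Iio_mem_nhds hq] with y hy using h1 y (le_of_lt hy)
    rw [this.deriv_eq]; simp
  have hlt : xm q.2 - s (xm q.1) < 0 := by linarith [h3 _ (xm_nonneg q.1)]
  have d2 : deriv E2 (xm q.2 - s (xm q.1)) = 0 := by
    have : E2 =ᶠ[nhds (xm q.2 - s (xm q.1))] fun _ => 0 := by
      filter_upwards [Iio_mem_nhds hlt] with y hy using h2 y (le_of_lt hy)
    rw [this.deriv_eq]; simp
  constructor
  · refine Prod.ext rfl ?_
    simp only [PA, PG, h1 _ hq.le, h2 _ hlt.le]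
    by_cases h0 : q.2 = 0
    · simp [h0]
    · simp [div_self (xm_pos h0).ne']
  · simp [PB, PP, PT, d1, d2, rot_zero]

theorem PD.main (H : PD b1 b1' b2 b2' E1 E2 s) {M : Set (ℂ × ℂ)}
    (hM : M = {p | p.2 ≠ 0} ∨ (M = univ ∧ PV E1 E2 s)) :
    SE sg2 M (fun p q => q ∈ M ∧ xm q.1 = xm p.1 ∧ ((∀ N, deriv s N = 0) → q.1 = p.1) ∧
      xm p.2 = PG b1' b2' E1 E2 s p.2 (xm q.2) (xm p.1)) ∧
    SE sg2 M (fun p q => q ∈ M ∧ xm q.1 = xm p.1 ∧ ((∀ N, deriv s N = 0) → q.1 = p.1) ∧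
      xm q.2 = PG b1' b2' E1 E2 s q.2 (xm p.2) (xm p.1)) := by
  set A := PA b1' b2' E1 E2 s with hA
  set B := PB b1 b2 E1 E2 s with hB
  have hMo : IsOpen M := by
    rcases hM with rfl | ⟨rfl, _⟩
    · exact isOpen_ne.preimage continuous_snd
    · exact isOpen_univ
  have h0 : ∀ p ∈ M, p.2 = 0 → ∀ᶠ q in nhds p, A q = q ∧ B q = q := by
    intro p hp hp0
    rcases hM with rfl | ⟨rfl, hV⟩
    · exact absurd hp0 hp
    · exact hV.near hp0
  have hne : ∀ p : ℂ × ℂ, p.2 ≠ 0 → p ∈ M := by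
    intro p hp
    rcases hM with rfl | ⟨rfl, hV⟩
    · exact hp
    · trivial
  have hAne : ∀ p : ℂ × ℂ, p.2 ≠ 0 → (A p).2 ≠ 0 := by
    intro p hp
    obtain ⟨r, hr, e⟩ := PA_scale H hp
    rw [hA, e]
    exact mul_ne_zero (by exact_mod_cast hr.ne') hp
  have hBne : ∀ p : ℂ × ℂ, p.2 ≠ 0 → (B p).2 ≠ 0 := fun p hp => mul_ne_zero (rot_ne _) hp
  have sA : ContDiffOn ℝ (⊤ : ℕ∞) A M := by
    intro p hp
    by_cases hp0 : p.2 = 0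
    · refine (contDiffAt_id.congr_of_eventuallyEq ?_).contDiffWithinAt
      filter_upwards [h0 p hp hp0] with q hq using hq.1
    · exact (PA_contDiffAt H hp0).2.contDiffWithinAt
  have sB : ContDiffOn ℝ (⊤ : ℕ∞) B M := by
    intro p hp
    by_cases hp0 : p.2 = 0
    · refine (contDiffAt_id.congr_of_eventuallyEq ?_).contDiffWithinAt
      filter_upwards [h0 p hp hp0] with q hq using hq.2
    · exact (PB_contDiffAt H hp0).contDiffWithinAt
  have fix : ∀ p ∈ M, p.2 = 0 → A p = p ∧ B p = p := fun p hp hp0 => (h0 p hp hp0).self_of_nhds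
  have iA : Set.InjOn A M := by
    intro p hp q hq h
    by_cases hp0 : p.2 = 0 <;> by_cases hq0 : q.2 = 0
    · rwa [(fix p hp hp0).1, (fix q hq hq0).1] at h
    · exact absurd (by rw [← h, (fix p hp hp0).1, hp0]) (hAne q hq0)
    · exact absurd (by rw [h, (fix q hq hq0).1, hq0]) (hAne p hp0)
    · exact PA_injOn H hp0 hq0 h
  have iB : Set.InjOn B M := by
    intro p hp q hq h
    by_cases hp0 : p.2 = 0
    · by_cases hq0 : q.2 = 0
      · rwa [(fix p hp hp0).2, (fix q hq hq0).2] at h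
      · exact absurd (by rw [← h, (fix p hp hp0).2, hp0]) (hBne q hq0)
    · exact PB_injOn H hp0 h
  have dd : ∀ m ∈ M, (∀ h, fderiv ℝ A m h = 0 → h = 0) ∧
      ∀ h k, sg2 (fderiv ℝ A m h) (fderiv ℝ A m k) = sg2 (fderiv ℝ B m h) (fderiv ℝ B m k) := by
    intro m hm
    by_cases hm0 : m.2 = 0
    · have e1 : A =ᶠ[nhds m] fun q => q := by
        filter_upwards [h0 m hm hm0] with q hq using hq.1
      have e2 : B =ᶠ[nhds m] fun q => q := by
        filter_upwards [h0 m hm hm0] with q hq using hq.2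
      rw [e1.fderiv_eq, e2.fderiv_eq]
      simp
    · exact PA_PB_deriv H hm0
  obtain ⟨S1, S2⟩ := SE.implicit2 hMo sA sB iA iB (fun m hm => (dd m hm).1) (fun m hm => (dd m hm).2)
  have rel : ∀ m ∈ M, A m ∈ M ∧ B m ∈ M ∧ xm (B m).1 = xm (A m).1 ∧
      ((∀ N, deriv s N = 0) → (B m).1 = (A m).1) ∧
      xm (A m).2 = PG b1' b2' E1 E2 s (A m).2 (xm (B m).2) (xm (A m).1) := by
    intro m hm
    by_cases hm0 : m.2 = 0
    · rw [(fix m hm hm0).1, (fix m hm hm0).2]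
      refine ⟨hm, hm, rfl, fun _ => rfl, ?_⟩
      rw [hm0, xm_zero, PG_zero H _ (xm_nonneg _)]
    · refine ⟨hne _ (hAne m hm0), hne _ (hBne m hm0), (PB_xm m).1, ?_, ?_⟩
      · intro hs
        simp [hB, hA, PB, PA, PT, hs, rot_zero]
      · rw [(PB_xm m).2, PA_xm H hm0]
        obtain ⟨r, hr, e⟩ := PA_scale H hm0
        rw [hA, e, PG_scale H hr]
        rfl
  have suA : M ⊆ A '' M := by
    intro q hq
    by_cases hq0 : q.2 = 0
    · exact ⟨q, hq, (fix q hq hq0).1⟩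
    · obtain ⟨p, hp, e⟩ := PA_surjOn H hq0
      exact ⟨p, hne p hp, e⟩
  have suB : M ⊆ B '' M := by
    intro q hq
    by_cases hq0 : q.2 = 0
    · exact ⟨q, hq, (fix q hq hq0).2⟩
    · obtain ⟨p, hp, e⟩ := PB_surjOn H hq0
      exact ⟨p, hne p hp, e⟩
  constructor
  · refine S1.mono suA ?_
    rintro _ _ _ ⟨m, hm, rfl, rfl⟩
    obtain ⟨r1, r2, r3, r4, r5⟩ := rel m hm
    exact ⟨r2, r3, r4, r5⟩
  · refine S2.mono suB ?_
    rintro _ _ _ ⟨m, hm, rfl, rfl⟩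
    obtain ⟨r1, r2, r3, r4, r5⟩ := rel m hm
    exact ⟨r1, r3.symm, fun hs => (r4 hs).symm, by rw [r3]; exact r5⟩

end

/-! ### Concrete circle functions -/

/-- cosine of the direction -/
def cs (η : ℂ) : ℝ := η.re / Real.sqrt (η.re ^ 2 + η.im ^ 2)

/-- sine of the direction -/
def sn (η : ℂ) : ℝ := η.im / Real.sqrt (η.re ^ 2 + η.im ^ 2)

theorem sq_sum_pos {η : ℂ} (h : η ≠ 0) : 0 < η.re ^ 2 + η.im ^ 2 := by
  have := Complex.normSq_pos.2 h
  rw [Complex.normSq_apply] at this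
  nlinarith

theorem cs_sq_add_sn_sq {η : ℂ} (h : η ≠ 0) : cs η ^ 2 + sn η ^ 2 = 1 := by
  have := sq_sum_pos h
  simp only [cs, sn, div_pow, Real.sq_sqrt this.le]
  field_simp

theorem cs_abs_le (η : ℂ) : |cs η| ≤ 1 := by
  by_cases h : η = 0
  · simp [h, cs]
  · have := cs_sq_add_sn_sq h
    rw [← sq_le_one_iff_abs_le_one]; nlinarith [sq_nonneg (sn η)]

theorem cs_le (η : ℂ) : cs η ≤ 1 := (abs_le.1 (cs_abs_le η)).2

theorem le_cs (η : ℂ) : -1 ≤ cs η := (abs_le.1 (cs_abs_le η)).1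

theorem cs_hom (r : ℝ) (η : ℂ) (hr : 0 < r) : cs ((r : ℂ) * η) = cs η := by
  simp only [cs, Complex.mul_re, Complex.mul_im, Complex.ofReal_re, Complex.ofReal_im, zero_mul,
    sub_zero, add_zero]
  rw [show (r * η.re) ^ 2 + (r * η.im) ^ 2 = r ^ 2 * (η.re ^ 2 + η.im ^ 2) by ring,
    Real.sqrt_mul (sq_nonneg r), Real.sqrt_sq hr.le, mul_div_mul_left _ _ hr.ne']

theorem sn_hom (r : ℝ) (η : ℂ) (hr : 0 < r) : sn ((r : ℂ) * η) = sn η := by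
  simp only [sn, Complex.mul_re, Complex.mul_im, Complex.ofReal_re, Complex.ofReal_im, zero_mul,
    sub_zero, add_zero]
  rw [show (r * η.re) ^ 2 + (r * η.im) ^ 2 = r ^ 2 * (η.re ^ 2 + η.im ^ 2) by ring,
    Real.sqrt_mul (sq_nonneg r), Real.sqrt_sq hr.le, mul_div_mul_left _ _ hr.ne']

theorem cs_sn_smooth {η : ℂ} (h : η ≠ 0) :
    ContDiffAt ℝ (⊤ : ℕ∞) cs η ∧ ContDiffAt ℝ (⊤ : ℕ∞) sn η := by
  have h0 := sq_sum_pos h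
  have hr : ContDiffAt ℝ (⊤ : ℕ∞) (fun η : ℂ => η.re) η := Complex.reCLM.contDiff.contDiffAt
  have hi : ContDiffAt ℝ (⊤ : ℕ∞) (fun η : ℂ => η.im) η := Complex.imCLM.contDiff.contDiffAt
  have hs := ((hr.pow 2).add (hi.pow 2)).sqrt h0.ne'
  exact ⟨hr.div hs (Real.sqrt_pos.2 h0).ne', hi.div hs (Real.sqrt_pos.2 h0).ne'⟩

theorem cs_sn_deriv {η : ℂ} (h : η ≠ 0) :
    HasFDerivAt cs ((-(2 * Real.pi * sn η)) • dtL η) η ∧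
    HasFDerivAt sn ((2 * Real.pi * cs η) • dtL η) η := by
  have h0 := sq_sum_pos h
  have hr : HasFDerivAt (fun η : ℂ => η.re) Complex.reCLM η := Complex.reCLM.hasFDerivAt
  have hi : HasFDerivAt (fun η : ℂ => η.im) Complex.imCLM η := Complex.imCLM.hasFDerivAt
  have hs := ((hr.pow 2).add (hi.pow 2)).sqrt h0.ne'
  set n := Real.sqrt (η.re ^ 2 + η.im ^ 2) with hn
  have hn0 : 0 < n := Real.sqrt_pos.2 h0
  have hn2 : n ^ 2 = η.re ^ 2 + η.im ^ 2 := Real.sq_sqrt h0.le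
  have hpi := Real.pi_pos
  have hx : xm η = Real.pi * n ^ 2 := by rw [hn2, xm_re_im]
  constructor
  · have e : cs = fun η => η.re * (Real.sqrt (η.re ^ 2 + η.im ^ 2))⁻¹ := by
      funext z; simp [cs, div_eq_mul_inv]
    rw [e]
    refine (hr.mul ((hasDerivAt_inv hn0.ne').comp_hasFDerivAt η hs)).congr_fderiv ?_
    refine ContinuousLinearMap.ext fun k => ?_
    simp only [add_apply, smul_apply, smul_eq_mul,
      Complex.reCLM_apply, Complex.imCLM_apply, dtL_apply, sn, hx, ← hn, Pi.add_apply, Function.comp]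
    field_simp
    simp
    linear_combination (2 * k.re) * hn2
  · have e : sn = fun η => η.im * (Real.sqrt (η.re ^ 2 + η.im ^ 2))⁻¹ := by
      funext z; simp [sn, div_eq_mul_inv]
    rw [e]
    refine (hi.mul ((hasDerivAt_inv hn0.ne').comp_hasFDerivAt η hs)).congr_fderiv ?_
    refine ContinuousLinearMap.ext fun k => ?_
    simp only [add_apply, smul_apply, smul_eq_mul,
      Complex.reCLM_apply, Complex.imCLM_apply, dtL_apply, cs, hx, ← hn, Pi.add_apply, Function.comp]
    field_simp
    simp
    linear_combination (2 * k.im) * hn2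

theorem circ_zero : CircFn (fun _ => 0) (fun _ => 0) where
  sm _ _ := contDiffAt_const
  sm' _ _ := contDiffAt_const
  d1 η _ := (hasFDerivAt_const (0 : ℝ) η).congr_fderiv (by simp)
  d2 η _ := ⟨0, (hasFDerivAt_const (0 : ℝ) η).congr_fderiv (by simp)⟩
  hom _ _ _ := rfl
  hom' _ _ _ := rfl

/-- elongation towards the positive axis -/
theorem circ_beta (c : ℝ) : CircFn (fun η => (1 - c) / (2 * Real.pi) * sn η)
    (fun η => (1 - c) * cs η) where
  sm η h := contDiffAt_const.mul (cs_sn_smooth h).2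
  sm' η h := contDiffAt_const.mul (cs_sn_smooth h).1
  d1 η h := by
    refine ((cs_sn_deriv h).2.const_mul _).congr_fderiv ?_
    refine ContinuousLinearMap.ext fun k => ?_
    have := Real.pi_pos
    simp; field_simp
  d2 η h := ⟨(1 - c) * (-(2 * Real.pi * sn η)), by
    refine ((cs_sn_deriv h).1.const_mul _).congr_fderiv ?_
    refine ContinuousLinearMap.ext fun k => ?_
    simp; ring⟩
  hom r η h := by simp only [sn_hom r η h]
  hom' r η h := by simp only [cs_hom r η h]

theorem alpha_den_pos {ρ : ℝ} (h0 : 0 < ρ) (h1 : ρ < 1) (η : ℂ) :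
    0 < 1 + ρ * cs η ∧ 0 < 1 + ρ ^ 2 + 2 * ρ * cs η := by
  have := le_cs η
  constructor <;> nlinarith

theorem circ_alpha {ρ : ℝ} (h0 : 0 < ρ) (h1 : ρ < 1) :
    CircFn (fun η => -(1 / Real.pi) * Real.arctan (ρ * sn η / (1 + ρ * cs η)))
    (fun η => (1 - ρ ^ 2) / (1 + ρ ^ 2 + 2 * ρ * cs η) - 1) where
  sm η h := by
    obtain ⟨s1, s2⟩ := cs_sn_smooth h
    have := (alpha_den_pos h0 h1 η).1
    exact contDiffAt_const.mul (Real.contDiff_arctan.contDiffAt.comp η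
      ((contDiffAt_const.mul s2).div (contDiffAt_const.add (contDiffAt_const.mul s1)) this.ne'))
  sm' η h := by
    obtain ⟨s1, s2⟩ := cs_sn_smooth h
    have := (alpha_den_pos h0 h1 η).2
    exact (contDiffAt_const.div (contDiffAt_const.add (contDiffAt_const.mul s1)) this.ne').sub
      contDiffAt_const
  d1 η h := by
    obtain ⟨s1, s2⟩ := cs_sn_deriv h
    obtain ⟨p1, p2⟩ := alpha_den_pos h0 h1 η
    have hi := (hasDerivAt_inv p1.ne').comp_hasFDerivAt η ((s1.const_mul ρ).const_add 1)
    have hq := (s2.const_mul ρ).mul hi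
    have ha := (Real.hasDerivAt_arctan _).comp_hasFDerivAt η hq
    have hm := ha.const_mul (-(1 / Real.pi))
    have e : (fun η => -(1 / Real.pi) * Real.arctan (ρ * sn η / (1 + ρ * cs η))) =
        fun η => -(1 / Real.pi) * Real.arctan (ρ * sn η * (1 + ρ * cs η)⁻¹) := by
      funext z; rw [div_eq_mul_inv (ρ * sn z)]
    rw [e]
    refine HasFDerivAt.congr_fderiv hm ?_
    refine ContinuousLinearMap.ext fun k => ?_
    have hpi := Real.pi_pos
    have hcs := cs_sq_add_sn_sq h
    have hden : 1 + (ρ * sn η * (1 + ρ * cs η)⁻¹) ^ 2 =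
        (1 + ρ ^ 2 + 2 * ρ * cs η) / (1 + ρ * cs η) ^ 2 := by
      field_simp
      linear_combination (ρ ^ 2) * hcs
    simp only [add_apply, smul_apply, smul_eq_mul,
      Pi.mul_apply, Function.comp, hden]
    have p2' := p2.ne'
    have p1' := p1.ne'
    generalize hQ : 1 + ρ ^ 2 + 2 * ρ * cs η = Q at *
    generalize hW : 1 + ρ * cs η = W at *
    generalize dtL η k = d
    field_simp
    rw [← hW, ← hQ]
    linear_combination (-(2 * ρ ^ 2 * d)) * hcs
  d2 η h := by
    obtain ⟨s1, s2⟩ := cs_sn_deriv h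
    obtain ⟨p1, p2⟩ := alpha_den_pos h0 h1 η
    have hi := (((hasDerivAt_inv p2.ne').comp_hasFDerivAt η
      ((s1.const_mul (2 * ρ)).const_add (1 + ρ ^ 2))).const_mul (1 - ρ ^ 2)).sub_const 1
    refine ⟨(1 - ρ ^ 2) * (-((1 + ρ ^ 2 + 2 * ρ * cs η) ^ 2)⁻¹ * (2 * ρ * (-(2 * Real.pi * sn η)))), ?_⟩
    refine HasFDerivAt.congr_fderiv hi ?_
    refine ContinuousLinearMap.ext fun k => ?_
    simp; ring
  hom r η h := by simp only [cs_hom r η h, sn_hom r η h]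
  hom' r η h := by simp only [cs_hom r η h]

/-! ### The smooth cutoff -/

/-- smooth version of `max y 0` -/
def TT (l y : ℝ) : ℝ := ∫ t in (0 : ℝ)..y, Real.smoothTransition (t / l)

theorem TT_cont (l : ℝ) : Continuous fun t : ℝ => Real.smoothTransition (t / l) :=
  Real.smoothTransition.continuous.comp (continuous_id.div_const l)

theorem TT_deriv (l y : ℝ) : deriv (TT l) y = Real.smoothTransition (y / l) :=
  ((TT_cont l).integral_hasStrictDerivAt 0 y).hasDerivAt.deriv

theorem TT_diff (l : ℝ) : Differentiable ℝ (TT l) := fun y =>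
  ((TT_cont l).integral_hasStrictDerivAt 0 y).hasDerivAt.differentiableAt

theorem TT_smooth (l : ℝ) : ContDiff ℝ (⊤ : ℕ∞) (TT l) := by
  rw [contDiff_infty_iff_deriv]
  refine ⟨TT_diff l, ?_⟩
  have : deriv (TT l) = fun y => Real.smoothTransition (y / l) := funext (TT_deriv l)
  rw [this]
  exact Real.smoothTransition.contDiff.comp (contDiff_id.div_const l)

theorem TT_deriv_nonneg (l y : ℝ) : 0 ≤ deriv (TT l) y := by
  rw [TT_deriv]; exact Real.smoothTransition.nonneg _

theorem TT_deriv_le (l y : ℝ) : deriv (TT l) y ≤ 1 := by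
  rw [TT_deriv]; exact Real.smoothTransition.le_one _

theorem TT_deriv_zero {l y : ℝ} (hl : 0 < l) (hy : y ≤ 0) : deriv (TT l) y = 0 := by
  rw [TT_deriv]; exact Real.smoothTransition.zero_of_nonpos (div_nonpos_of_nonpos_of_nonneg hy hl.le)

theorem TT_deriv_one {l y : ℝ} (hl : 0 < l) (hy : l ≤ y) : deriv (TT l) y = 1 := by
  rw [TT_deriv]; exact Real.smoothTransition.one_of_one_le ((one_le_div hl).2 hy)

theorem TT_mono (l : ℝ) : Monotone (TT l) :=
  monotone_of_deriv_nonneg (TT_diff l) (TT_deriv_nonneg l)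

theorem TT_zero (l : ℝ) : TT l 0 = 0 := by simp [TT]

theorem TT_nonneg {l : ℝ} (hl : 0 < l) (y : ℝ) : 0 ≤ TT l y := by
  rcases le_total 0 y with h | h
  · rw [← TT_zero l]; exact TT_mono l h
  · have : TT l y = ∫ t in (0 : ℝ)..y, (0 : ℝ) := by
      apply intervalIntegral.integral_congr
      intro t ht
      rw [uIcc_of_ge h] at ht
      exact Real.smoothTransition.zero_of_nonpos (div_nonpos_of_nonpos_of_nonneg ht.2 hl.le)
    simp [this]

theorem TT_of_nonpos {l y : ℝ} (hl : 0 < l) (h : y ≤ 0) : TT l y = 0 :=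
  le_antisymm (by rw [← TT_zero l]; exact TT_mono l h) (TT_nonneg hl y)

theorem TT_lip (l : ℝ) {x y : ℝ} (h : x ≤ y) : TT l y - TT l x ≤ y - x := by
  have := Convex.image_sub_le_mul_sub_of_deriv_le (C := 1) convex_univ (TT_diff l).continuous.continuousOn
    (TT_diff l).differentiableOn (fun z _ => TT_deriv_le l z) x trivial y trivial h
  linarith

theorem TT_le {l y : ℝ} (h : 0 ≤ y) : TT l y ≤ y := by
  have := TT_lip l h
  rw [TT_zero] at this
  linarith

theorem TT_ge {l : ℝ} (hl : 0 < l) (y : ℝ) : y - l ≤ TT l y := by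
  rcases le_total y l with h | h
  · linarith [TT_nonneg hl y]
  · have := Convex.mul_sub_le_image_sub_of_le_deriv (C := 1) (convex_Ici l)
      (TT_diff l).continuous.continuousOn (TT_diff l).differentiableOn
      (fun z hz => by
        rw [interior_Ici] at hz
        rw [TT_deriv_one hl (le_of_lt hz)]) l (mem_Ici.2 le_rfl) y h h
    linarith [TT_nonneg hl l]


/-! ### The twist -/

/-- direction as a unit complex number -/
def PH (w : ℂ) : ℂ := (cs w : ℂ) + (sn w : ℂ) * Complex.I

theorem PH_normSq {w : ℂ} (h : w ≠ 0) : Complex.normSq (PH w) = 1 := by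
  rw [Complex.normSq_apply]
  have := cs_sq_add_sn_sq h
  simp [PH]; linarith

theorem PH_hom (r : ℝ) (η : ℂ) (hr : 0 < r) : PH ((r : ℂ) * η) = PH η := by
  simp only [PH, cs_hom r η hr, sn_hom r η hr]

theorem PH_conj {w : ℂ} (h : w ≠ 0) : (starRingEnd ℂ) (PH w) * PH w = 1 := by
  rw [mul_comm, Complex.mul_conj, PH_normSq h]; simp

/-- the (shifted) inverse twist -/
def TW (K : ℝ) (p : ℂ × ℂ) : ℂ × ℂ :=
  (((Real.sqrt ((xm p.1 - xm p.2 + K) / xm p.1) : ℝ) : ℂ) * p.1, PH p.1 * p.2)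

/-- its domain -/
def TWdom (K : ℝ) : Set (ℂ × ℂ) := {p | p.1 ≠ 0 ∧ xm p.2 < xm p.1 + K}

theorem TWdom_open (K : ℝ) : IsOpen (TWdom K) := by
  refine (isOpen_ne.preimage continuous_fst).inter ?_
  exact isOpen_lt (contDiff_xm.continuous.comp continuous_snd)
    ((contDiff_xm.continuous.comp continuous_fst).add continuous_const)

theorem TW_xm {K : ℝ} {p : ℂ × ℂ} (hp : p ∈ TWdom K) :
    xm (TW K p).1 = xm p.1 - xm p.2 + K ∧ xm (TW K p).2 = xm p.2 := by
  have h1 := xm_pos hp.1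
  have h2 := hp.2
  constructor
  · simp only [TW]
    rw [xm_real_mul, Real.sq_sqrt (div_nonneg (by linarith) h1.le), div_mul_cancel₀ _ h1.ne']
  · simp only [TW, xm, Complex.normSq_mul, PH_normSq hp.1, one_mul]

theorem TW_smooth {K : ℝ} {p : ℂ × ℂ} (hp : p ∈ TWdom K) :
    ContDiffAt ℝ (⊤ : ℕ∞) (fun p : ℂ × ℂ => Real.sqrt ((xm p.1 - xm p.2 + K) / xm p.1)) p ∧
    ContDiffAt ℝ (⊤ : ℕ∞) (TW K) p := by
  have hx : ContDiffAt ℝ (⊤ : ℕ∞) (fun p : ℂ × ℂ => xm p.2) p :=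
    (contDiff_xm.comp contDiff_snd).contDiffAt
  have hN : ContDiffAt ℝ (⊤ : ℕ∞) (fun p : ℂ × ℂ => xm p.1) p :=
    (contDiff_xm.comp contDiff_fst).contDiffAt
  have h1 := xm_pos hp.1
  have h2 := hp.2
  have hs := (((hN.sub hx).add contDiffAt_const).div hN h1.ne').sqrt (x := p)
    (div_pos (show 0 < xm p.1 - xm p.2 + K by linarith) h1).ne'
  refine ⟨hs, ?_⟩
  obtain ⟨s1, s2⟩ := cs_sn_smooth hp.1
  have t1 := ContDiffAt.comp (f := Prod.fst) p s1 contDiffAt_fst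
  have t2 := ContDiffAt.comp (f := Prod.fst) p s2 contDiffAt_fst
  have hPH : ContDiffAt ℝ (⊤ : ℕ∞) (fun p : ℂ × ℂ => PH p.1) p :=
    (Complex.ofRealCLM.contDiff.contDiffAt.comp p t1).add
      ((Complex.ofRealCLM.contDiff.contDiffAt.comp p t2).mul contDiffAt_const)
  exact ((Complex.ofRealCLM.contDiff.contDiffAt.comp p hs).mul contDiffAt_fst).prodMk
    (hPH.mul contDiffAt_snd)

theorem TW_injOn (K : ℝ) : Set.InjOn (TW K) (TWdom K) := by
  intro p hp q hq h
  have px := TW_xm hp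
  have qx := TW_xm hq
  rw [h] at px
  have e2 : xm p.2 = xm q.2 := by rw [← px.2, qx.2]
  have e1 : xm p.1 = xm q.1 := by linarith [px.1, qx.1]
  have h1 := (Prod.ext_iff.1 h).1
  have h2 := (Prod.ext_iff.1 h).2
  simp only [TW] at h1 h2
  rw [e1, e2] at h1
  have hc : ((Real.sqrt ((xm q.1 - xm q.2 + K) / xm q.1) : ℝ) : ℂ) ≠ 0 := by
    have : 0 < Real.sqrt ((xm q.1 - xm q.2 + K) / xm q.1) :=
      Real.sqrt_pos.2 (div_pos (by linarith [hq.2]) (xm_pos hq.1))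
    exact_mod_cast this.ne'
  have h3 := mul_left_cancel₀ hc h1
  rw [h3] at h2
  have hp0 : PH q.1 ≠ 0 := by
    rw [← Complex.normSq_pos, PH_normSq hq.1]; norm_num
  exact Prod.ext h3 (mul_left_cancel₀ hp0 h2)

theorem TW_form {K : ℝ} {p : ℂ × ℂ} (hp : p ∈ TWdom K) (h k : ℂ × ℂ) :
    sg2 (fderiv ℝ (TW K) p h) (fderiv ℝ (TW K) p k) = sg2 h k := by
  set g : ℂ × ℂ → ℝ := fun p : ℂ × ℂ => Real.sqrt ((xm p.1 - xm p.2 + K) / xm p.1) with hg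
  have dg : HasFDerivAt g (fderiv ℝ g p) p :=
    ((TW_smooth hp).1.differentiableAt (by simp)).hasFDerivAt
  have hxp := xm_pos hp.1
  have dx : HasFDerivAt (fun p : ℂ × ℂ => xm p.2)
      ((dxL p.2).comp (ContinuousLinearMap.snd ℝ ℂ ℂ)) p :=
    HasFDerivAt.comp (f := Prod.snd) p (hasFDerivAt_xm p.2) hasFDerivAt_snd
  have dN : HasFDerivAt (fun p : ℂ × ℂ => xm p.1)
      ((dxL p.1).comp (ContinuousLinearMap.fst ℝ ℂ ℂ)) p :=
    HasFDerivAt.comp (f := Prod.fst) p (hasFDerivAt_xm p.1) hasFDerivAt_fst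
  have dG2 : HasFDerivAt (fun p : ℂ × ℂ => g p * g p * xm p.1) _ p := (dg.mul dg).mul dN
  have dG : HasFDerivAt (fun p : ℂ × ℂ => xm p.1 - xm p.2 + K) _ p := (dN.sub dx).add_const K
  have hev : (fun p : ℂ × ℂ => xm p.1 - xm p.2 + K) =ᶠ[nhds p]
      (fun p : ℂ × ℂ => g p * g p * xm p.1) := by
    filter_upwards [(TWdom_open K).mem_nhds hp] with q hq
    rw [hg]
    simp only
    rw [Real.mul_self_sqrt (div_nonneg (by linarith [hq.2]) (xm_nonneg _)),
      div_mul_cancel₀ _ (xm_pos hq.1).ne']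
  have huniq := dG.unique (dG2.congr_of_eventuallyEq hev)
  have hdG : ∀ h : ℂ × ℂ, dxL p.1 h.1 - dxL p.2 h.2 =
      2 * g p * fderiv ℝ g p h * xm p.1 + g p * g p * dxL p.1 h.1 := by
    intro h
    have := DFunLike.congr_fun huniq h
    simp at this
    linear_combination this
  obtain ⟨s1, s2⟩ := cs_sn_deriv hp.1
  have t1 := HasFDerivAt.comp (f := Prod.fst) p s1 hasFDerivAt_fst
  have t2 := HasFDerivAt.comp (f := Prod.fst) p s2 hasFDerivAt_fst
  have hPH : HasFDerivAt (fun p : ℂ × ℂ => PH p.1) _ p :=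
    (Complex.ofRealCLM.hasFDerivAt.comp p t1).add
      ((Complex.ofRealCLM.hasFDerivAt.comp p t2).mul (hasFDerivAt_const Complex.I p))
  have dT : HasFDerivAt (TW K) _ p :=
    ((Complex.ofRealCLM.hasFDerivAt.comp p dg).mul hasFDerivAt_fst).prodMk
      (hPH.mul hasFDerivAt_snd)
  have eT : ∀ h, fderiv ℝ (TW K) p h =
      ((g p : ℂ) * h.1 + (fderiv ℝ g p h : ℂ) * p.1,
       PH p.1 * (h.2 + (2 * Real.pi * dtL p.1 h.1 : ℝ) * Complex.I * p.2)) := by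
    intro h
    rw [dT.fderiv]
    refine Prod.ext ?_ ?_
    · simp [mul_comm]
    · simp [PH]
      linear_combination (-(2 * Real.pi * p.2 * (dtL p.1 h.1 : ℂ) * sn p.1)) * Complex.I_sq
  have hxe := xm_re_im p.1
  have hdt : ∀ h : ℂ, 2 * xm p.1 * dtL p.1 h = p.1.re * h.im - p.1.im * h.re := by
    intro h
    rw [dtL_apply, ← mul_assoc, mul_one_div_cancel (by positivity), one_mul]
  have hωdt : ∀ h k : ℂ, h.re * k.im - h.im * k.re =
      dxL p.1 h * dtL p.1 k - dxL p.1 k * dtL p.1 h := by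
    intro h k
    have hx0 : 2 * xm p.1 ≠ 0 := by positivity
    apply mul_left_cancel₀ hx0
    rw [show 2 * xm p.1 * (dxL p.1 h * dtL p.1 k - dxL p.1 k * dtL p.1 h) =
      dxL p.1 h * (2 * xm p.1 * dtL p.1 k) - dxL p.1 k * (2 * xm p.1 * dtL p.1 h) by ring,
      hdt, hdt, dxL_apply, dxL_apply, hxe]
    ring
  have hrotim : ∀ (y z : ℂ), ((starRingEnd ℂ) (PH p.1 * y) * (PH p.1 * z)).im =
      ((starRingEnd ℂ) y * z).im := by
    intro y z
    rw [map_mul]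
    rw [show (starRingEnd ℂ) (PH p.1) * (starRingEnd ℂ) y * (PH p.1 * z) =
      ((starRingEnd ℂ) (PH p.1) * PH p.1) * ((starRingEnd ℂ) y * z) by ring, PH_conj hp.1, one_mul]
  rw [eT, eT]
  simp only [sg2, hrotim]
  have L2 : ((starRingEnd ℂ) ((g p : ℂ) * h.1 + (fderiv ℝ g p h : ℂ) * p.1) *
      ((g p : ℂ) * k.1 + (fderiv ℝ g p k : ℂ) * p.1)).im =
      (dxL p.1 h.1 - dxL p.2 h.2) * dtL p.1 k.1 -
      (dxL p.1 k.1 - dxL p.2 k.2) * dtL p.1 h.1 := by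
    rw [hdG, hdG]
    have e1 := hdt h.1
    have e2 := hdt k.1
    have e3 := hωdt h.1 k.1
    simp only [Complex.mul_im, Complex.mul_re, Complex.conj_re, Complex.conj_im,
      Complex.add_re, Complex.add_im, Complex.ofReal_re, Complex.ofReal_im]
    linear_combination (g p * g p) * e3 - (g p * fderiv ℝ g p h) * e2 + (g p * fderiv ℝ g p k) * e1
  have R1 : ∀ (q : ℂ) (α β : ℝ) (h k : ℂ),
      ((starRingEnd ℂ) (h + (2 * Real.pi * α : ℝ) * Complex.I * q) *
      (k + (2 * Real.pi * β : ℝ) * Complex.I * q)).im =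
      (h.re * k.im - h.im * k.re) + (dxL q h * β - dxL q k * α) := by
    intro q α β h k
    simp only [Complex.mul_im, Complex.mul_re, Complex.conj_re, Complex.conj_im,
      Complex.add_re, Complex.add_im, Complex.ofReal_re, Complex.ofReal_im,
      Complex.I_re, Complex.I_im, dxL_apply]
    ring
  rw [L2, R1]
  have e3 := hωdt h.1 k.1
  simp only [Complex.mul_im, Complex.conj_re, Complex.conj_im]
  linear_combination -e3

theorem TW_SE (K : ℝ) : SE sg2 (TWdom K) (fun p q => q.1 ≠ 0 ∧ xm q.1 = xm p.1 - xm p.2 + K) := by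
  refine ⟨TW K, fun p hp => (TW_smooth hp).2.contDiffWithinAt, TW_injOn K, ?_,
    fun p hp h k => TW_form hp h k⟩
  intro p hp
  have h := (TW_xm hp).1
  refine ⟨?_, h⟩
  intro h0
  rw [h0, xm_zero] at h
  linarith [hp.2]

theorem TW_inv_SE : SE sg2 {p : ℂ × ℂ | p.1 ≠ 0}
    (fun p q => q.1 ≠ 0 ∧ xm q.1 = xm p.1 + xm p.2 ∧ xm q.2 = xm p.2) := by
  have S := (SE.implicit2 (TWdom_open 0) (A := fun p => p) (B := TW 0) contDiffOn_id
    (fun p hp => (TW_smooth hp).2.contDiffWithinAt) (Set.injOn_id _) (TW_injOn 0)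
    (fun m _ h hh => by simpa using hh) (fun m hm h k => by rw [TW_form hm]; simp)).2
  refine S.mono ?_ ?_
  · intro p hp
    have h1 := xm_pos hp
    have h2 := xm_nonneg p.2
    set r := Real.sqrt ((xm p.1 + xm p.2) / xm p.1) with hr
    have hrp : 0 < r := Real.sqrt_pos.2 (div_pos (by linarith) h1)
    have hx1 : xm ((r : ℂ) * p.1) = xm p.1 + xm p.2 := by
      rw [xm_real_mul, hr, Real.sq_sqrt (div_pos (by linarith) h1).le, div_mul_cancel₀ _ h1.ne']
    have hx2 : xm ((starRingEnd ℂ) (PH p.1) * p.2) = xm p.2 := by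
      simp only [xm, Complex.normSq_mul, Complex.normSq_conj, PH_normSq hp, one_mul]
    refine ⟨((r : ℂ) * p.1, (starRingEnd ℂ) (PH p.1) * p.2), ⟨?_, ?_⟩, ?_⟩
    · exact mul_ne_zero (by exact_mod_cast hrp.ne') hp
    · simp only [hx1, hx2]; linarith
    · refine Prod.ext ?_ ?_
      · simp only [TW]
        rw [hx1, hx2, ← mul_assoc, ← Complex.ofReal_mul, hr, ← Real.sqrt_mul (by
          apply div_nonneg <;> linarith), add_sub_cancel_right, add_zero,
          div_mul_div_cancel₀ (by linarith), div_self h1.ne']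
        simp
      · simp only [TW]
        rw [PH_hom r _ hrp, ← mul_assoc, mul_comm (PH p.1), PH_conj hp, one_mul]
  · rintro _ _ hx ⟨m, hm, rfl, rfl⟩
    obtain ⟨e1, e2⟩ := TW_xm hm
    refine ⟨hm.1, by rw [e1, e2]; ring, e2.symm⟩

/-- translations in the second variable -/
theorem trans_SE (d : ℝ) : SE sg2 univ (fun p q => q = (p.1, p.2 + (d : ℂ))) := by
  have hd : ∀ p, HasFDerivAt (fun p : ℂ × ℂ => (p.1, p.2 + (d : ℂ)))
      (ContinuousLinearMap.id ℝ (ℂ × ℂ)) p := by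
    intro p
    refine (hasFDerivAt_fst.prodMk (hasFDerivAt_snd.add_const (d : ℂ))).congr_fderiv ?_
    ext <;> simp
  refine ⟨fun p => (p.1, p.2 + (d : ℂ)), ?_, ?_, fun _ _ => rfl, ?_⟩
  · exact (contDiff_fst.prodMk (contDiff_snd.add contDiff_const)).contDiffOn
  · intro p _ q _ h
    have h1 := (Prod.ext_iff.1 h).1
    have h2 := (Prod.ext_iff.1 h).2
    exact Prod.ext h1 (add_right_cancel h2)
  · intro p _ h k
    rw [(hd p).fderiv]; rfl


/-! ### Geometry of the shift -/

theorem rn_sq (η : ℂ) : ‖η‖ ^ 2 = η.re ^ 2 + η.im ^ 2 := by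
  rw [← Complex.normSq_eq_norm_sq, Complex.normSq_apply]; ring

theorem norm_sqrt (η : ℂ) : Real.sqrt (η.re ^ 2 + η.im ^ 2) = ‖η‖ := by
  rw [← rn_sq, Real.sqrt_sq (norm_nonneg _)]

theorem norm_mul_cs (η : ℂ) : ‖η‖ * cs η = η.re := by
  by_cases h : η = 0
  · simp [h]
  · rw [cs, norm_sqrt, mul_div_cancel₀ _ (norm_pos_iff.2 h).ne']

theorem cs_shift {d : ℝ} (hd : 0 ≤ d) (η : ℂ) : cs (η + ((-d : ℝ) : ℂ)) ≤ cs η := by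
  set θ := η + ((-d : ℝ) : ℂ) with hθ
  have e1 : θ.re = η.re - d := by simp [hθ]; ring
  have e2 : θ.im = η.im := by simp [hθ]
  by_cases h1 : η = 0
  · have : cs θ ≤ 0 := by
      rw [cs, norm_sqrt]
      apply div_nonpos_of_nonpos_of_nonneg _ (norm_nonneg _)
      rw [e1, h1]; simpa using hd
    rw [h1]; simpa [cs] using this
  by_cases h2 : θ = 0
  · have : 0 ≤ cs η := by
      rw [cs]
      apply div_nonneg _ (Real.sqrt_nonneg _)
      rw [h2] at e1
      simp at e1; linarith
    rw [h2]; simpa [cs] using this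
  rw [cs, cs, norm_sqrt, norm_sqrt]
  have p1 := norm_pos_iff.2 h1
  have p2 := norm_pos_iff.2 h2
  have s1 := rn_sq η
  have s2 := rn_sq θ
  rw [e1, e2] at s2
  rw [div_le_div_iff₀ p2 p1, e1]
  rcases le_total η.re 0 with hu | hu
  · have : (-η.re) * ‖θ‖ ≤ (d - η.re) * ‖η‖ := by
      apply (sq_le_sq₀ (by nlinarith) (by nlinarith)).1
      rw [mul_pow, mul_pow, s1, s2]
      have : 0 ≤ d * (d - 2 * η.re) := mul_nonneg hd (by linarith)
      nlinarith [mul_nonneg this (sq_nonneg η.im)]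
    linarith
  · rcases le_total η.re d with hv | hv
    · nlinarith
    · apply (sq_le_sq₀ (by nlinarith) (by nlinarith)).1
      rw [mul_pow, mul_pow, s1, s2]
      have : 0 ≤ d * (2 * η.re - d) := mul_nonneg hd (by linarith)
      nlinarith [mul_nonneg this (sq_nonneg η.im)]

theorem cs_shift_le {d : ℝ} (hd : 0 ≤ d) (η : ℂ) :
    ‖η‖ * (cs η - cs (η + ((-d : ℝ) : ℂ))) ≤ 2 * d := by
  set θ := η + ((-d : ℝ) : ℂ) with hθ
  have e1 : θ.re = η.re - d := by simp [hθ]; ring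
  have a := norm_mul_cs η
  have b := norm_mul_cs θ
  have hn : ‖η‖ ≤ ‖θ‖ + d := by
    have : η = θ + ((d : ℝ) : ℂ) := by simp [hθ]
    rw [this]
    refine (norm_add_le _ _).trans ?_
    simp [abs_of_nonneg hd]
  have hn2 : ‖θ‖ ≤ ‖η‖ + d := by
    refine (norm_add_le _ _).trans ?_
    simp [abs_of_nonneg hd]
  have c1 := cs_le θ
  have c2 := le_cs θ
  have : (‖θ‖ - ‖η‖) * cs θ ≤ d := by
    rcases le_total 0 (cs θ) with h | h <;> nlinarith
  nlinarith

/-- `xm` of the shift. -/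
theorem xm_shift (d : ℝ) (η : ℂ) :
    xm (η + ((-d : ℝ) : ℂ)) = xm η - 2 * Real.pi * η.re * d + Real.pi * d ^ 2 := by
  rw [xm_re_im, xm_re_im]; simp; ring

def be (c : ℝ) (η : ℂ) : ℝ := 1 + (1 - c) * cs η
def al (ρ : ℝ) (η : ℂ) : ℝ := (1 - ρ ^ 2) / (1 + ρ ^ 2 + 2 * ρ * cs η)

theorem be_ge {c : ℝ} (_h0 : 0 ≤ c) (h1 : c ≤ 1) (η : ℂ) : c ≤ be c η := by
  have := le_cs η; unfold be; nlinarith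

theorem be_le {c : ℝ} (h0 : 0 ≤ c) (h1 : c ≤ 1) (η : ℂ) : be c η ≤ 2 := by
  have := cs_le η; unfold be; nlinarith

theorem be_shift {c d : ℝ} (h1 : c ≤ 1) (hd : 0 ≤ d) (η : ℂ) :
    be c (η + ((-d : ℝ) : ℂ)) ≤ be c η := by
  have := cs_shift hd η; unfold be; nlinarith

theorem al_pos {ρ : ℝ} (h0 : 0 < ρ) (h1 : ρ < 1) (η : ℂ) : 0 < al ρ η :=
  div_pos (by nlinarith) (alpha_den_pos h0 h1 η).2

theorem al_ge {ρ : ℝ} (h0 : 0 < ρ) (h1 : ρ < 1) (η : ℂ) : (1 - ρ ^ 2) / 4 ≤ al ρ η := by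
  have := cs_le η
  apply div_le_div_of_nonneg_left (by nlinarith) (alpha_den_pos h0 h1 η).2
  nlinarith

theorem al_shift {ρ d : ℝ} (h0 : 0 < ρ) (h1 : ρ < 1) (hd : 0 ≤ d) (η : ℂ) :
    al ρ η ≤ al ρ (η + ((-d : ℝ) : ℂ)) := by
  have := cs_shift hd η
  apply div_le_div_of_nonneg_left (by nlinarith) (alpha_den_pos h0 h1 _).2
  nlinarith

theorem xm_shift_ge {d : ℝ} (hd : 0 ≤ d) (η : ℂ) :
    (1 - d) * xm η - Real.pi * d ≤ xm (η + ((-d : ℝ) : ℂ)) ∧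
    xm (η + ((-d : ℝ) : ℂ)) ≤ (1 + d) * xm η + Real.pi * d + Real.pi * d ^ 2 := by
  rw [xm_shift, xm_re_im]
  have := Real.pi_pos
  have h1 : 0 ≤ Real.pi * d * ((η.re - 1) ^ 2 + η.im ^ 2) := by positivity
  have h2 : 0 ≤ Real.pi * d * ((η.re + 1) ^ 2 + η.im ^ 2) := by positivity
  have h3 : 0 ≤ Real.pi * d ^ 2 := by positivity
  constructor <;> nlinarith

set_option maxHeartbeats 1600000 in
/-- Claim (a). -/
theorem claimA {N x x' q ε lam κ δ s0 c ρ M : ℝ} {ζ : ℂ}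
    (hε : 0 < ε) (hl : 0 < lam) (hl8 : lam ≤ ε / 8) (hκ : 0 < κ) (hκ4 : κ ≤ 1 / 4)
    (hκq : κ * q ≤ ε / 16) (hδ : 0 < δ) (hδ1 : δ ≤ 1) (hδq : δ ^ 2 * q ≤ ε / 16)
    (hδM : δ * (4 * M + 4 * Real.pi) < κ * ε / 2) (hs0 : 0 < s0) (hs8 : 2 * s0 ≤ ε / 8)
    (hc : 0 < c) (hc1 : c < 1) (hρ : 0 < ρ) (hρ1 : ρ < 1) (hq : 0 < q)
    (hx : 0 ≤ x) (hxN : x ≤ N) (hNM : N ≤ M)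
    (h1 : xm ζ = al ρ ζ * (x - TT lam (x - q)) + be c ζ * TT lam (x - q))
    (h2 : xm (ζ + ((-δ ^ 2 : ℝ) : ℂ)) = (x' - TT s0 (x' - s0)) +
      be c (ζ + ((-δ ^ 2 : ℝ) : ℂ)) *
        (TT s0 (x' - s0) - TT lam (x' - (2 * s0 + TT lam (N - q)))) +
      ((1 - κ) * al ρ (ζ + ((-δ ^ 2 : ℝ) : ℂ)) + κ) *
        TT lam (x' - (2 * s0 + TT lam (N - q)))) : x' < N + ε := by
  by_contra! hcon
  set θ := ζ + ((-δ ^ 2 : ℝ) : ℂ) with hθ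
  set P := TT lam (N - q) with hP
  set E := TT lam (x - q) with hE
  set E3 := TT s0 (x' - s0) with hE3
  set E4 := TT lam (x' - (2 * s0 + P)) with hE4
  have hd : 0 ≤ δ ^ 2 := sq_nonneg δ
  have hP0 : 0 ≤ P := TT_nonneg hl _
  have hE0 : 0 ≤ E := TT_nonneg hl _
  have hEP : E ≤ P := TT_mono _ (by linarith)
  have hPN : P ≤ N := by
    rcases le_total 0 (N - q) with h | h
    · linarith [TT_le (l := lam) h]
    · rw [hP, TT_of_nonpos hl h]; linarith
  have hPm : N - P ≤ q + lam := by have := TT_ge hl (N - q); linarith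
  have hxE : x - E ≤ N - P := by
    have := TT_lip lam (show x - q ≤ N - q by linarith); linarith
  have k3 : x' - 2 * s0 ≤ E3 := by have := TT_ge hs0 (x' - s0); linarith
  have k3' : E3 ≤ x' := by
    have := TT_le (l := s0) (show 0 ≤ x' - s0 by linarith); linarith
  have k4 : E4 ≤ x' - (2 * s0 + P) := TT_le (by linarith)
  have k4' : x' - (2 * s0 + P) - lam ≤ E4 := TT_ge hl _
  have hm : 0 ≤ N - P := by linarith
  have hE4m : N - P + ε / 2 ≤ E4 := by linarith
  have a1 := al_pos hρ hρ1 ζ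
  have a2 := al_pos hρ hρ1 θ
  have a12 : al ρ ζ ≤ al ρ θ := by
    have := al_shift hρ hρ1 hd ζ
    rwa [hθ]
  have b1 := be_ge hc.le hc1.le ζ
  have b2 := be_ge hc.le hc1.le θ
  have b1' := be_le hc.le hc1.le ζ
  have X2 : be c θ * P + ((1 - κ) * al ρ θ + κ) * (N - P + ε / 2) ≤ xm θ := by
    rw [h2]
    have t1 : be c θ * P ≤ be c θ * (E3 - E4) :=
      mul_le_mul_of_nonneg_left (by linarith) (by linarith)
    have t2 : ((1 - κ) * al ρ θ + κ) * (N - P + ε / 2) ≤ ((1 - κ) * al ρ θ + κ) * E4 :=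
      mul_le_mul_of_nonneg_left hE4m (add_nonneg (mul_nonneg (by linarith) a2.le) hκ.le)
    linarith only [t1, t2, k3, hs0, hP0, k3']
  have X1 : xm ζ ≤ al ρ θ * (N - P) + be c ζ * P := by
    rw [h1]
    have t1 : al ρ ζ * (x - E) ≤ al ρ ζ * (N - P) := mul_le_mul_of_nonneg_left hxE a1.le
    have t2 : al ρ ζ * (N - P) ≤ al ρ θ * (N - P) := mul_le_mul_of_nonneg_right a12 hm
    have t3 : be c ζ * E ≤ be c ζ * P := mul_le_mul_of_nonneg_left hEP (by linarith)
    linarith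
  have hπ := Real.pi_pos
  have X2κ : κ * ε / 2 ≤ xm θ := by
    have t1 : 0 ≤ be c θ * P := mul_nonneg (by linarith) hP0
    have t2 : 0 ≤ (1 - κ) * al ρ θ * (N - P + ε / 2) :=
      mul_nonneg (mul_nonneg (by linarith) a2.le) (by linarith)
    have t3 : 0 ≤ κ * (N - P) := mul_nonneg hκ.le hm
    linarith only [X2, t1, t2, t3]
  have sh := (xm_shift_ge hd ζ).2
  rw [← hθ] at sh
  have hδδ : δ ^ 2 ≤ δ := by nlinarith only [hδ, hδ1]
  have hMpos : 0 ≤ M := by linarith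
  rcases le_total ‖ζ‖ δ with hsm | hbig
  · have e : xm ζ ≤ Real.pi * δ ^ 2 := by
      rw [xm_eq_norm]
      exact mul_le_mul_of_nonneg_left (pow_le_pow_left₀ (norm_nonneg _) hsm 2) hπ.le
    have e2 : (1 + δ ^ 2) * xm ζ ≤ 2 * (Real.pi * δ ^ 2) := by
      have h0 := xm_nonneg ζ
      have h1 : δ ^ 2 * xm ζ ≤ 1 * xm ζ := mul_le_mul_of_nonneg_right (by linarith) h0
      linarith only [h1, e]
    have e3 : Real.pi * (δ ^ 2) ^ 2 ≤ Real.pi * δ ^ 2 :=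
      mul_le_mul_of_nonneg_left (by nlinarith only [hδδ, hδ1, hd]) hπ.le
    have e4 : Real.pi * δ ^ 2 ≤ Real.pi * δ := mul_le_mul_of_nonneg_left hδδ hπ.le
    have e5 : 0 ≤ δ * M := mul_nonneg hδ.le hMpos
    linarith only [e2, e3, e4, e5, sh, X2κ, hδM]
  · have hb : be c ζ - be c θ ≤ 2 * δ := by
      have s := cs_shift_le hd ζ
      rw [← hθ] at s
      have s0' := cs_shift hd ζ
      rw [← hθ] at s0'
      have : δ * (cs ζ - cs θ) ≤ δ * (2 * δ) := by nlinarith only [s, s0', hbig]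
      have := le_of_mul_le_mul_left this hδ
      unfold be
      nlinarith only [this, hc, hc1, s0']
    have f1 : (1 + δ ^ 2) * xm ζ ≤ (1 + δ ^ 2) * (al ρ θ * (N - P) + be c ζ * P) :=
      mul_le_mul_of_nonneg_left X1 (by linarith)
    have f2 : (1 + δ ^ 2) * (N - P) ≤ (1 - κ) * (N - P + ε / 2) := by
      have g1 : δ ^ 2 * (N - P) ≤ δ ^ 2 * (q + lam) := mul_le_mul_of_nonneg_left hPm hd
      have g2 : κ * (N - P) ≤ κ * (q + lam) := mul_le_mul_of_nonneg_left hPm hκ.le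
      have g3 : δ ^ 2 * lam ≤ lam := by nlinarith only [hδδ, hδ1, hl]
      have g4 : κ * lam ≤ lam / 4 := by nlinarith only [hκ4, hl]
      have g5 : κ * ε ≤ ε / 4 := by nlinarith only [hκ4, hε]
      linarith
    have f3 := mul_le_mul_of_nonneg_left f2 a2.le
    have f4 : (be c ζ - be c θ) * P ≤ 2 * δ * M := by
      have : (be c ζ - be c θ) * P ≤ 2 * δ * P := mul_le_mul_of_nonneg_right hb hP0
      have : 2 * δ * P ≤ 2 * δ * M := mul_le_mul_of_nonneg_left (by linarith) (by linarith)
      linarith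
    have f5 : δ ^ 2 * (be c ζ * P) ≤ δ * (2 * M) := by
      apply mul_le_mul hδδ _ (mul_nonneg (by linarith) hP0) hδ.le
      exact mul_le_mul b1' (by linarith) hP0 (by norm_num)
    have e3 : Real.pi * (δ ^ 2) ^ 2 ≤ Real.pi * δ ^ 2 :=
      mul_le_mul_of_nonneg_left (by nlinarith only [hδδ, hδ1, hd]) hπ.le
    have e4 : Real.pi * δ ^ 2 ≤ Real.pi * δ := mul_le_mul_of_nonneg_left hδδ hπ.le
    have t3 : 0 ≤ κ * (N - P) := mul_nonneg hκ.le hm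
    have e5 : 0 < Real.pi * δ := by positivity
    linarith only [f1, f3, f4, f5, e3, e4, t3, e5, sh, X2, hδM]

set_option maxHeartbeats 1600000 in
/-- Claim (b). -/
theorem claimB {N x x' p q ε lam κ δ s0 c ρ M k : ℝ} {ζ : ℂ}
    (hε : 0 < ε) (hl : 0 < lam) (hl8 : lam ≤ ε / 8)
    (hδ : 0 < δ) (hδ1 : δ ≤ 1)
    (hδM : δ ^ 2 * M ≤ ε / 8) (hδπ : Real.pi * δ ^ 2 ≤ ε / 8)
    (hs0 : 0 < s0) (hs8 : 2 * s0 ≤ ε / 8) (hsδ : 2 * s0 < Real.pi * (δ ^ 2) ^ 2 / 12)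
    (hc : 0 < c) (hc1 : c < 1) (hcM : c * M ≤ Real.pi * (δ ^ 2) ^ 2 / 12)
    (hρ : 0 < ρ) (hρ1 : ρ < 1) (hk : k = (1 - ρ ^ 2) * q / (2 * Real.pi * ρ))
    (hkδ : k ≤ (δ ^ 2) ^ 2 / 4) (hkM : 8 * k / (δ ^ 2) ^ 2 * M ≤ Real.pi * (δ ^ 2) ^ 2 / 12)
    (hp : 0 < p) (hq : 0 < q)
    (hx : 0 ≤ x) (hx' : 0 ≤ x') (hxN : x ≤ N) (hNM : N ≤ M)
    (h1 : xm ζ = al ρ ζ * (x - TT lam (x - q)) + be c ζ * TT lam (x - q))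
    (h2 : xm (ζ + ((-δ ^ 2 : ℝ) : ℂ)) = (x' - TT s0 (x' - s0)) +
      be c (ζ + ((-δ ^ 2 : ℝ) : ℂ)) *
        (TT s0 (x' - s0) - TT lam (x' - (2 * s0 + TT lam (N - q)))) +
      ((1 - κ) * al ρ (ζ + ((-δ ^ 2 : ℝ) : ℂ)) + κ) *
        TT lam (x' - (2 * s0 + TT lam (N - q))))
    (hor : N - x < p ∨ x < q) : N - p - q - ε < x' := by
  by_contra! hcon
  have hd : 0 < δ ^ 2 := by positivity
  have hd1 : δ ^ 2 ≤ 1 := by nlinarith only [hδ, hδ1]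
  set d := δ ^ 2 with hdd
  set θ := ζ + ((-d : ℝ) : ℂ) with hθ
  have hP := TT_ge hl (N - q)
  have e4 : TT lam (x' - (2 * s0 + TT lam (N - q))) = 0 := TT_of_nonpos hl (by linarith)
  rw [e4] at h2
  set E := TT lam (x - q) with hE
  set E3 := TT s0 (x' - s0) with hE3
  have k3 : x' - 2 * s0 ≤ E3 := by have := TT_ge hs0 (x' - s0); linarith
  have k3' : E3 ≤ x' := by
    rcases le_total 0 (x' - s0) with h | h
    · have := TT_le (l := s0) h; linarith
    · rw [hE3, TT_of_nonpos hs0 h]; exact hx'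
  have b2 := be_ge hc.le hc1.le θ
  have b1 := be_ge hc.le hc1.le ζ
  have hπ := Real.pi_pos
  have X2 : xm θ ≤ 2 * s0 + be c θ * x' := by
    rw [h2]
    have : be c θ * E3 ≤ be c θ * x' := mul_le_mul_of_nonneg_left k3' (by linarith)
    linarith
  have a1 := al_pos hρ hρ1 ζ
  rcases lt_or_ge x q with hxq | hxq
  · have hE0 : E = 0 := TT_of_nonpos hl (by linarith)
    rw [hE0] at h1
    have h1' : xm ζ ≤ al ρ ζ * q := by
      have : al ρ ζ * x ≤ al ρ ζ * q := mul_le_mul_of_nonneg_left hxq.le a1.le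
      linarith
    have den := (alpha_den_pos hρ hρ1 ζ).2
    have h1'' : xm ζ * (1 + ρ ^ 2 + 2 * ρ * cs ζ) ≤ (1 - ρ ^ 2) * q := by
      have := mul_le_mul_of_nonneg_right h1' den.le
      have e : al ρ ζ * q * (1 + ρ ^ 2 + 2 * ρ * cs ζ) = (1 - ρ ^ 2) * q := by
        rw [al, mul_right_comm, div_mul_cancel₀ _ den.ne']
      linarith
    have hcs := norm_mul_cs ζ
    set r := ‖ζ‖ with hr
    have hr0 : 0 ≤ r := norm_nonneg _
    have hkk : r * (r + ζ.re) ≤ k := by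
      rw [hk, le_div_iff₀ (by positivity)]
      rw [xm_eq_norm, ← hr] at h1''
      have t : 0 ≤ Real.pi * r ^ 2 * (1 - ρ) ^ 2 := by positivity
      have t2 : Real.pi * r ^ 2 * (2 * ρ * cs ζ) = 2 * Real.pi * ρ * (r * ζ.re) := by
        rw [← hcs]; ring
      linarith only [h1'', t, t2]
    have hrs := rn_sq ζ
    rw [← hr] at hrs
    have hur : |ζ.re| ≤ r := Complex.abs_re_le_norm ζ
    have hur1 := (abs_le.1 hur).1
    have hur2 := (abs_le.1 hur).2
    have hv : ζ.im ^ 2 ≤ 2 * k := by nlinarith only [hrs, hkk, hur1, hur2, hr0]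
    have hu : ζ.re ≤ d / 2 := by
      by_contra! hu
      nlinarith only [hu, hd, hur2, hkk, hkδ]
    have θre : θ.re = ζ.re - d := by simp [hθ]; ring
    have θim : θ.im = ζ.im := by simp [hθ]
    have hcs2 := norm_mul_cs θ
    have hrs2 := rn_sq θ
    rw [θre] at hcs2
    rw [θre, θim] at hrs2
    have hR0 : 0 ≤ ‖θ‖ := norm_nonneg _
    set R := ‖θ‖ with hR
    have hRd : d ^ 2 / 4 ≤ R ^ 2 := by nlinarith only [hrs2, hu, hd]
    have hRp : 0 < R := by
      rcases hR0.eq_or_lt with h | h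
      · rw [← h] at hRd; nlinarith only [hRd, hd]
      · exact h
    have hk0 : 0 ≤ k := by
      rw [hk]; apply div_nonneg (mul_nonneg (by nlinarith only [hρ, hρ1]) hq.le) (by positivity)
    have hC : 1 + cs θ ≤ 8 * k / d ^ 2 := by
      rw [le_div_iff₀ (by positivity)]
      have w1 : R * (1 + cs θ) * (R + (d - ζ.re)) = ζ.im ^ 2 := by
        have : R * (1 + cs θ) = R - (d - ζ.re) := by linarith only [hcs2]
        rw [this]; linarith only [hrs2]
      have w2 : 0 ≤ 1 + cs θ := by linarith [le_cs θ]
      have w3 : (1 + cs θ) * R ^ 2 ≤ ζ.im ^ 2 := by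
        rw [← w1]
        have : 0 ≤ R * (1 + cs θ) * (d - ζ.re) :=
          mul_nonneg (mul_nonneg hR0 w2) (by linarith only [hu, hd])
        linarith only [this]
      have w4 : (1 + cs θ) * (d ^ 2 / 4) ≤ (1 + cs θ) * R ^ 2 :=
        mul_le_mul_of_nonneg_left hRd w2
      linarith only [w3, w4, hv]
    have hB : be c θ ≤ c + 8 * k / d ^ 2 := by
      unfold be
      have w2 : 0 ≤ 1 + cs θ := by linarith [le_cs θ]
      nlinarith only [hC, hc, hc1, w2]
    have hX2 : Real.pi * (d ^ 2 / 4) ≤ xm θ := by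
      rw [xm_eq_norm]; exact mul_le_mul_of_nonneg_left hRd hπ.le
    have hlast : be c θ * x' ≤ (c + 8 * k / d ^ 2) * M :=
      mul_le_mul hB (by linarith) hx' (by positivity)
    linarith only [hlast, hX2, X2, hsδ, hcM, hkM]
  · have hx1 : N - x < p := by
      rcases hor with h | h
      · exact h
      · linarith
    have kE := TT_ge hl (x - q)
    rw [← hE] at kE
    have kE' : E ≤ x := by
      have := TT_le (l := lam) (show 0 ≤ x - q by linarith)
      linarith
    have X1 : be c ζ * (N - p - q - lam) ≤ xm ζ := by
      rw [h1]
      have t1 : 0 ≤ al ρ ζ * (x - E) := mul_nonneg a1.le (by linarith)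
      have t2 : be c ζ * (N - p - q - lam) ≤ be c ζ * E :=
        mul_le_mul_of_nonneg_left (by linarith) (by linarith)
      linarith
    have b12 : be c θ ≤ be c ζ := be_shift hc1.le hd.le ζ
    have X2' : xm θ ≤ 2 * s0 + be c ζ * (N - p - q - ε) := by
      have : be c θ * x' ≤ be c ζ * (N - p - q - ε) :=
        mul_le_mul b12 hcon hx' (by linarith)
      linarith
    rcases le_or_gt ζ.re 0 with hu | hu
    · have := xm_shift d ζ
      rw [← hθ] at this
      have t : 0 ≤ 2 * Real.pi * (-ζ.re) * d := by
        apply mul_nonneg (mul_nonneg (by positivity) (by linarith)) hd.le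
      have t2 : 0 ≤ be c ζ * (ε - lam) := mul_nonneg (by linarith) (by linarith)
      have t3 : 0 < Real.pi * d ^ 2 := by positivity
      linarith only [this, t, t2, X2', X1, hsδ, t3]
    · have hb1 : 1 ≤ be c ζ := by
        have : 0 ≤ cs ζ := div_nonneg hu.le (Real.sqrt_nonneg _)
        unfold be
        nlinarith only [this, hc1]
      have sh := (xm_shift_ge hd.le ζ).1
      rw [← hθ] at sh
      have t1 : (1 - d) * (be c ζ * (N - p - q - lam)) ≤ (1 - d) * xm ζ :=
        mul_le_mul_of_nonneg_left X1 (by linarith)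
      have hdN : d * (N - p - q - lam) ≤ ε / 8 := by
        have : d * (N - p - q - lam) ≤ d * M := mul_le_mul_of_nonneg_left (by linarith) hd.le
        linarith
      have t2 : 1 * (ε - lam - d * (N - p - q - lam)) ≤
          be c ζ * (ε - lam - d * (N - p - q - lam)) :=
        mul_le_mul_of_nonneg_right hb1 (by linarith)
      linarith only [t1, t2, hdN, sh, X2', hs8, hl8, hδπ, hε]

/-! ### The two families of deformations used -/

/-- First family: with `b1 = α`, `E1 = id`, `b2 = β - α`. -/
theorem famA {ρ c lam q : ℝ} (hρ : 0 < ρ) (hρ1 : ρ < 1) (hc : 0 < c) (hc1 : c < 1)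
    (hl : 0 < lam) (hq : 0 < q) :
    SE sg2 {p : ℂ × ℂ | p.2 ≠ 0} (fun z w => w.2 ≠ 0 ∧ xm w.1 = xm z.1 ∧
      xm w.2 = al ρ w.2 * (xm z.2 - TT lam (xm z.2 - q)) + be c w.2 * TT lam (xm z.2 - q)) := by
  have H : PD _ _ _ _ (fun x => x) (TT lam) (fun _ => q) :=
    { c1 := circ_alpha hρ hρ1
      c2 := (circ_beta c).lin (circ_alpha hρ hρ1) 1 (-1)
      e1 := contDiff_id
      e2 := TT_smooth lam
      hs := contDiff_const
      E10 := rfl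
      E20 := fun N _ => TT_of_nonpos hl (by linarith)
      hD := by
        refine ⟨min c ((1 - ρ ^ 2) / 4), lt_min hc (by nlinarith), ?_⟩
        intro η _ x N _ _
        have t0 := TT_deriv_nonneg lam (x - q)
        have t1 := TT_deriv_le lam (x - q)
        set T := deriv (TT lam) (x - q)
        have e : deriv (fun x : ℝ => x) x = 1 := by simp
        rw [e]
        have a := al_ge hρ hρ1 η
        have b := be_ge hc.le hc1.le η
        have m1 := min_le_left c ((1 - ρ ^ 2) / 4)
        have m2 := min_le_right c ((1 - ρ ^ 2) / 4)
        set m := min c ((1 - ρ ^ 2) / 4)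
        rw [al] at a
        rw [be] at b
        nlinarith }
  refine (H.main (Or.inl rfl)).2.mono le_rfl ?_
  rintro z hz w ⟨h1, h2, _, h4⟩
  refine ⟨h1, h2, h4.trans ?_⟩
  rw [PG, al, be]; ring

/-- Second family. -/
theorem famB {ρ c lam q κ s0 : ℝ} (hρ : 0 < ρ) (hρ1 : ρ < 1) (hc : 0 < c) (hc1 : c < 1)
    (hl : 0 < lam) (hκ : 0 < κ) (hκ1 : κ < 1) (hs0 : 0 < s0) :
    SE sg2 univ (fun z w => xm w.1 = xm z.1 ∧
      xm z.2 = (xm w.2 - TT s0 (xm w.2 - s0)) +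
      be c z.2 *
        (TT s0 (xm w.2 - s0) - TT lam (xm w.2 - (2 * s0 + TT lam (xm z.1 - q)))) +
      ((1 - κ) * al ρ z.2 + κ) *
        TT lam (xm w.2 - (2 * s0 + TT lam (xm z.1 - q)))) := by
  have H : PD _ _ _ _ (fun x => TT s0 (x - s0)) (TT lam) (fun N => 2 * s0 + TT lam (N - q)) :=
    { c1 := circ_beta c
      c2 := (circ_alpha hρ hρ1).lin (circ_beta c) (1 - κ) (-1)
      e1 := (TT_smooth s0).comp (contDiff_id.sub contDiff_const)
      e2 := TT_smooth lam
      hs := contDiff_const.add ((TT_smooth lam).comp (contDiff_id.sub contDiff_const))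
      E10 := TT_of_nonpos hs0 (by linarith)
      E20 := fun N _ => TT_of_nonpos hl (by linarith [TT_nonneg hl (N - q)])
      hD := by
        refine ⟨min c κ, lt_min hc hκ, ?_⟩
        intro η _ x N _ _
        rw [deriv_comp_sub_const]
        have m1 := min_le_left c κ
        have m2 := min_le_right c κ
        have a := al_pos hρ hρ1 η
        have b := be_ge hc.le hc1.le η
        have a' : 0 ≤ (1 - κ) * al ρ η := mul_nonneg (by linarith) a.le
        rw [al] at a'
        rw [be] at b
        have t0 := TT_deriv_nonneg s0 (x - s0)
        have t1 := TT_deriv_le s0 (x - s0)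
        have r0 := TT_deriv_nonneg lam (x - (2 * s0 + TT lam (N - q)))
        have r1 := TT_deriv_le lam (x - (2 * s0 + TT lam (N - q)))
        have hor : deriv (TT lam) (x - (2 * s0 + TT lam (N - q))) = 0 ∨
            deriv (TT s0) (x - s0) = 1 := by
          rcases le_total (x - (2 * s0 + TT lam (N - q))) 0 with h | h
          · exact Or.inl (TT_deriv_zero hl h)
          · exact Or.inr (TT_deriv_one hs0 (by linarith [TT_nonneg hl (N - q)]))
        set T1 := deriv (TT s0) (x - s0)
        set T2 := deriv (TT lam) (x - (2 * s0 + TT lam (N - q)))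
        set m := min c κ
        rcases hor with h | h
        · rw [h]; nlinarith
        · rw [h]; nlinarith }
  have hV : PV (fun x => TT s0 (x - s0)) (TT lam) (fun N => 2 * s0 + TT lam (N - q)) :=
    ⟨s0, hs0, fun x hx => TT_of_nonpos hs0 (by linarith), fun y hy => TT_of_nonpos hl hy,
      fun N _ => by linarith [TT_nonneg hl (N - q)]⟩
  refine (H.main (Or.inr ⟨rfl, hV⟩)).1.mono le_rfl ?_
  rintro z hz w ⟨h1, h2, _, h4⟩
  refine ⟨h2, h4.trans ?_⟩
  rw [PG, al, be]; ring

/-- Choice of small constants. -/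
theorem exists_small (a : ℝ) {b : ℝ} (hb : 0 < b) : ∃ t : ℝ, 0 < t ∧ t < 1 / 4 ∧
    ∀ s, 0 ≤ s → s ≤ t → s * a < b ∧ s < b := by
  refine ⟨min (1 / 8) (b / (2 * (|a| + 1))), lt_min (by norm_num) (by positivity),
    lt_of_le_of_lt (min_le_left _ _) (by norm_num), ?_⟩
  intro s hs hst
  have h1 := hst.trans (min_le_right _ _)
  rw [le_div_iff₀ (by positivity)] at h1
  have := le_abs_self a
  have := abs_nonneg a
  constructor <;> nlinarith

theorem consts {p q ε M : ℝ} (hp : 0 < p) (hq : 0 < q) (hε : 0 < ε) (hM : 0 < M) :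
    ∃ lam κ δ s0 c ρ : ℝ, 0 < lam ∧ lam ≤ ε / 8 ∧ 0 < κ ∧ κ ≤ 1 / 4 ∧ κ * q ≤ ε / 16 ∧
    0 < δ ∧ δ ≤ 1 ∧ δ ^ 2 * q ≤ ε / 16 ∧ δ * (4 * M + 4 * Real.pi) < κ * ε / 2 ∧
    δ ^ 2 * M ≤ ε / 8 ∧ Real.pi * δ ^ 2 ≤ ε / 8 ∧ 0 < s0 ∧ 2 * s0 ≤ ε / 8 ∧
    2 * s0 < Real.pi * (δ ^ 2) ^ 2 / 12 ∧ 0 < c ∧ c < 1 ∧ c * M ≤ Real.pi * (δ ^ 2) ^ 2 / 12 ∧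
    0 < ρ ∧ ρ < 1 ∧ (1 - ρ ^ 2) * q / (2 * Real.pi * ρ) ≤ (δ ^ 2) ^ 2 / 4 ∧
    8 * ((1 - ρ ^ 2) * q / (2 * Real.pi * ρ)) / (δ ^ 2) ^ 2 * M ≤ Real.pi * (δ ^ 2) ^ 2 / 12 := by
  have hπ := Real.pi_pos
  obtain ⟨κ, hκ, hκ4, hκq⟩ := exists_small q (show 0 < ε / 16 by positivity)
  have hκε : 0 < κ * ε / 2 := by positivity
  obtain ⟨δ1, h1, h1', h1''⟩ := exists_small (4 * M + 4 * Real.pi) hκε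
  obtain ⟨δ2, h2, h2', h2''⟩ := exists_small (q + M + Real.pi) (show 0 < ε / 16 by positivity)
  set δ := min δ1 δ2 with hδ
  have hδ0 : 0 < δ := lt_min h1 h2
  have hδ1 : δ < 1 / 4 := (min_le_left _ _).trans_lt h1'
  have hδδ : δ ^ 2 ≤ δ := by nlinarith only [hδ0, hδ1]
  have hA := (h1'' δ hδ0.le (min_le_left _ _)).1
  have hB := (h2'' (δ ^ 2) (sq_nonneg _) (hδδ.trans (min_le_right _ _))).1
  have q1 : 0 < δ ^ 2 * q := by positivity
  have q2 : 0 < δ ^ 2 * M := by positivity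
  have q3 : 0 < δ ^ 2 * Real.pi := by positivity
  set D := (δ ^ 2) ^ 2 with hD
  have hD0 : 0 < D := by positivity
  obtain ⟨c, hc, hc', hc''⟩ := exists_small M (show 0 < Real.pi * D / 12 by positivity)
  have hb : 0 < min (D / 4) (Real.pi * D / 12 * (D / (8 * M))) :=
    lt_min (by positivity) (by positivity)
  obtain ⟨t, ht, ht', ht''⟩ := exists_small q hb
  have htq := (ht'' t ht.le le_rfl).1
  have hk : (1 - (1 - t) ^ 2) * q / (2 * Real.pi * (1 - t)) ≤ t * q := by
    rw [div_le_iff₀ (mul_pos (by positivity) (by linarith))]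
    have : 3 < Real.pi := Real.pi_gt_three
    have a1 : 1 - (1 - t) ^ 2 ≤ 2 * t := by nlinarith only [ht]
    have a2 : 2 ≤ 2 * Real.pi * (1 - t) := by nlinarith only [this, ht']
    have a3 : (1 - (1 - t) ^ 2) * q ≤ 2 * t * q := mul_le_mul_of_nonneg_right a1 hq.le
    have a4 : t * q * 2 ≤ t * q * (2 * Real.pi * (1 - t)) :=
      mul_le_mul_of_nonneg_left a2 (by positivity)
    linarith
  set k := (1 - (1 - t) ^ 2) * q / (2 * Real.pi * (1 - t))
  obtain ⟨s0, hs, _, hs''⟩ := exists_small 1 (show 0 < min (ε / 16) (Real.pi * D / 24) from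
    lt_min (by positivity) (by positivity))
  have hs2 := (hs'' s0 hs.le le_rfl).2
  have hs3 := lt_min_iff.1 hs2
  refine ⟨ε / 8, κ, δ, s0, c, 1 - t, by positivity, le_rfl, hκ, hκ4.le,
    (hκq κ hκ.le le_rfl).1.le, hδ0, by linarith, by linarith, hA, by linarith, by linarith, hs,
    by linarith [hs3.1], by linarith [hs3.2], hc, by linarith, (hc'' c hc.le le_rfl).1.le,
    by linarith, by linarith, ?_, ?_⟩
  · exact (hk.trans htq.le).trans (min_le_left _ _)
  · have := (hk.trans htq.le).trans (min_le_right _ _)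
    rw [div_mul_eq_mul_div, div_le_iff₀ hD0]
    rw [show Real.pi * D / 12 * (D / (8 * M)) = (Real.pi * D / 12 * D) / (8 * M) by ring,
      le_div_iff₀ (by positivity)] at this
    linarith

/-- The key two-slot lemma. -/
theorem key {p q ε M : ℝ} (hp : 0 < p) (hq : 0 < q) (hε : 0 < ε) :
    SE sg2 {z : ℂ × ℂ | (z.1 ≠ 0 ∧ z.2 ≠ 0) ∧ (xm z.1 < M ∧ xm z.2 < M)}
      (fun z w => w.1 ≠ 0 ∧ xm w.1 < xm z.1 + xm z.2 + ε ∧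
        (xm z.1 < p ∨ xm z.2 < q → xm w.1 < p + q + ε)) := by
  rcases le_or_gt M 0 with hM | hM
  · refine (SE.id (σ := sg2) {z : ℂ × ℂ | (z.1 ≠ 0 ∧ z.2 ≠ 0) ∧ (xm z.1 < M ∧ xm z.2 < M)}).mono
      le_rfl ?_
    rintro z ⟨_, h, _⟩ w _
    linarith [xm_nonneg z.1]
  have hε2 : 0 < ε / 2 := by positivity
  obtain ⟨lam, κ, δ, s0, c, ρ, k1, k2, k3, k4, k5, k6, k7, k8, k9, k10, k11, k12, k13, k14, k15,
    k16, k17, k18, k19, k20, k21⟩ := consts hp hq hε2 (show 0 < 2 * M by positivity)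
  have cx : Continuous xm := contDiff_xm.continuous
  set U : Set (ℂ × ℂ) := {z : ℂ × ℂ | (z.1 ≠ 0 ∧ z.2 ≠ 0) ∧ (xm z.1 < M ∧ xm z.2 < M)} with hU
  have oU : IsOpen U :=
    ((isOpen_ne.preimage continuous_fst).inter (isOpen_ne.preimage continuous_snd)).inter
      ((isOpen_lt (cx.comp continuous_fst) continuous_const).inter
        (isOpen_lt (cx.comp continuous_snd) continuous_const))
  have S1 := TW_inv_SE.mono (V := U) (S := fun z a => a.1 ≠ 0 ∧ a.2 ≠ 0 ∧
      xm a.1 = xm z.1 + xm z.2 ∧ xm a.2 = xm z.2) (fun z hz => hz.1.1) (by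
    rintro z hz a ⟨h1, h2, h3⟩
    refine ⟨h1, ?_, h2, h3⟩
    rintro h0
    rw [h0, xm_zero] at h3
    exact (xm_pos hz.1.2).ne h3)
  have S2 := SE.comp oU (isOpen_ne.preimage continuous_snd) S1
    (famA k18 k19 k15 k16 k1 hq) (fun x _ y h => h.2.1)
  have S3 := SE.comp oU isOpen_univ S2 (trans_SE (-δ ^ 2)) (fun _ _ _ _ => trivial)
  have S4 := SE.comp oU isOpen_univ S3
    (famB (q := q) k18 k19 k15 k16 k1 k3 (by linarith) k12) (fun _ _ _ _ => trivial)
  have S4' := S4.mono (S := fun z f => f ∈ TWdom (ε / 2) ∧ xm f.1 = xm z.1 + xm z.2 ∧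
      (xm z.1 < p ∨ xm z.2 < q → xm z.1 + xm z.2 - p - q - ε / 2 < xm f.2)) le_rfl (by
    rintro z hz f ⟨e, ⟨b, ⟨a, ⟨a1, a2, a3, a4⟩, b1, b2, b3⟩, rfl⟩, f1, f2⟩
    simp only at f1 f2
    have hN : xm f.1 = xm z.1 + xm z.2 := by rw [f1, b2, a3]
    have hN' : xm b.1 = xm z.1 + xm z.2 := by rw [b2, a3]
    rw [hN'] at f2
    rw [a4] at b3
    have z1 := xm_nonneg z.1
    have z2 := xm_nonneg z.2
    have hz3 := hz.2.1
    have hz4 := hz.2.2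
    refine ⟨⟨?_, ?_⟩, hN, ?_⟩
    · rintro h0
      rw [h0, xm_zero] at hN
      linarith [xm_pos hz.1.1]
    · rw [hN]
      exact claimA hε2 k1 k2 k3 k4 k5 k6 k7 k8 k9 k12 k13 k15 k16 k18 k19 hq z2 (by linarith)
        (by linarith) b3 f2
    · intro hor
      exact claimB hε2 k1 k2 k6 k7 k10 k11 k12 k13 k14 k15 k16 k17 k18 k19 rfl k20 k21 hp hq z2
        (xm_nonneg _) (by linarith) (by linarith) b3 f2
        (hor.imp (fun h => by linarith) id))
  have S5 := SE.comp oU (TWdom_open (ε / 2)) S4' (TW_SE (ε / 2)) (fun _ _ _ h => h.1)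
  refine S5.mono le_rfl ?_
  rintro z hz w ⟨f, ⟨hf1, hf2, hf3⟩, w1, w2⟩
  refine ⟨w1, ?_, fun hor => ?_⟩
  · have := xm_nonneg f.2
    rw [w2, hf2]; linarith
  · have := hf3 hor
    rw [w2, hf2]; linarith

/-! ### Traynor planar map -/

theorem famC {c s0 : ℝ} (hc : 0 < c) (hc1 : c < 1) (hs0 : 0 < s0) :
    SE sg2 univ (fun z w => w.1 = z.1 ∧
      xm w.2 = (xm z.2 - TT s0 (xm z.2 - s0)) + be c w.2 * TT s0 (xm z.2 - s0)) := by
  have H : PD _ _ _ _ (fun x => TT s0 (x - s0)) (TT 1) (fun _ => s0) :=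
    { c1 := circ_beta c
      c2 := circ_zero
      e1 := (TT_smooth s0).comp (contDiff_id.sub contDiff_const)
      e2 := TT_smooth 1
      hs := contDiff_const
      E10 := TT_of_nonpos hs0 (by linarith)
      E20 := fun N _ => TT_of_nonpos one_pos (by linarith)
      hD := by
        refine ⟨c, hc, ?_⟩
        intro η _ x N _ _
        rw [deriv_comp_sub_const]
        have b := be_ge hc.le hc1.le η
        rw [be] at b
        have t0 := TT_deriv_nonneg s0 (x - s0)
        have t1 := TT_deriv_le s0 (x - s0)
        nlinarith }
  have hV : PV (fun x => TT s0 (x - s0)) (TT 1) (fun _ => s0) :=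
    ⟨s0, hs0, fun x hx => TT_of_nonpos hs0 (by linarith), fun y hy => TT_of_nonpos one_pos hy,
      fun N _ => le_rfl⟩
  refine (H.main (Or.inr ⟨rfl, hV⟩)).2.mono le_rfl ?_
  rintro z hz w ⟨h1, h2, h3, h4⟩
  refine ⟨h3 (by simp), h4.trans ?_⟩
  rw [PG, be]; ring

theorem famD {c : ℝ} (hc : 0 < c) (hc1 : c < 1) :
    SE sg2 {p : ℂ × ℂ | p.2 ≠ 0} (fun z w => w.1 = z.1 ∧ w.2 ≠ 0 ∧
      xm z.2 = be c z.2 * xm w.2) := by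
  have H : PD _ _ _ _ (fun x => x) (TT 1) (fun _ => 1) :=
    { c1 := circ_beta c
      c2 := circ_zero
      e1 := contDiff_id
      e2 := TT_smooth 1
      hs := contDiff_const
      E10 := rfl
      E20 := fun N _ => TT_of_nonpos one_pos (by linarith)
      hD := by
        refine ⟨c, hc, ?_⟩
        intro η _ x N _ _
        have b := be_ge hc.le hc1.le η
        rw [be] at b
        have e : deriv (fun x : ℝ => x) x = 1 := by simp
        rw [e]
        linarith }
  refine (H.main (Or.inl rfl)).1.mono le_rfl ?_
  rintro z hz w ⟨h1, h2, h3, h4⟩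
  refine ⟨h3 (by simp), h1, h4.trans ?_⟩
  rw [PG, be]; ring

/-- Traynor trick. -/
theorem traynor {M ε : ℝ} (hε : 0 < ε) :
    SE sg1 {z : ℂ | xm z < M} (fun z w => 0 < xm w ∧ xm w < xm z + ε) := by
  have cx : Continuous xm := contDiff_xm.continuous
  have oU : IsOpen {z : ℂ | xm z < M} := isOpen_lt cx continuous_const
  suffices S : SE sg2 {p : ℂ × ℂ | p.2 ∈ {z : ℂ | xm z < M}} (fun p q => q.1 = p.1 ∧
      0 < xm q.2 ∧ xm q.2 < xm p.2 + ε) by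
    exact (SE.planar oU S (fun _ _ h => h.1)).mono le_rfl (fun _ _ _ h => h.2)
  set V : Set (ℂ × ℂ) := {p : ℂ × ℂ | p.2 ∈ {z : ℂ | xm z < M}} with hV
  have oV : IsOpen V := oU.preimage continuous_snd
  have hπ := Real.pi_pos
  obtain ⟨d, hd, hd4, hd''⟩ := exists_small (|M| + ε + Real.pi) (show 0 < ε / 4 by positivity)
  have hdM := (hd'' d hd.le le_rfl).1
  have hD : 0 < Real.pi * d ^ 2 / 2 := by positivity
  obtain ⟨c, hc, hc4, hc''⟩ := exists_small |M| hD
  have hcM := (hc'' c hc.le le_rfl).1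
  have hc1 : c < 1 := by linarith
  obtain ⟨s0, hs0, _, hs''⟩ := exists_small 2
    (show 0 < min (min (Real.pi * d ^ 2 / 2) (c * ε)) (ε / 4) from
      lt_min (lt_min (by positivity) (by positivity)) (by positivity))
  have hs := (hs'' s0 hs0.le le_rfl).1
  have s3 := (lt_min_iff.1 hs).2
  have s2 := (lt_min_iff.1 (lt_min_iff.1 hs).1).2
  have s1 := (lt_min_iff.1 (lt_min_iff.1 hs).1).1
  have S1 := SE.mono (famC hc hc1 hs0) (subset_univ V) (fun _ _ _ h => h)
  have S2 := SE.comp oV isOpen_univ S1 (trans_SE d) (fun _ _ _ _ => trivial)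
  have hbd : ∀ x : ℝ, 0 ≤ x → ∀ b : ℝ, 0 ≤ b → (x - TT s0 (x - s0)) + b * TT s0 (x - s0) ≤
      2 * s0 + b * x := by
    intro x hx b hb
    have k3 := TT_ge hs0 (x - s0)
    have k3' : TT s0 (x - s0) ≤ x := by
      rcases le_total 0 (x - s0) with h | h
      · have := TT_le (l := s0) h; linarith
      · rw [TT_of_nonpos hs0 h]; exact hx
    have := mul_le_mul_of_nonneg_left k3' hb
    linarith
  have S3 := SE.comp oV (isOpen_ne.preimage continuous_snd) S2 (famD hc hc1) (by
    rintro z hz w ⟨y, ⟨_, h2⟩, rfl⟩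
    change y.2 + (d : ℂ) ≠ 0
    intro h0
    have hy : y.2 = ((-d : ℝ) : ℂ) := by push_cast; linear_combination h0
    have h3 := hbd (xm z.2) (xm_nonneg _) (be c y.2) (hc.le.trans (be_ge hc.le hc1.le _))
    rw [← h2, hy] at h3
    have e1 : xm ((-d : ℝ) : ℂ) = Real.pi * d ^ 2 := by rw [xm_re_im]; simp
    have e2 : be c ((-d : ℝ) : ℂ) = c := by
      rw [be, cs, norm_sqrt]
      simp only [Complex.ofReal_re, Complex.norm_real, Real.norm_eq_abs, abs_neg, abs_of_pos hd]
      field_simp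
      ring
    rw [e1, e2] at h3
    have hz' : xm z.2 < M := hz
    have : c * xm z.2 ≤ c * |M| :=
      mul_le_mul_of_nonneg_left (hz'.le.trans (le_abs_self M)) hc.le
    linarith only [this, h3, s1, hcM])
  refine S3.mono le_rfl ?_
  rintro z hz w ⟨_, ⟨y, ⟨h1, h2⟩, rfl⟩, w1, w2, w3⟩
  refine ⟨w1.trans h1, xm_pos w2, ?_⟩
  simp only at w3
  by_contra! hcon
  set η := y.2 + (d : ℂ) with hη
  have hy : y.2 = η + ((-d : ℝ) : ℂ) := by rw [hη]; push_cast; ring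
  have hb := be_ge hc.le hc1.le η
  have h3 := hbd (xm z.2) (xm_nonneg _) (be c y.2) (hc.le.trans (be_ge hc.le hc1.le _))
  rw [← h2, hy] at h3
  have hb2 := be_shift (c := c) hc1.le hd.le η
  have x0 := xm_nonneg z.2
  have h4 := mul_le_mul_of_nonneg_right hb2 x0
  have h5 : be c η * (xm z.2 + ε) ≤ be c η * xm w.2 :=
    mul_le_mul_of_nonneg_left hcon (by linarith)
  have sh := xm_shift d η
  rcases le_or_gt η.re (d / 2) with hu | hu
  · have t : 0 ≤ Real.pi * d * (d - 2 * η.re) := mul_nonneg (by positivity) (by linarith)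
    have t2 : c * ε ≤ be c η * ε := mul_le_mul_of_nonneg_right hb hε.le
    linarith only [t, t2, sh, h3, h4, h5, w3, s2]
  · have hb1 : 1 ≤ be c η := by
      have : 0 ≤ cs η := div_nonneg (by linarith) (Real.sqrt_nonneg _)
      unfold be
      nlinarith only [this, hc1]
    have sh' := (xm_shift_ge hd.le η).1
    have t1 : (1 - d) * (be c η * (xm z.2 + ε)) ≤ (1 - d) * xm η :=
      mul_le_mul_of_nonneg_left (by linarith) (by linarith)
    have hz' : xm z.2 < M := hz
    have t2 : d * xm z.2 ≤ d * |M| :=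
      mul_le_mul_of_nonneg_left (hz'.le.trans (le_abs_self M)) hd.le
    have t4 : 0 < d * Real.pi := by positivity
    have t5 : 0 ≤ d * |M| := by positivity
    have t6 : 0 ≤ d * ε := by positivity
    have t3 : 1 * (ε - d * (xm z.2 + ε)) ≤ be c η * (ε - d * (xm z.2 + ε)) :=
      mul_le_mul_of_nonneg_right hb1 (by linarith only [hdM, t2, t4, hε])
    linarith only [t1, t2, t3, sh', h3, h4, s3, hdM, t4, t5, t6, hε]

/-! ### Transfer to `n` dimensions -/

theorem SE.transfer {n : ℕ} {i j : Fin n} (hij : i ≠ j) {U : Set (ℂ × ℂ)} (hU : IsOpen U)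
    {R : ℂ × ℂ → ℂ × ℂ → Prop} (H : SE sg2 U R) :
    SE (stdSymplecticForm n) {z | (z i, z j) ∈ U}
      (fun z w => R (z i, z j) (w i, w j) ∧ ∀ k, k ≠ i → k ≠ j → w k = z k) := by
  classical
  obtain ⟨f, h1, h2, h3, h4⟩ := H
  set L : (Fin n → ℂ) →L[ℝ] ℂ × ℂ :=
    (ContinuousLinearMap.proj (R := ℝ) (φ := fun _ : Fin n => ℂ) i).prod
      (ContinuousLinearMap.proj (R := ℝ) (φ := fun _ : Fin n => ℂ) j) with hL
  have hLa : ∀ z, L z = (z i, z j) := fun z => rfl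
  set F : (Fin n → ℂ) → (Fin n → ℂ) := fun z k =>
    if k = i then (f (L z)).1 else if k = j then (f (L z)).2 else z k with hF
  have Fi : ∀ z, F z i = (f (L z)).1 := fun z => by simp [hF]
  have Fj : ∀ z, F z j = (f (L z)).2 := fun z => by simp [hF, hij.symm]
  have Fk : ∀ z k, k ≠ i → k ≠ j → F z k = z k := fun z k a b => by simp [hF, a, b]
  have hpair : ∀ z, (F z i, F z j) = f (L z) := fun z => by rw [Fi, Fj]
  set D : Set (Fin n → ℂ) := {z | (z i, z j) ∈ U} with hD
  have oD : IsOpen D := hU.preimage L.continuous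
  have cL : ContDiffOn ℝ (⊤ : ℕ∞) (fun z => f (L z)) D :=
    h1.comp L.contDiff.contDiffOn (fun z hz => hz)
  refine ⟨F, ?_, ?_, ?_, ?_⟩
  · rw [contDiffOn_pi]
    intro k
    by_cases ki : k = i
    · simp only [hF, ki, if_true]
      exact contDiff_fst.comp_contDiffOn cL
    · by_cases kj : k = j
      · simp only [hF, ki, kj, if_true, if_false, hij.symm]
        exact contDiff_snd.comp_contDiffOn cL
      · simp only [hF, ki, kj, if_false]
        exact (contDiff_apply ℝ ℂ k).contDiffOn
  · intro z hz w hw hzw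
    have e : f (L z) = f (L w) := by rw [← hpair, ← hpair, hzw]
    have e2 := h2 hz hw e
    rw [Prod.mk.injEq] at e2
    funext k
    by_cases ki : k = i
    · rw [ki]; exact e2.1
    · by_cases kj : k = j
      · rw [kj]; exact e2.2
      · rw [← Fk z k ki kj, ← Fk w k ki kj, hzw]
  · intro z hz
    refine ⟨?_, fun k a b => Fk z k a b⟩
    rw [hpair]
    exact h3 _ hz
  · intro z hz u v
    have df : HasFDerivAt f (fderiv ℝ f (L z)) (L z) :=
      ((h1.contDiffAt (hU.mem_nhds hz)).differentiableAt (by simp)).hasFDerivAt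
    have dfL : HasFDerivAt (fun z => f (L z)) ((fderiv ℝ f (L z)).comp L) z :=
      df.comp z L.hasFDerivAt
    have dF : DifferentiableAt ℝ F z := by
      rw [differentiableAt_pi]
      intro k
      by_cases ki : k = i
      · simp only [hF, ki, if_true]
        exact dfL.differentiableAt.fst
      · by_cases kj : k = j
        · simp only [hF, ki, kj, if_true, if_false, hij.symm]
          exact dfL.differentiableAt.snd
        · simp only [hF, ki, kj, if_false]
          exact differentiableAt_apply k z
    have comp : ∀ k h, fderiv ℝ F z h k = fderiv ℝ (fun z => F z k) z h := by
      intro k h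
      have := (hasFDerivAt_pi'.1 dF.hasFDerivAt k).fderiv
      rw [this]; rfl
    have ci : ∀ h, fderiv ℝ F z h i = (fderiv ℝ f (L z) (h i, h j)).1 := by
      intro h
      rw [comp, show (fun z => F z i) = fun z => (f (L z)).1 from funext Fi, dfL.fst.fderiv]; rfl
    have cj : ∀ h, fderiv ℝ F z h j = (fderiv ℝ f (L z) (h i, h j)).2 := by
      intro h
      rw [comp, show (fun z => F z j) = fun z => (f (L z)).2 from funext Fj, dfL.snd.fderiv]; rfl
    have ck : ∀ k, k ≠ i → k ≠ j → ∀ h, fderiv ℝ F z h k = h k := by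
      intro k a b h
      rw [comp, show (fun z => F z k) = fun z => z k from funext fun z => Fk z k a b,
        (hasFDerivAt_apply k z).fderiv]; rfl
    have key := h4 (L z) hz (u i, u j) (v i, v j)
    unfold sg2 at key
    unfold stdSymplecticForm
    rw [← sub_eq_zero, ← Finset.sum_sub_distrib]
    rw [Finset.sum_eq_add i j hij]
    · rw [ci, ci, cj, cj]
      simp only at key
      linarith
    · intro k _ hk
      rw [ck k hk.1 hk.2, ck k hk.1 hk.2, sub_self]
    · simp
    · simp

theorem SE.product {n : ℕ} {U : Set ℂ} (hU : IsOpen U) {R : ℂ → ℂ → Prop} (H : SE sg1 U R) :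
    SE (stdSymplecticForm n) {z | ∀ i, z i ∈ U} (fun z w => ∀ i, R (z i) (w i)) := by
  obtain ⟨f, h1, h2, h3, h4⟩ := H
  refine ⟨fun z k => f (z k), ?_, ?_, fun z hz i => h3 _ (hz i), ?_⟩
  · rw [contDiffOn_pi]
    intro k
    exact h1.comp (contDiff_apply ℝ ℂ k).contDiffOn (fun z hz => hz k)
  · intro z hz w hw h
    funext k
    exact h2 (hz k) (hw k) (congrFun h k)
  · intro z hz u v
    have df : ∀ k, HasFDerivAt (fun z : Fin n → ℂ => f (z k))
        ((fderiv ℝ f (z k)).comp (ContinuousLinearMap.proj (R := ℝ) (φ := fun _ : Fin n => ℂ) k)) z :=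
      fun k => HasFDerivAt.comp z
        ((h1.contDiffAt (hU.mem_nhds (hz k))).differentiableAt (by simp)).hasFDerivAt
        (hasFDerivAt_apply k z)
    have := (hasFDerivAt_pi.2 df).fderiv
    rw [this]
    unfold stdSymplecticForm
    apply Finset.sum_congr rfl
    intro k _
    exact h4 (z k) (hz k) (u k) (v k)

theorem open_box {n : ℕ} (M : ℝ) :
    IsOpen {z : Fin n → ℂ | (∀ i, z i ≠ 0) ∧ ∀ i, xm (z i) < M} := by
  have cx : Continuous xm := contDiff_xm.continuous
  simp only [Set.ofPred_and, Set.ofPred_forall]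
  refine (isOpen_iInter_of_finite fun i => ?_).inter (isOpen_iInter_of_finite fun i => ?_)
  · exact isOpen_ne.preimage (continuous_apply i)
  · exact isOpen_lt (cx.comp (continuous_apply i)) continuous_const

theorem collapse_aux {n : ℕ} [NeZero n] (p : Fin n → ℝ) (hp : ∀ i, 0 < p i) (M : ℝ)
    (S : Finset (Fin n)) : (0 : Fin n) ∉ S → ∀ ε : ℝ, 0 < ε → ∃ M' : ℝ,
    SE (stdSymplecticForm n) {z : Fin n → ℂ | (∀ i, z i ≠ 0) ∧ ∀ i, xm (z i) < M}
      (fun z w => w 0 ≠ 0 ∧ xm (w 0) < M' ∧ (∀ j, j ∉ S → j ≠ 0 → w j = z j) ∧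
        ((∃ i, (i = 0 ∨ i ∈ S) ∧ xm (z i) < p i) → xm (w 0) < p 0 + ∑ j ∈ S, p j + ε)) := by
  classical
  induction S using Finset.induction_on with
  | empty =>
    intro _ ε hε
    refine ⟨M, (SE.id _).mono le_rfl ?_⟩
    rintro z hz w rfl
    refine ⟨hz.1 0, hz.2 0, fun _ _ _ => rfl, ?_⟩
    rintro ⟨i, hi, h⟩
    have : i = 0 := by simpa using hi
    rw [this] at h
    simp; linarith
  | insert a S ha ih =>
    intro h0 ε hε
    have ha0 : (0 : Fin n) ≠ a := fun h => h0 (by simp [h])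
    have hS0 : (0 : Fin n) ∉ S := fun h => h0 (Finset.mem_insert_of_mem h)
    obtain ⟨M', H⟩ := ih hS0 (ε / 2) (by positivity)
    have hP : 0 < p 0 + ∑ j ∈ S, p j + ε / 2 := by
      have := Finset.sum_nonneg (fun j (_ : j ∈ S) => (hp j).le)
      linarith [hp 0]
    have K := key (M := max M M') hP (hp a) (show 0 < ε / 2 by positivity)
    have cx : Continuous xm := contDiff_xm.continuous
    have oU : IsOpen {z : ℂ × ℂ | (z.1 ≠ 0 ∧ z.2 ≠ 0) ∧ (xm z.1 < max M M' ∧ xm z.2 < max M M')} :=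
      ((isOpen_ne.preimage continuous_fst).inter (isOpen_ne.preimage continuous_snd)).inter
        ((isOpen_lt (cx.comp continuous_fst) continuous_const).inter
          (isOpen_lt (cx.comp continuous_snd) continuous_const))
    have K' := SE.transfer ha0 oU K
    have C := SE.comp (open_box M) (oU.preimage
        ((continuous_apply (0 : Fin n)).prodMk (continuous_apply a))) H K' (by
      rintro z hz w ⟨w1, w2, w3, w4⟩
      have wa : w a = z a := w3 a ha ha0.symm
      exact ⟨⟨w1, by change w a ≠ 0; rw [wa]; exact hz.1 a⟩,
        lt_of_lt_of_le w2 (le_max_right _ _),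
        by change xm (w a) < _; rw [wa]; exact lt_of_lt_of_le (hz.2 a) (le_max_left _ _)⟩)
    refine ⟨M' + M + ε, C.mono le_rfl ?_⟩
    rintro z hz y ⟨w, ⟨w1, w2, w3, w4⟩, ⟨y1, y2, y3⟩, y4⟩
    have wa : w a = z a := w3 a ha ha0.symm
    simp only at y1 y2 y3
    rw [wa] at y2 y3
    refine ⟨y1, by linarith [hz.2 a], ?_, ?_⟩
    · intro j hj hj0
      have j1 : j ≠ a := fun h => hj (by simp [h])
      have j2 : j ∉ S := fun h => hj (Finset.mem_insert_of_mem h)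
      rw [y4 j hj0 j1, w3 j j2 hj0]
    · rintro ⟨i, hi, hlt⟩
      rw [Finset.sum_insert ha]
      have : xm (y 0) < p 0 + ∑ j ∈ S, p j + ε / 2 + p a + ε / 2 := by
        apply y3
        rcases hi with hi | hi
        · exact Or.inl (w4 ⟨i, Or.inl hi, hlt⟩)
        · rcases Finset.mem_insert.1 hi with hi | hi
          · right; rw [← hi]; exact hlt
          · exact Or.inl (w4 ⟨i, Or.inr hi, hlt⟩)
      linarith

theorem collapse {n : ℕ} [NeZero n] (p : Fin n → ℝ) (hp : ∀ i, 0 < p i) (M : ℝ) {ε : ℝ}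
    (hε : 0 < ε) :
    SE (stdSymplecticForm n) {z : Fin n → ℂ | (∀ i, z i ≠ 0) ∧ ∀ i, xm (z i) < M}
      (fun z w => (∃ i, xm (z i) < p i) → xm (w 0) < ∑ j, p j + ε) := by
  classical
  obtain ⟨M', H⟩ := collapse_aux p hp M (Finset.univ.erase 0) (by simp) ε hε
  refine H.mono le_rfl ?_
  rintro z hz w ⟨_, _, _, h⟩ ⟨i, hi⟩
  rw [← Finset.add_sum_erase _ _ (Finset.mem_univ (0 : Fin n))]
  refine h ⟨i, ?_, hi⟩
  by_cases h0 : i = 0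
  · exact Or.inl h0
  · right; simp [h0]

/-! ### Conclusion -/

theorem SE.embeds {n : ℕ} {W U V : Set (Fin n → ℂ)} {R : (Fin n → ℂ) → (Fin n → ℂ) → Prop}
    (H : SE (stdSymplecticForm n) W R) (hW : IsOpen W) (hUW : U ⊆ W) (hU : UniqueDiffOn ℝ U)
    (hR : ∀ x ∈ U, ∀ y, R x y → y ∈ V) : SymplecticEmbeds n U V := by
  obtain ⟨f, h1, h2, h3, h4⟩ := H
  refine ⟨f, h1.mono hUW, h2.mono hUW, fun x hx => hR x hx _ (h3 x (hUW hx)), ?_⟩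
  intro x hx u v
  have hd : DifferentiableAt ℝ f x :=
    (h1.contDiffAt (hW.mem_nhds (hUW hx))).differentiableAt (by simp)
  rw [hd.fderivWithin (hU x hx)]
  exact h4 x (hUW hx) u v

theorem toricMoment_apply {n : ℕ} (z : Fin n → ℂ) (i : Fin n) : toricMoment n z i = xm (z i) := rfl

theorem toricMoment_continuous (n : ℕ) : Continuous (toricMoment n) :=
  continuous_pi fun i => contDiff_xm.continuous.comp (continuous_apply i)

theorem X_open (n : ℕ) (Ω : Set (Fin n → ℝ)) : IsOpen (toricDomain n (intPos n Ω)) := by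
  apply IsOpen.preimage (toricMoment_continuous n)
  refine isOpen_interior.inter ?_
  simp only [Set.ofPred_forall]
  exact isOpen_iInter_of_finite fun i => isOpen_lt continuous_const (continuous_apply i)

theorem pi_sqrt {s : ℝ} (hs : 0 < s) : Real.pi * (Real.sqrt (s / Real.pi)) ^ 2 = s := by
  have := Real.pi_pos
  rw [Real.sq_sqrt (by positivity), mul_div_cancel₀ _ this.ne']

theorem sqrt_pi_pos {s : ℝ} (hs : 0 < s) : 0 < Real.sqrt (s / Real.pi) :=
  Real.sqrt_pos.2 (div_pos hs Real.pi_pos)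

theorem ofReal_le_of {a : ℝ≥0∞} {t : ℝ} (h : ∀ s, 0 < s → s < t → ENNReal.ofReal s ≤ a) :
    ENNReal.ofReal t ≤ a := by
  by_contra! hc
  obtain ⟨s, h1, h2⟩ := ENNReal.lt_iff_exists_nnreal_btwn.1 hc
  have hs : 0 < (s : ℝ) := by
    have : (0 : ℝ≥0∞) < s := lt_of_le_of_lt zero_le h1
    exact_mod_cast this
  have hst : (s : ℝ) < t := by
    rw [← ENNReal.ofReal_coe_nnreal] at h2
    exact (ENNReal.ofReal_lt_ofReal_iff_of_nonneg s.2).1 h2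
  have := h s hs hst
  rw [ENNReal.ofReal_coe_nnreal] at this
  exact absurd h1 (not_lt.2 this)

theorem le_ofReal_of {a : ℝ≥0∞} {t : ℝ} (ht : 0 < t)
    (h : ∀ s, t < s → a ≤ ENNReal.ofReal s) : a ≤ ENNReal.ofReal t := by
  by_contra! hc
  obtain ⟨s, h1, h2⟩ := ENNReal.lt_iff_exists_nnreal_btwn.1 hc
  have hst : t < (s : ℝ) := by
    rw [← ENNReal.ofReal_coe_nnreal] at h1
    exact (ENNReal.ofReal_lt_ofReal_iff_of_nonneg ht.le).1 h1
  have := h s hst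
  rw [ENNReal.ofReal_coe_nnreal] at this
  exact absurd h2 (not_lt.2 this)

theorem eq_of_dichotomy {a b : ℝ≥0∞}
    (h : ∀ t : ℝ, 0 < t → (ENNReal.ofReal t ≤ a ∧ ENNReal.ofReal t ≤ b) ∨
      (a ≤ ENNReal.ofReal t ∧ b ≤ ENNReal.ofReal t)) : a = b := by
  have aux : ∀ a b : ℝ≥0∞, (∀ t : ℝ, 0 < t → (ENNReal.ofReal t ≤ a ∧ ENNReal.ofReal t ≤ b) ∨
      (a ≤ ENNReal.ofReal t ∧ b ≤ ENNReal.ofReal t)) → a ≤ b := by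
    intro a b h
    by_contra! hc
    obtain ⟨s, h1, h2⟩ := ENNReal.lt_iff_exists_nnreal_btwn.1 hc
    have hs : 0 < (s : ℝ) := by
      have : (0 : ℝ≥0∞) < s := lt_of_le_of_lt zero_le h1
      exact_mod_cast this
    have := h s hs
    rw [ENNReal.ofReal_coe_nnreal] at this
    rcases this with h | h
    · exact absurd h1 (not_lt.2 h.2)
    · exact absurd h2 (not_lt.2 h.1)
  exact le_antisymm (aux a b h) (aux b a fun t ht => (h t ht).imp And.symm And.symm)

theorem mem_X_of_open {n : ℕ} {Ω O : Set (Fin n → ℝ)} (hO : IsOpen O) (hOΩ : O ⊆ Ω)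
    {w : Fin n → ℂ} (hw : ∀ i, 0 < xm (w i)) (hwO : (fun i => xm (w i)) ∈ O) :
    w ∈ toricDomain n (intPos n Ω) :=
  ⟨interior_maximal hOΩ hO hwO, hw⟩

theorem traynor_prod (n : ℕ) (M : ℝ) {ε : ℝ} (hε : 0 < ε) :
    SE (stdSymplecticForm n) {z : Fin n → ℂ | ∀ i, xm (z i) < M}
      (fun z w => ∀ i, 0 < xm (w i) ∧ xm (w i) < xm (z i) + ε) :=
  SE.product (U := {z : ℂ | xm z < M}) (isOpen_lt contDiff_xm.continuous continuous_const)
    (traynor hε)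

theorem open_polydisc (n : ℕ) (M : ℝ) : IsOpen {z : Fin n → ℂ | ∀ i, xm (z i) < M} := by
  simp only [Set.ofPred_forall]
  exact isOpen_iInter_of_finite fun i =>
    isOpen_lt (contDiff_xm.continuous.comp (continuous_apply i)) continuous_const

theorem ball_lower {n : ℕ} [NeZero n] {Ω : Set (Fin n → ℝ)} {t : ℝ}
    (h : ∀ x : Fin n → ℝ, (∀ i, 0 ≤ x i) → ∑ i, x i ≤ t → x ∈ Ω)
    {c : Set (Fin n → ℂ) → ℝ≥0∞} (hc : IsNormalizedCapacity n c) :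
    ENNReal.ofReal t ≤ c (toricDomain n (intPos n Ω)) := by
  apply ofReal_le_of
  intro s hs hst
  have hn : (0 : ℝ) < n := by exact_mod_cast Nat.pos_of_ne_zero (NeZero.ne n)
  have hc3 := (hc.2.2 _ (sqrt_pi_pos hs)).1
  rw [pi_sqrt hs] at hc3
  rw [← hc3]
  apply hc.1
  have hball : ∀ z ∈ euclideanBall n (Real.sqrt (s / Real.pi)), ∑ i, xm (z i) < s := by
    intro z hz
    have hz' : ∑ j, Complex.normSq (z j) < Real.sqrt (s / Real.pi) ^ 2 := hz
    have := mul_lt_mul_of_pos_left hz' Real.pi_pos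
    rw [pi_sqrt hs, Finset.mul_sum] at this
    exact this
  have hε : 0 < (t - s) / n := div_pos (by linarith) hn
  refine (traynor_prod n t hε).embeds (open_polydisc n t) ?_ ?_ ?_
  · intro z hz i
    have h1 := hball z hz
    have h2 := Finset.single_le_sum (f := fun i => xm (z i)) (fun j _ => xm_nonneg (z j))
      (Finset.mem_univ i)
    linarith
  · apply IsOpen.uniqueDiffOn
    exact isOpen_lt (continuous_finsetSum _ fun i _ =>
      Complex.continuous_normSq.comp (continuous_apply i)) continuous_const
  · intro z hz w hw
    have h1 := hball z hz
    have h2 : ∑ i, xm (w i) < t := by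
      calc ∑ i, xm (w i) ≤ ∑ i, (xm (z i) + (t - s) / n) :=
            Finset.sum_le_sum fun i _ => (hw i).2.le
        _ = ∑ i, xm (z i) + (t - s) := by
            rw [Finset.sum_add_distrib]; simp; field_simp
        _ < t := by linarith
    refine mem_X_of_open (O := {x | (∀ i, 0 < x i) ∧ ∑ i, x i < t}) ?_ ?_ (fun i => (hw i).1)
      ⟨fun i => (hw i).1, h2⟩
    · simp only [Set.ofPred_and, Set.ofPred_forall]
      refine (isOpen_iInter_of_finite fun i =>
        isOpen_lt continuous_const (continuous_apply i)).inter ?_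
      exact isOpen_lt (continuous_finsetSum _ fun i _ => continuous_apply i) continuous_const
    · rintro x ⟨h1, h2⟩
      exact h x (fun i => (h1 i).le) h2.le

theorem ball_upper {n : ℕ} [NeZero n] {Ω : Set (Fin n → ℝ)} (hΩ : IsMonotoneDomain n Ω) {t : ℝ}
    (ht : 0 < t) {p : Fin n → ℝ} (hp : ∀ i, 0 ≤ p i) (hpt : ∑ i, p i ≤ t) (hpΩ : p ∉ Ω)
    {c : Set (Fin n → ℂ) → ℝ≥0∞} (hc : IsNormalizedCapacity n c) :
    c (toricDomain n (intPos n Ω)) ≤ ENNReal.ofReal t := by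
  apply le_ofReal_of ht
  intro s hts
  have hs : 0 < s := ht.trans hts
  have hn : (0 : ℝ) < n := by exact_mod_cast Nat.pos_of_ne_zero (NeZero.ne n)
  obtain ⟨hcomp, -, -, hmon⟩ := hΩ
  have hη : 0 < (s - t) / 2 / n := div_pos (by linarith) hn
  set p' : Fin n → ℝ := fun i => p i + (s - t) / 2 / n with hp'
  have hp'0 : ∀ i, 0 < p' i := fun i => by have := hp i; simp only [hp']; linarith
  have hp'Ω : p' ∉ Ω := fun h => hpΩ (hmon p' h p hp fun i => by simp only [hp']; linarith)
  have hex : ∀ x ∈ Ω, ∃ i, x i < p' i := by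
    intro x hx
    by_contra! hcon
    exact hp'Ω (hmon x hx p' (fun i => (hp'0 i).le) hcon)
  have hsum : ∑ i, p' i ≤ t + (s - t) / 2 := by
    have : ∑ i, p' i = ∑ i, p i + (s - t) / 2 := by
      simp only [hp']
      rw [Finset.sum_add_distrib]; simp; field_simp
    linarith
  obtain ⟨M, hM⟩ := hcomp.isBounded.exists_norm_le
  have hc3 := (hc.2.2 _ (sqrt_pi_pos hs)).2
  rw [pi_sqrt hs] at hc3
  rw [← hc3]
  apply hc.1
  refine (collapse p' hp'0 (M + 1) (show 0 < (s - t) / 2 by linarith)).embeds (open_box _) ?_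
    (X_open n Ω).uniqueDiffOn ?_
  · rintro z ⟨hz1, hz2⟩
    refine ⟨fun i h0 => ?_, fun i => ?_⟩
    · have := hz2 i
      rw [toricMoment_apply, h0, xm_zero] at this
      exact lt_irrefl _ this
    · have h1 := hM _ (interior_subset hz1)
      have h2 := (norm_le_pi_norm (toricMoment n z) i).trans h1
      rw [toricMoment_apply] at h2
      have := (le_abs_self _).trans h2
      linarith
  · rintro z ⟨hz1, hz2⟩ w hw
    have h1 := hw (hex _ (interior_subset hz1))
    have h2 : xm (w 0) < s := by linarith
    change Complex.normSq (w 0) < _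
    have h3 : Real.pi * Complex.normSq (w 0) < Real.pi * (Real.sqrt (s / Real.pi)) ^ 2 := by
      rw [pi_sqrt hs]; exact h2
    exact lt_of_mul_lt_mul_left h3 Real.pi_pos.le

theorem cubeP_eq {n : ℕ} {r : ℝ} (hr : 0 < r) : cubeP n r = Metric.closedBall 0 r := by
  ext z
  rw [mem_closedBall_zero_iff, pi_norm_le_iff_of_nonneg hr.le]
  have : ∀ i, toricMoment n z i ≤ Real.pi * r ^ 2 ↔ ‖z i‖ ≤ r := by
    intro i
    rw [toricMoment_apply, xm_eq_norm, mul_le_mul_iff_right₀ Real.pi_pos,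
      sq_le_sq₀ (norm_nonneg _) hr.le]
  constructor
  · rintro ⟨_, h⟩ i
    exact (this i).1 (h i)
  · intro h
    exact ⟨fun i => xm_nonneg _, fun i => (this i).2 (h i)⟩

theorem cube_lower {n : ℕ} {Ω : Set (Fin n → ℝ)} (hΩ : IsMonotoneDomain n Ω) {t : ℝ}
    (h : (fun _ => t) ∈ Ω)
    {c : Set (Fin n → ℂ) → ℝ≥0∞} (hc : IsCubeNormalizedCapacity n c) :
    ENNReal.ofReal t ≤ c (toricDomain n (intPos n Ω)) := by
  apply ofReal_le_of
  intro s hs hst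
  have hr := sqrt_pi_pos hs
  have hc3 := (hc.2.2 _ hr).1
  rw [pi_sqrt hs] at hc3
  rw [← hc3]
  apply hc.1
  have hP : ∀ z ∈ cubeP n (Real.sqrt (s / Real.pi)), ∀ i, xm (z i) ≤ s := by
    rintro z ⟨_, hz⟩ i
    have := hz i
    rw [pi_sqrt hs] at this
    exact this
  refine (traynor_prod n t (show 0 < t - s by linarith)).embeds (open_polydisc n t) ?_ ?_ ?_
  · intro z hz i
    have := hP z hz i
    linarith
  · rw [cubeP_eq hr]
    refine uniqueDiffOn_convex (convex_closedBall _ _) ⟨0, ?_⟩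
    exact Metric.ball_subset_interior_closedBall (Metric.mem_ball_self hr)
  · intro z hz w hw
    refine mem_X_of_open (O := {x | (∀ i, 0 < x i) ∧ ∀ i, x i < t}) ?_ ?_ (fun i => (hw i).1)
      ⟨fun i => (hw i).1, fun i => ?_⟩
    · simp only [Set.ofPred_and, Set.ofPred_forall]
      exact (isOpen_iInter_of_finite fun i =>
        isOpen_lt continuous_const (continuous_apply i)).inter
        (isOpen_iInter_of_finite fun i => isOpen_lt (continuous_apply i) continuous_const)
    · rintro x ⟨h1, h2⟩
      exact hΩ.2.2.2 _ h x (fun i => (h1 i).le) (fun i => (h2 i).le)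
    · have h1 := hP z hz i
      have h2 := (hw i).2
      simp only; linarith

theorem cube_upper {n : ℕ} {Ω : Set (Fin n → ℝ)} (hΩ : IsMonotoneDomain n Ω) {t : ℝ}
    (ht : 0 < t) (h : (fun _ => t) ∉ Ω)
    {c : Set (Fin n → ℂ) → ℝ≥0∞} (hc : IsCubeNormalizedCapacity n c) :
    c (toricDomain n (intPos n Ω)) ≤ ENNReal.ofReal t := by
  have hc3 := (hc.2.2 _ (sqrt_pi_pos ht)).2
  rw [pi_sqrt ht] at hc3
  rw [← hc3]
  apply hc.1
  refine (SE.id _).embeds (X_open n Ω) le_rfl (X_open n Ω).uniqueDiffOn ?_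
  rintro z ⟨hz1, hz2⟩ w rfl
  refine ⟨fun i => (hz2 i).le, ?_⟩
  rw [pi_sqrt ht]
  by_contra! hcon
  exact h (hΩ.2.2.2 _ (interior_subset hz1) _ (fun _ => ht.le) (fun i => (hcon i).le))

/-- For a monotone domain `Ω ⊂ ℝⁿ_{≥0}`, all ball-normalized capacities coincide on
`X_{int(Ω)}`, and likewise all cube-normalized capacities coincide on `X_{int(Ω)}`. -/
theorem normalized_capacities_agree_on_monotone
    (n : ℕ) [NeZero n] (Ω : Set (Fin n → ℝ)) (hΩ : IsMonotoneDomain n Ω) :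
    (∀ c₁ c₂ : Set (Fin n → ℂ) → ℝ≥0∞,
      IsNormalizedCapacity n c₁ → IsNormalizedCapacity n c₂ →
      c₁ (toricDomain n (intPos n Ω)) = c₂ (toricDomain n (intPos n Ω))) ∧
    (∀ c₁ c₂ : Set (Fin n → ℂ) → ℝ≥0∞,
      IsCubeNormalizedCapacity n c₁ → IsCubeNormalizedCapacity n c₂ →
      c₁ (toricDomain n (intPos n Ω)) = c₂ (toricDomain n (intPos n Ω))) := by
  constructor
  · intro c₁ c₂ h1 h2
    apply eq_of_dichotomy
    intro t ht
    by_cases h : ∀ x : Fin n → ℝ, (∀ i, 0 ≤ x i) → ∑ i, x i ≤ t → x ∈ Ω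
    · exact Or.inl ⟨ball_lower h h1, ball_lower h h2⟩
    · push Not at h
      obtain ⟨p, hp, hpt, hpΩ⟩ := h
      exact Or.inr ⟨ball_upper hΩ ht hp hpt hpΩ h1, ball_upper hΩ ht hp hpt hpΩ h2⟩
  · intro c₁ c₂ h1 h2
    apply eq_of_dichotomy
    intro t ht
    by_cases h : (fun _ => t) ∈ Ω
    · exact Or.inl ⟨cube_lower hΩ h h1, cube_lower hΩ h h2⟩
    · exact Or.inr ⟨cube_upper hΩ ht h h1, cube_upper hΩ ht h h2⟩
end
end

section
/- Fix p ∈ [1,∞] and let q be its Hölder conjugate (1/p + 1/q = 1). Let B_q(1) ⊂ ℝ² be the closed unit ball of the ℓ^q norm and Q := B_q(1) + (1,1) ⊂ ℝ²_{≥0} its translate. Then every normalized symplectic capacity c on subsets of ℝ⁴ satisfies c(X_{int(Q)}) = 2. (X_{int(Q)} is symplectomorphic to 𝕋² × int(B_q(1)), the open unit codisc bundle of the flat Finsler metric on 𝕋² induced by the ℓ^p norm.) -/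
open Set
open scoped Pointwise ENNReal

noncomputable section

/-- The standard symplectic form `ω₀` on `ℝ⁴ ≅ ℂ²`:
`ω₀(u,v) = Σⱼ (u_{xⱼ} v_{yⱼ} - u_{yⱼ} v_{xⱼ}) = Σⱼ Im(conj(uⱼ) · vⱼ)`. -/
def stdSymp4 (u v : ℂ × ℂ) : ℝ :=
  ((starRingEnd ℂ) u.1 * v.1).im + ((starRingEnd ℂ) u.2 * v.2).im

/-- `U` symplectically embeds into `V` inside `ℝ⁴ ≅ ℂ²`: there is a smooth injective
map on `U` with image in `V` whose derivative preserves `ω₀`. -/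
def SymplecticEmbeds4 (U V : Set (ℂ × ℂ)) : Prop :=
  ∃ f : ℂ × ℂ → ℂ × ℂ,
    ContDiffOn ℝ (⊤ : ℕ∞) f U ∧ Set.InjOn f U ∧ Set.MapsTo f U V ∧
    ∀ x ∈ U, ∀ u v : ℂ × ℂ,
      stdSymp4 (fderivWithin ℝ f U x u) (fderivWithin ℝ f U x v) = stdSymp4 u v

/-- The moment map `μ : ℂ² → ℝ²`, `μ(z) = π(|z₁|², |z₂|²)`. -/
def mu4 (z : ℂ × ℂ) : ℝ × ℝ :=
  (Real.pi * Complex.normSq z.1, Real.pi * Complex.normSq z.2)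

/-- The open Euclidean ball `B⁴(r) ⊆ ℂ²`. -/
def ball4 (r : ℝ) : Set (ℂ × ℂ) :=
  {z | Complex.normSq z.1 + Complex.normSq z.2 < r ^ 2}

/-- The open symplectic cylinder `Z⁴(r) = {z ∈ ℂ² : |z₁| < r}`. -/
def cyl4 (r : ℝ) : Set (ℂ × ℂ) :=
  {z | Complex.normSq z.1 < r ^ 2}

/-- A normalized symplectic capacity on subsets of `ℝ⁴ ≅ ℂ²`: monotone under
symplectic embeddings, conformal, and normalized on balls and cylinders. -/
def IsNormalizedCapacity4 (c : Set (ℂ × ℂ) → ℝ≥0∞) : Prop :=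
  (∀ U V : Set (ℂ × ℂ), SymplecticEmbeds4 U V → c U ≤ c V) ∧
  (∀ lam : ℝ, 0 < lam → ∀ U : Set (ℂ × ℂ),
    c (lam • U) = ENNReal.ofReal (lam ^ 2) * c U) ∧
  (∀ r : ℝ, 0 < r →
    c (ball4 r) = ENNReal.ofReal (Real.pi * r ^ 2) ∧
    c (cyl4 r) = ENNReal.ofReal (Real.pi * r ^ 2))

/-- The closed unit ball of the `ℓ^q` norm on `ℝ²`, for `q ∈ [1,∞]` (an extended real). -/
def lqUnitBall (q : ℝ≥0∞) : Set (ℝ × ℝ) :=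
  if q = ⊤ then {v | max |v.1| |v.2| ≤ 1}
  else {v | (|v.1| ^ q.toReal + |v.2| ^ q.toReal) ^ (1 / q.toReal) ≤ 1}

/-- Rescaled first coordinate. -/
def fX (d : ℝ) (z : ℂ) : ℝ :=
  Real.sqrt Real.pi / 2 * (z.re * Real.sqrt (2 * d + Real.pi / 4 * (z.re ^ 2 + z.im ^ 2)))

/-- Rescaled second coordinate. -/
def fY (d : ℝ) (z : ℂ) : ℝ :=
  Real.sqrt Real.pi / 2 * (z.im * Real.sqrt (2 * d + Real.pi / 4 * (z.re ^ 2 + z.im ^ 2)))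

/-- Position coordinate. -/
def qq (d x y : ℝ) : ℝ := 2 / Real.pi * Real.arctan (x * (Real.sqrt (d ^ 2 + y ^ 2))⁻¹)

/-- Momentum coordinate. -/
def pp (d x y : ℝ) : ℝ :=
  y * Real.sqrt (d ^ 2 + x ^ 2 + y ^ 2) * (Real.sqrt (d ^ 2 + y ^ 2))⁻¹

/-- Polar coordinates. -/
def ww (A t : ℝ) : ℂ :=
  Complex.equivRealProdCLM.symm
    (Real.sqrt (A / Real.pi) * Real.cos (2 * Real.pi * t),
      Real.sqrt (A / Real.pi) * Real.sin (2 * Real.pi * t))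

lemma W_pos {d : ℝ} (hd : 0 < d) (z : ℂ) :
    0 < 2 * d + Real.pi / 4 * (z.re ^ 2 + z.im ^ 2) := by
  have := Real.pi_pos
  positivity

lemma c_sq : (Real.sqrt Real.pi / 2) ^ 2 = Real.pi / 4 := by
  rw [div_pow, Real.sq_sqrt Real.pi_pos.le]; norm_num

lemma S_eq {d : ℝ} (hd : 0 < d) (z : ℂ) :
    Real.sqrt (d ^ 2 + fX d z ^ 2 + fY d z ^ 2)
      = d + Real.pi / 4 * (z.re ^ 2 + z.im ^ 2) := by
  have hp := Real.pi_pos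
  rw [Real.sqrt_eq_iff_eq_sq (by positivity) (by positivity)]
  unfold fX fY
  simp only [mul_pow, c_sq, Real.sq_sqrt (W_pos hd z).le]
  ring

lemma stage1 {d : ℝ} (hd : 0 < d) (z : ℂ) :
    ∃ DX DY : ℂ →L[ℝ] ℝ, HasFDerivAt (fX d) DX z ∧ HasFDerivAt (fY d) DY z ∧
      ∀ u v, DX u * DY v - DX v * DY u
        = Real.pi / 2 * Real.sqrt (d ^ 2 + fX d z ^ 2 + fY d z ^ 2) *
          (u.re * v.im - u.im * v.re) := by
  have hre : HasFDerivAt (fun z : ℂ => z.re) Complex.reCLM z := Complex.reCLM.hasFDerivAt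
  have him : HasFDerivAt (fun z : ℂ => z.im) Complex.imCLM z := Complex.imCLM.hasFDerivAt
  have hW := ((((hre.pow 2).add (him.pow 2)).const_mul (Real.pi / 4)).const_add (2 * d)).sqrt
    (W_pos hd z).ne'
  have hX := (hre.mul hW).const_mul (Real.sqrt Real.pi / 2)
  have hY := (him.mul hW).const_mul (Real.sqrt Real.pi / 2)
  refine ⟨_, _, hX, hY, ?_⟩
  intro u v
  rw [S_eq hd]
  have h1 := W_pos hd z
  have h2 := Real.sqrt_pos.2 h1
  have h3 := Real.sq_sqrt h1.le
  have h4 := c_sq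
  simp
  set W := Real.sqrt (2 * d + Real.pi / 4 * (z.re ^ 2 + z.im ^ 2)) with hWdef
  set c := Real.sqrt Real.pi / 2
  have h5 : d = (W ^ 2 - Real.pi / 4 * (z.re ^ 2 + z.im ^ 2)) / 2 := by rw [h3]; ring
  rw [h5]
  field_simp
  clear_value W
  clear h5 h3 hWdef
  have h6 : Real.pi = 4 * c ^ 2 := by rw [h4]; ring
  clear_value c
  rw [h6]
  ring

lemma stage2 {E : Type*} [NormedAddCommGroup E] [NormedSpace ℝ E] {d : ℝ} (hd : 0 < d)
    {X Y : E → ℝ} {DX DY : E →L[ℝ] ℝ} {z : E} (hX : HasFDerivAt X DX z)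
    (hY : HasFDerivAt Y DY z) :
    ∃ Dq Dp : E →L[ℝ] ℝ, HasFDerivAt (fun z => qq d (X z) (Y z)) Dq z ∧
      HasFDerivAt (fun z => pp d (X z) (Y z)) Dp z ∧
      ∀ u v, Dq u * Dp v - Dq v * Dp u
        = 2 / Real.pi / Real.sqrt (d ^ 2 + X z ^ 2 + Y z ^ 2) *
          (DX u * DY v - DX v * DY u) := by
  have ha0 : 0 < d ^ 2 + Y z ^ 2 := by positivity
  have hS0 : 0 < d ^ 2 + X z ^ 2 + Y z ^ 2 := by positivity
  have ha1 := Real.sqrt_pos.2 ha0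
  have hS1 := Real.sqrt_pos.2 hS0
  have ha := ((hY.pow 2).const_add (d ^ 2)).sqrt ha0.ne'
  have hai := (hasDerivAt_inv ha1.ne').comp_hasFDerivAt z ha
  have hS := (((hX.pow 2).const_add (d ^ 2)).add (hY.pow 2)).sqrt hS0.ne'
  have hq := ((hX.mul hai).arctan).const_mul (2 / Real.pi)
  have hp := (hY.mul hS).mul hai
  refine ⟨_, _, hq, hp, ?_⟩
  intro u v
  have ha2 := Real.sq_sqrt ha0.le
  have hS2 := Real.sq_sqrt hS0.le
  simp
  have hpi := Real.pi_pos
  set a := Real.sqrt (d ^ 2 + Y z ^ 2)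
  set S := Real.sqrt (d ^ 2 + X z ^ 2 + Y z ^ 2)
  clear_value a S
  have hS3 : S ^ 2 = a ^ 2 + X z ^ 2 := by rw [hS2, ha2]; ring
  have hS4 : 1 + (X z * a⁻¹) ^ 2 = S ^ 2 / a ^ 2 := by
    rw [hS3]; field_simp
  rw [hS4]
  generalize X z = x at *
  generalize Y z = y at *
  field_simp
  linear_combination (-(DX u * DY v - DY u * DX v) * a ^ 2 * y ^ 2) * hS3

lemma stage3 {E : Type*} [NormedAddCommGroup E] [NormedSpace ℝ E]
    {A t : E → ℝ} {DA Dt : E →L[ℝ] ℝ} {z : E} (hA : HasFDerivAt A DA z)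
    (ht : HasFDerivAt t Dt z) (hpos : 0 < A z) :
    ∃ Dw : E →L[ℝ] ℂ, HasFDerivAt (fun z => ww (A z) (t z)) Dw z ∧
      ∀ u v, ((starRingEnd ℂ) (Dw u) * Dw v).im = DA u * Dt v - DA v * Dt u := by
  have hpi := Real.pi_pos
  have h0 : 0 < A z / Real.pi := by positivity
  have h1 := Real.sqrt_pos.2 h0
  have hs := (hA.mul_const (Real.pi)⁻¹).sqrt (by rw [← div_eq_mul_inv]; exact h0.ne')
  have ht' := ht.const_mul (2 * Real.pi)
  have hw := Complex.equivRealProdCLM.symm.toContinuousLinearMap.hasFDerivAt.comp z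
    ((hs.mul ht'.cos).prodMk (hs.mul ht'.sin))
  refine ⟨_, hw, ?_⟩
  intro u v
  simp
  have h3 := Real.sin_sq_add_cos_sq (2 * Real.pi * t z)
  rw [← div_eq_mul_inv]
  set s := Real.sqrt (A z / Real.pi)
  generalize Real.cos (2 * Real.pi * t z) = C at *
  generalize Real.sin (2 * Real.pi * t z) = N at *
  have hC : C ^ 2 = 1 - N ^ 2 := by linarith
  clear_value s
  field_simp
  linear_combination (s ^ 2 * 4 * Real.pi ^ 2 * (DA u * Dt v - Dt u * DA v)) * h3

lemma qq_lt (d x y : ℝ) : |qq d x y| < 1 := by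
  have hpi := Real.pi_pos
  unfold qq
  rw [abs_mul, abs_of_pos (by positivity : 0 < 2 / Real.pi)]
  have h : |Real.arctan (x * (Real.sqrt (d ^ 2 + y ^ 2))⁻¹)| < Real.pi / 2 :=
    abs_lt.2 ⟨Real.neg_pi_div_two_lt_arctan _, Real.arctan_lt_pi_div_two _⟩
  calc _ < 2 / Real.pi * (Real.pi / 2) := by gcongr
    _ = 1 := by field_simp

lemma pp_lt {d : ℝ} (hd : 0 < d) (x y : ℝ) :
    |pp d x y| < Real.sqrt (d ^ 2 + x ^ 2 + y ^ 2) := by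
  unfold pp
  have ha : 0 < Real.sqrt (d ^ 2 + y ^ 2) := Real.sqrt_pos.2 (by positivity)
  have hS : 0 < Real.sqrt (d ^ 2 + x ^ 2 + y ^ 2) := Real.sqrt_pos.2 (by positivity)
  have hy : |y| < Real.sqrt (d ^ 2 + y ^ 2) := by
    apply Real.lt_sqrt_of_sq_lt
    rw [sq_abs]; nlinarith
  rw [← div_eq_mul_inv, abs_div, abs_of_pos ha, div_lt_iff₀ ha, abs_mul, abs_of_pos hS, mul_comm]
  gcongr

lemma qp_inj {d : ℝ} (hd : 0 < d) {x y x' y' : ℝ} (hq : qq d x y = qq d x' y')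
    (hp : pp d x y = pp d x' y') : x = x' ∧ y = y' := by
  have hpi := Real.pi_pos
  have key : ∀ x y : ℝ, pp d x y
      = y * Real.sqrt (1 + (x * (Real.sqrt (d ^ 2 + y ^ 2))⁻¹) ^ 2) := by
    intro x y
    unfold pp
    have ha : 0 < d ^ 2 + y ^ 2 := by positivity
    have ha' := Real.sqrt_pos.2 ha
    rw [mul_assoc, ← div_eq_mul_inv, ← Real.sqrt_div (by positivity), mul_pow, inv_pow,
      Real.sq_sqrt ha.le]
    congr 2
    field_simp
    ring
  unfold qq at hq
  have h1 := Real.arctan_injective (mul_left_cancel₀ (by positivity) hq)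
  rw [key, key, h1] at hp
  have hy := mul_right_cancel₀ (Real.sqrt_pos.2 (by positivity)).ne' hp
  subst hy
  refine ⟨mul_right_cancel₀ (inv_pos.2 (Real.sqrt_pos.2 (by positivity))).ne' h1, rfl⟩

lemma XY_inj {d : ℝ} (hd : 0 < d) {z z' : ℂ} (hX : fX d z = fX d z')
    (hY : fY d z = fY d z') : z = z' := by
  have hpi := Real.pi_pos
  have hS := S_eq hd z
  rw [hX, hY, S_eq hd z'] at hS
  have hW : 2 * d + Real.pi / 4 * (z'.re ^ 2 + z'.im ^ 2)
    = 2 * d + Real.pi / 4 * (z.re ^ 2 + z.im ^ 2) := by linarith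
  unfold fX at hX
  unfold fY at hY
  rw [hW] at hX hY
  have h := (Real.sqrt_pos.2 (W_pos hd z)).ne'
  have hc : Real.sqrt Real.pi / 2 ≠ 0 := by positivity
  exact Complex.ext (mul_right_cancel₀ h (mul_left_cancel₀ hc hX))
    (mul_right_cancel₀ h (mul_left_cancel₀ hc hY))

lemma ww_normSq {A : ℝ} (hA : 0 < A) (t : ℝ) : Real.pi * Complex.normSq (ww A t) = A := by
  have hpi := Real.pi_pos
  have h := Real.sq_sqrt (by positivity : 0 ≤ A / Real.pi)
  have h3 := Real.sin_sq_add_cos_sq (2 * Real.pi * t)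
  have : Complex.normSq (ww A t) = A / Real.pi := by
    simp [ww, Complex.normSq_apply]
    linear_combination (Real.sqrt (A / Real.pi)) ^ 2 * h3 + h
  rw [this]
  field_simp

lemma ww_inj {A t A' t' : ℝ} (hA : 0 < A) (hA' : 0 < A') (ht : |t| < 1 / 2) (ht' : |t'| < 1 / 2)
    (h : ww A t = ww A' t') : A = A' ∧ t = t' := by
  have hpi := Real.pi_pos
  have hAA : A = A' := by rw [← ww_normSq hA t, h, ww_normSq hA' t']
  subst hAA
  refine ⟨rfl, ?_⟩
  unfold ww at h
  have h2 := Complex.equivRealProdCLM.symm.injective h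
  have hs : Real.sqrt (A / Real.pi) ≠ 0 := (Real.sqrt_pos.2 (by positivity)).ne'
  have hc := mul_left_cancel₀ hs (congrArg Prod.fst h2)
  have hn := mul_left_cancel₀ hs (congrArg Prod.snd h2)
  have h1 : Real.cos (2 * Real.pi * t - 2 * Real.pi * t') = 1 := by
    rw [Real.cos_sub, hc, hn]
    have := Real.sin_sq_add_cos_sq (2 * Real.pi * t')
    linarith
  rw [abs_lt] at ht ht'
  have := (Real.cos_eq_one_iff_of_lt_of_lt (by nlinarith) (by nlinarith)).1 h1
  have h4 : 2 * Real.pi * (t - t') = 0 := by linarith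
  have h5 : t - t' = 0 := by
    rcases mul_eq_zero.1 h4 with h | h
    · exact absurd h (by positivity)
    · exact h
  linarith

/-- Position coordinate on the plane. -/
def Qf (d : ℝ) (z : ℂ) : ℝ := qq d (fX d z) (fY d z)

/-- Momentum coordinate on the plane. -/
def Pf (d : ℝ) (z : ℂ) : ℝ := pp d (fX d z) (fY d z)

lemma Pf_lt {d : ℝ} (hd : 0 < d) (z : ℂ) :
    |Pf d z| < d + Real.pi / 4 * Complex.normSq z := by
  have := pp_lt hd (fX d z) (fY d z)
  rw [S_eq hd] at this
  rw [Complex.normSq_apply, ← sq, ← sq]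
  exact this

lemma QP_inj {d : ℝ} (hd : 0 < d) {z z' : ℂ} (hq : Qf d z = Qf d z')
    (hp : Pf d z = Pf d z') : z = z' := by
  obtain ⟨h1, h2⟩ := qp_inj hd hq hp
  exact XY_inj hd h1 h2

lemma QP_deriv {d : ℝ} (hd : 0 < d) (z : ℂ) :
    ∃ Dq Dp : ℂ →L[ℝ] ℝ, HasFDerivAt (Qf d) Dq z ∧ HasFDerivAt (Pf d) Dp z ∧
      ∀ u v, Dq u * Dp v - Dq v * Dp u = ((starRingEnd ℂ) u * v).im := by
  obtain ⟨DX, DY, hX, hY, h1⟩ := stage1 hd z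
  obtain ⟨Dq, Dp, hq, hp, h2⟩ := stage2 hd hX hY
  refine ⟨Dq, Dp, hq, hp, ?_⟩
  intro u v
  have hpi := Real.pi_pos
  have hS : 0 < Real.sqrt (d ^ 2 + fX d z ^ 2 + fY d z ^ 2) := Real.sqrt_pos.2 (by positivity)
  rw [h2, h1]
  simp only [Complex.mul_im, Complex.conj_re, Complex.conj_im]
  field_simp
  ring

lemma contDiff_re : ContDiff ℝ (⊤ : ℕ∞) (fun z : ℂ => z.re) := Complex.reCLM.contDiff
lemma contDiff_im : ContDiff ℝ (⊤ : ℕ∞) (fun z : ℂ => z.im) := Complex.imCLM.contDiff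

lemma contDiff_W {d : ℝ} (hd : 0 < d) : ContDiff ℝ (⊤ : ℕ∞)
    (fun z : ℂ => Real.sqrt (2 * d + Real.pi / 4 * (z.re ^ 2 + z.im ^ 2))) :=
  ContDiff.sqrt (contDiff_const.add (contDiff_const.mul
    ((contDiff_re.pow 2).add (contDiff_im.pow 2)))) (fun z => (W_pos hd z).ne')

lemma contDiff_X {d : ℝ} (hd : 0 < d) : ContDiff ℝ (⊤ : ℕ∞) (fX d) :=
  contDiff_const.mul (contDiff_re.mul (contDiff_W hd))

lemma contDiff_Y {d : ℝ} (hd : 0 < d) : ContDiff ℝ (⊤ : ℕ∞) (fY d) :=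
  contDiff_const.mul (contDiff_im.mul (contDiff_W hd))

lemma contDiff_a {d : ℝ} (hd : 0 < d) : ContDiff ℝ (⊤ : ℕ∞)
    (fun z => (Real.sqrt (d ^ 2 + fY d z ^ 2))⁻¹) :=
  ContDiff.inv (ContDiff.sqrt (contDiff_const.add ((contDiff_Y hd).pow 2))
    (fun z => by positivity)) (fun z => (Real.sqrt_pos.2 (by positivity)).ne')

lemma contDiff_Q {d : ℝ} (hd : 0 < d) : ContDiff ℝ (⊤ : ℕ∞) (Qf d) :=
  contDiff_const.mul (((contDiff_X hd).mul (contDiff_a hd)).arctan)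

lemma contDiff_P {d : ℝ} (hd : 0 < d) : ContDiff ℝ (⊤ : ℕ∞) (Pf d) :=
  ((contDiff_Y hd).mul (ContDiff.sqrt
    ((contDiff_const.add ((contDiff_X hd).pow 2)).add ((contDiff_Y hd).pow 2))
    (fun z => by positivity))).mul (contDiff_a hd)

lemma contDiff_ww {E : Type*} [NormedAddCommGroup E] [NormedSpace ℝ E] {A t : E → ℝ}
    (hA : ContDiff ℝ (⊤ : ℕ∞) A) (ht : ContDiff ℝ (⊤ : ℕ∞) t) (hpos : ∀ z, 0 < A z) :
    ContDiff ℝ (⊤ : ℕ∞) (fun z => ww (A z) (t z)) := by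
  have hs : ContDiff ℝ (⊤ : ℕ∞) (fun z => Real.sqrt (A z / Real.pi)) :=
    ContDiff.sqrt (hA.div_const _) (fun z => (div_pos (hpos z) Real.pi_pos).ne')
  have ht' : ContDiff ℝ (⊤ : ℕ∞) (fun z => 2 * Real.pi * t z) := contDiff_const.mul ht
  exact Complex.equivRealProdCLM.symm.contDiff.comp
    ((hs.mul ht'.cos).prodMk (hs.mul ht'.sin))

/-- First toric coordinate. -/
def A1 (d : ℝ) (z : ℂ × ℂ) : ℝ := 1 + (Qf d z.1 + Qf d z.2) / 2
/-- Second toric coordinate. -/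
def A2 (d : ℝ) (z : ℂ × ℂ) : ℝ := 1 + (Qf d z.1 - Qf d z.2) / 2
/-- First angle. -/
def t1 (d : ℝ) (z : ℂ × ℂ) : ℝ := Pf d z.1 + Pf d z.2
/-- Second angle. -/
def t2 (d : ℝ) (z : ℂ × ℂ) : ℝ := Pf d z.1 - Pf d z.2

lemma A_bounds (d : ℝ) (z : ℂ × ℂ) :
    0 < A1 d z ∧ 0 < A2 d z ∧ |A1 d z - 1| + |A2 d z - 1| < 1 := by
  have h1 := abs_lt.1 (qq_lt d (fX d z.1) (fY d z.1))
  have h2 := abs_lt.1 (qq_lt d (fX d z.2) (fY d z.2))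
  change -1 < Qf d z.1 ∧ Qf d z.1 < 1 at h1
  change -1 < Qf d z.2 ∧ Qf d z.2 < 1 at h2
  unfold A1 A2
  refine ⟨by linarith, by linarith, ?_⟩
  rcases abs_cases (1 + (Qf d z.1 + Qf d z.2) / 2 - 1) with h | h <;>
  rcases abs_cases (1 + (Qf d z.1 - Qf d z.2) / 2 - 1) with h' | h' <;> linarith

/-- The embedding. -/
def FF (d : ℝ) (z : ℂ × ℂ) : ℂ × ℂ := (ww (A1 d z) (t1 d z), ww (A2 d z) (t2 d z))

lemma isOpen_ball4 (r : ℝ) : IsOpen (ball4 r) :=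
  isOpen_lt ((Complex.continuous_normSq.comp continuous_fst).add
    (Complex.continuous_normSq.comp continuous_snd)) continuous_const

lemma ball_embeds {d r : ℝ} (hd : 0 < d) (hr : Real.pi * r ^ 2 = 2 - 8 * d) (V : Set (ℂ × ℂ))
    (hV : mu4 ⁻¹' {x | |x.1 - 1| + |x.2 - 1| < 1 ∧ 0 < x.1 ∧ 0 < x.2} ⊆ V) :
    SymplecticEmbeds4 (ball4 r) V := by
  have hpi := Real.pi_pos
  have tb : ∀ z ∈ ball4 r, |t1 d z| < 1 / 2 ∧ |t2 d z| < 1 / 2 := by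
    intro z hz
    have hz' : Complex.normSq z.1 + Complex.normSq z.2 < r ^ 2 := hz
    have h1 := Pf_lt hd z.1
    have h2 := Pf_lt hd z.2
    have h3 : |Pf d z.1| + |Pf d z.2| < 1 / 2 := by nlinarith
    exact ⟨(abs_add_le _ _).trans_lt h3, (abs_sub _ _).trans_lt h3⟩
  refine ⟨FF d, ?_, ?_, ?_, ?_⟩
  · apply ContDiff.contDiffOn
    have q1 := (contDiff_Q hd).comp (contDiff_fst (E := ℂ) (F := ℂ))
    have q2 := (contDiff_Q hd).comp (contDiff_snd (E := ℂ) (F := ℂ))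
    have p1 := (contDiff_P hd).comp (contDiff_fst (E := ℂ) (F := ℂ))
    have p2 := (contDiff_P hd).comp (contDiff_snd (E := ℂ) (F := ℂ))
    exact (contDiff_ww (contDiff_const.add ((q1.add q2).div_const 2)) (p1.add p2)
      (fun z => (A_bounds d z).1)).prodMk
      (contDiff_ww (contDiff_const.add ((q1.sub q2).div_const 2)) (p1.sub p2)
      (fun z => (A_bounds d z).2.1))
  · intro z hz z' hz' h
    obtain ⟨ha, ht⟩ := ww_inj (A_bounds d z).1 (A_bounds d z').1 (tb z hz).1 (tb z' hz').1
      (congrArg Prod.fst h)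
    obtain ⟨ha', ht'⟩ := ww_inj (A_bounds d z).2.1 (A_bounds d z').2.1 (tb z hz).2 (tb z' hz').2
      (congrArg Prod.snd h)
    unfold A1 at ha
    unfold A2 at ha'
    unfold t1 at ht
    unfold t2 at ht'
    exact Prod.ext (QP_inj hd (by linarith) (by linarith)) (QP_inj hd (by linarith) (by linarith))
  · intro z hz
    apply hV
    have h := A_bounds d z
    simp only [mem_preimage, mem_ofPred_eq, mu4, FF]
    rw [ww_normSq h.1, ww_normSq h.2.1]
    exact ⟨h.2.2, h.1, h.2.1⟩
  · intro z hz u v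
    obtain ⟨Dq1, Dp1, hq1, hp1, h1⟩ := QP_deriv hd z.1
    obtain ⟨Dq2, Dp2, hq2, hp2, h2⟩ := QP_deriv hd z.2
    have hq1' := hq1.comp z hasFDerivAt_fst
    have hq2' := hq2.comp z hasFDerivAt_snd
    have hp1' := hp1.comp z hasFDerivAt_fst
    have hp2' := hp2.comp z hasFDerivAt_snd
    obtain ⟨Dw1, hw1, k1⟩ := stage3 (((hq1'.add hq2').mul_const (2 : ℝ)⁻¹).const_add 1)
      (hp1'.add hp2') (A_bounds d z).1
    obtain ⟨Dw2, hw2, k2⟩ := stage3 (((hq1'.sub hq2').mul_const (2 : ℝ)⁻¹).const_add 1)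
      (hp1'.sub hp2') (A_bounds d z).2.1
    have hF : HasFDerivAt (FF d) (Dw1.prod Dw2) z := hw1.prodMk hw2
    rw [fderivWithin_of_isOpen (isOpen_ball4 r) hz, hF.fderiv]
    unfold stdSymp4
    rw [← h1 u.1, ← h2 u.2]
    simp only [ContinuousLinearMap.prod_apply]
    rw [k1, k2]
    simp
    ring

lemma sub_embeds {U V : Set (ℂ × ℂ)} (hU : IsOpen U) (h : U ⊆ V) : SymplecticEmbeds4 U V := by
  refine ⟨id, contDiff_id.contDiffOn, injOn_id _, fun z hz => h hz, ?_⟩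
  intro x hx u v
  rw [fderivWithin_of_isOpen hU hx]
  simp

lemma diamond_sub {q : ℝ≥0∞} (hq : 1 ≤ q) {v : ℝ × ℝ} (hv : |v.1| + |v.2| ≤ 1) :
    v ∈ lqUnitBall q := by
  have h1 := abs_nonneg v.1
  have h2 := abs_nonneg v.2
  unfold lqUnitBall
  split_ifs with h
  · change max |v.1| |v.2| ≤ 1
    exact max_le (by linarith) (by linarith)
  · have hq' : 1 ≤ q.toReal := by
      simpa using ENNReal.toReal_mono h hq
    have a1 := Real.rpow_le_rpow_of_exponent_ge' h1 (by linarith) zero_le_one hq'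
    have a2 := Real.rpow_le_rpow_of_exponent_ge' h2 (by linarith) zero_le_one hq'
    rw [Real.rpow_one] at a1 a2
    exact Real.rpow_le_one (by positivity) (by linarith) (by positivity)

lemma ball_fst_le {q : ℝ≥0∞} (hq : 1 ≤ q) {v : ℝ × ℝ} (hv : v ∈ lqUnitBall q) :
    v.1 ≤ 1 := by
  have h1 := abs_nonneg v.1
  have h2 := abs_nonneg v.2
  unfold lqUnitBall at hv
  split_ifs at hv with h
  · exact (le_abs_self _).trans ((le_max_left _ _).trans hv)
  · have hq' : 1 ≤ q.toReal := by
      simpa using ENNReal.toReal_mono h hq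
    have hv' : (|v.1| ^ q.toReal + |v.2| ^ q.toReal) ^ (1 / q.toReal) ≤ 1 := hv
    refine (le_abs_self _).trans (le_trans ?_ hv')
    calc |v.1| = (|v.1| ^ q.toReal) ^ (1 / q.toReal) := by
          rw [← Real.rpow_mul h1, mul_one_div_cancel (by linarith), Real.rpow_one]
      _ ≤ _ := Real.rpow_le_rpow (by positivity)
          (le_add_of_nonneg_right (by positivity)) (by positivity)

lemma continuous_mu4 : Continuous mu4 :=
  (continuous_const.mul (Complex.continuous_normSq.comp continuous_fst)).prodMk
    (continuous_const.mul (Complex.continuous_normSq.comp continuous_snd))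

/-- For `p ∈ [1,∞]` with Hölder conjugate `q` and `Q := B_q(1) + (1,1)`, every
normalized symplectic capacity `c` on subsets of `ℝ⁴` satisfies `c(X_{int(Q)}) = 2`. -/
theorem capacity_of_lp_codisc_bundle
    (p q : ℝ≥0∞) (hp : 1 ≤ p) (hpq : 1 / p + 1 / q = 1)
    (c : Set (ℂ × ℂ) → ℝ≥0∞) (hc : IsNormalizedCapacity4 c) :
    c (mu4 ⁻¹'
        (interior ((fun v : ℝ × ℝ => v + (1, 1)) '' lqUnitBall q) ∩
          {x : ℝ × ℝ | 0 < x.1 ∧ 0 < x.2})) = 2 := by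
  obtain ⟨hmono, -, hnorm⟩ := hc
  have hpi := Real.pi_pos
  have hq : 1 ≤ q := by
    have h : 1 / q ≤ 1 := by 
      calc 1 / q ≤ 1 / p + 1 / q := le_add_self
        _ = 1 := hpq
    rw [one_div] at h
    exact ENNReal.inv_le_one.1 h
  apply le_antisymm
  · have hr : 0 < Real.sqrt (2 / Real.pi) := Real.sqrt_pos.2 (by positivity)
    have hr2 : Real.sqrt (2 / Real.pi) ^ 2 = 2 / Real.pi := Real.sq_sqrt (by positivity)
    have h2 : Real.pi * Real.sqrt (2 / Real.pi) ^ 2 = 2 := by rw [hr2]; field_simp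
    have h3 := (hnorm _ hr).2
    rw [h2] at h3
    have h4 : ENNReal.ofReal 2 = 2 := by simp
    rw [← h4, ← h3]
    apply hmono
    apply sub_embeds
    · exact (isOpen_interior.inter ((isOpen_lt continuous_const continuous_fst).inter
        (isOpen_lt continuous_const continuous_snd))).preimage continuous_mu4
    · rintro z ⟨hz, -⟩
      have hsub : ((fun v : ℝ × ℝ => v + (1, 1)) '' lqUnitBall q) ⊆ Iic (2 : ℝ) ×ˢ univ := by
        rintro _ ⟨v, hv, rfl⟩
        have := ball_fst_le hq hv
        simp
        linarith
      have hz2 := interior_mono hsub hz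
      rw [interior_prod_eq, interior_Iic] at hz2
      have hz3 : Real.pi * Complex.normSq z.1 < 2 := hz2.1
      change Complex.normSq z.1 < Real.sqrt (2 / Real.pi) ^ 2
      rw [hr2, lt_div_iff₀ hpi]
      linarith
  · have key : ∀ d : ℝ, 0 < d → d < 1 / 4 → ENNReal.ofReal (2 - 8 * d) ≤ c (mu4 ⁻¹'
        (interior ((fun v : ℝ × ℝ => v + (1, 1)) '' lqUnitBall q) ∩
          {x : ℝ × ℝ | 0 < x.1 ∧ 0 < x.2})) := by
      intro d hd hd'
      have h0 : 0 < (2 - 8 * d) / Real.pi := div_pos (by linarith) hpi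
      have hr : 0 < Real.sqrt ((2 - 8 * d) / Real.pi) := Real.sqrt_pos.2 h0
      have h2 : Real.pi * Real.sqrt ((2 - 8 * d) / Real.pi) ^ 2 = 2 - 8 * d := by
        rw [Real.sq_sqrt h0.le]; field_simp
      rw [← h2, ← (hnorm _ hr).1]
      apply hmono
      apply ball_embeds hd h2
      apply preimage_mono
      rintro x ⟨hx, hx'⟩
      refine ⟨?_, hx'⟩
      have ho : IsOpen {x : ℝ × ℝ | |x.1 - 1| + |x.2 - 1| < 1} :=
        isOpen_lt (by fun_prop) continuous_const
      refine interior_maximal ?_ ho hx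
      intro y hy
      refine ⟨(y.1 - 1, y.2 - 1), diamond_sub hq (le_of_lt hy), ?_⟩
      simp
    have hlim : Filter.Tendsto (fun d : ℝ => ENNReal.ofReal (2 - 8 * d)) (nhdsWithin 0 (Ioi 0))
        (nhds 2) := by
      have : Continuous (fun d : ℝ => ENNReal.ofReal (2 - 8 * d)) :=
        ENNReal.continuous_ofReal.comp (by fun_prop)
      have h := this.tendsto 0
      simp at h
      exact h.mono_left nhdsWithin_le_nhds
    refine le_of_tendsto hlim ?_
    filter_upwards [Ioo_mem_nhdsGT (by norm_num : (0 : ℝ) < 1 / 4)] with d hd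
    exact key d hd.1 hd.2
end
end
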